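/- arXiv:1408.0846 — 5 statements merged into one kernel-verified Lean document; each statement's English description precedes it below -/
import Mathlib

section
/- Let k ≥ 4, let G be a k-Ore graph, and let uv be an edge of G such that ρ_{k,G−uv}(W) > (k+1)(k−2) for every W ⊆ V(G) with 2 ≤ |W| ≤ |V(G)|−1. Then for each vertex w ∈ V(G) − {u,v}, there is a proper (k−1)-coloring φ of G − uv such that φ(w) ≠ φ(u) = φ(v). -/
open SimpleGraph

section Defs

variable {V : Type*}

instance instDecidableInduceAdj (G : SimpleGraph V) [DecidableRel G.Adj] (s : Set V) :
    DecidableRel (G.induce s).Adj := fun a b => ‹DecidableRel G.Adj› a.1 b.1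

instance instDecidableDeleteEdgeAdj [DecidableEq V] (G : SimpleGraph V) [DecidableRel G.Adj]
    (e : Sym2 V) : DecidableRel (G.deleteEdges {e}).Adj := fun a b =>
  decidable_of_iff (G.Adj a b ∧ ¬s(a, b) = e) (by simp)

/-- The `k`-potential of a vertex subset `R` of a graph `G`:
`ρ_{k,G}(R) = (k+1)(k-2)|R| - 2(k-1)|E(G[R])|`, where `G[R]` is the induced subgraph. -/
def potential (k : ℕ) (G : SimpleGraph V) [Fintype V] [DecidableEq V] [DecidableRel G.Adj]
    (R : Finset V) : ℤ :=
  ((k : ℤ) + 1) * ((k : ℤ) - 2) * R.card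
    - 2 * ((k : ℤ) - 1) * ((G.induce (R : Set V)).edgeFinset.card)

/-- A graph is `k`-critical if its chromatic number is `k` and every proper subgraph is
`(k-1)`-colorable. -/
def IsKCritical (k : ℕ) (G : SimpleGraph V) : Prop :=
  G.chromaticNumber = k ∧ ∀ H : SimpleGraph V, H < G → H.Colorable (k - 1)

/-- The graph underlying the DHGO-composition: delete the edge `xy` from `G₁`, split the vertex
`z` of `G₂` into two vertices, identify `x` with the half of `z` joined to the neighbors of `z`
lying in `P` and identify `y` with the half joined to the remaining neighbors of `z`. -/
def dhgoGraph {V₁ V₂ : Type*} (G₁ : SimpleGraph V₁) (G₂ : SimpleGraph V₂)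
    (x y : V₁) (z : V₂) (P : Set V₂) :
    SimpleGraph (V₁ ⊕ {w : V₂ // w ≠ z}) :=
  SimpleGraph.fromRel (fun a b =>
    match a, b with
    | Sum.inl a, Sum.inl b => G₁.Adj a b ∧ s(a, b) ≠ s(x, y)
    | Sum.inl a, Sum.inr b => (a = x ∧ (b : V₂) ∈ P) ∨ (a = y ∧ (b : V₂) ∈ G₂.neighborSet z \ P)
    | Sum.inr a, Sum.inr b => G₂.Adj a b
    | _, _ => False)

/-- `G` is a DHGO-composition of `G₁` and `G₂`: some edge `xy` of `G₁` is deleted, some vertex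
`z` of `G₂` is split into two vertices of positive degree (its neighborhood is partitioned into
two nonempty parts `P` and `N(z) \ P`), and `x`, `y` are identified with the two halves of `z`. -/
def IsDHGO {V₁ V₂ U : Type*} (G : SimpleGraph U) (G₁ : SimpleGraph V₁) (G₂ : SimpleGraph V₂) :
    Prop :=
  ∃ (x y : V₁) (z : V₂) (P : Set V₂),
    G₁.Adj x y ∧ P ⊆ G₂.neighborSet z ∧ P.Nonempty ∧ (G₂.neighborSet z \ P).Nonempty ∧
    Nonempty (G ≃g dhgoGraph G₁ G₂ x y z P)

/-- `k`-Ore graphs on the canonical finite vertex types `Fin n`: graphs obtained from copies of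
`K_k` by a sequence of DHGO-compositions. -/
inductive IsOreFin (k : ℕ) : ∀ {n : ℕ}, SimpleGraph (Fin n) → Prop
  | complete {n : ℕ} {G : SimpleGraph (Fin n)}
      (h : Nonempty (G ≃g (⊤ : SimpleGraph (Fin k)))) : IsOreFin k G
  | comp {n₁ n₂ n : ℕ} {G₁ : SimpleGraph (Fin n₁)} {G₂ : SimpleGraph (Fin n₂)}
      {G : SimpleGraph (Fin n)} (h₁ : IsOreFin k G₁) (h₂ : IsOreFin k G₂)
      (h : IsDHGO G G₁ G₂) : IsOreFin k G

/-- A graph is a `k`-Ore graph if it is obtained from copies of `K_k` by a sequence of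
DHGO-compositions. -/
def IsKOre (k : ℕ) {V : Type*} (G : SimpleGraph V) : Prop :=
  ∃ (n : ℕ) (H : SimpleGraph (Fin n)), IsOreFin k H ∧ Nonempty (G ≃g H)

/-- `y_k = max {2k - 6, k² - 5k + 2}`. -/
def yk (k : ℕ) : ℤ := max (2 * (k : ℤ) - 6) ((k : ℤ) ^ 2 - 5 * (k : ℤ) + 2)

/-- A `k`-critical graph is `k`-extremal if `2(k-1)|E(G)| = (k+1)(k-2)|V(G)| - k(k-3)`. -/
def IsKExtremal (k : ℕ) {V : Type*} [Fintype V] [DecidableEq V] (G : SimpleGraph V)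
    [DecidableRel G.Adj] : Prop :=
  IsKCritical k G ∧
    2 * ((k : ℤ) - 1) * G.edgeFinset.card =
      ((k : ℤ) + 1) * ((k : ℤ) - 2) * Fintype.card V - (k : ℤ) * ((k : ℤ) - 3)

/-- A graph is 3-connected if it has more than 3 vertices and deleting any set of at most 2
vertices leaves it connected. -/
def IsThreeConnected {V : Type*} [Fintype V] (G : SimpleGraph V) : Prop :=
  3 < Fintype.card V ∧ ∀ s : Set V, s.ncard ≤ 2 → (G.induce sᶜ).Connected

/-- `Q` is a `k`-quasi-`xy`-vertex: `G[Q]` is `(k-1)`-colorable, every proper `(k-1)`-coloring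
of `G[Q]` gives `x` and `y` the same color, and for every edge `e` of `G[Q]` the graph
`G[Q] - e` has a proper `(k-1)`-coloring giving `x` and `y` different colors. -/
def IsQuasiVertex (k : ℕ) {V : Type*} [DecidableEq V] (G : SimpleGraph V) (x y : V)
    (Q : Set V) : Prop :=
  ∃ (hx : x ∈ Q) (hy : y ∈ Q),
    (G.induce Q).Colorable (k - 1) ∧
    (∀ C : (G.induce Q).Coloring (Fin (k - 1)), C ⟨x, hx⟩ = C ⟨y, hy⟩) ∧
    (∀ a b : Q, (G.induce Q).Adj a b →
      ∃ C : ((G.induce Q).deleteEdges {s(a, b)}).Coloring (Fin (k - 1)),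
        C ⟨x, hx⟩ ≠ C ⟨y, hy⟩)

/-- A set `S` of vertices is standard if `ρ_{k,G}(S) = (k+1)(k-2)`, `G` has a separating set
`{x,y} ⊆ S` such that `S - {x,y}` induces a component of `G - {x,y}`, and `S` is a
`k`-quasi-`xy`-vertex. -/
def IsStandardSet (k : ℕ) {V : Type*} [Fintype V] [DecidableEq V] (G : SimpleGraph V)
    [DecidableRel G.Adj] (S : Finset V) : Prop :=
  potential k G S = ((k : ℤ) + 1) * ((k : ℤ) - 2) ∧
  ∃ x y : V, x ≠ y ∧ x ∈ S ∧ y ∈ S ∧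
    ¬(G.induce ({x, y}ᶜ : Set V)).Connected ∧
    (G.induce ((S : Set V) \ {x, y})).Connected ∧
    (∀ a ∈ (S : Set V) \ {x, y}, ∀ b : V, G.Adj a b → b ∈ (S : Set V) ∪ {x, y}) ∧
    IsQuasiVertex k G x y (S : Set V)

end Defs

/-!
Splitting a vertex of a `k`-Ore graph nontrivially into one copy per color makes it
`(k - 1)`-colorable with each copy receiving its color, and a further vertex can be made to avoid a
color `c` if the copy colored `c` lies in a sparse part of the split graph. This survives a
DHGO-composition: after coloring the left side, the colors of `x` and `y` are labels splitting `z`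
on the right. Since a `k`-Ore graph has potential at most `k(k - 3)`, it stays far from sparse after
the deletion of an edge, which rules out the exceptional cases. Finally, splitting `u` into a copy
incident only to `uv` and a copy incident to all the other edges, and merging the two again, gives
the coloring of `G - uv`.
-/

section Potential

variable {V W : Type*} [Fintype V] [DecidableEq V] [Fintype W] [DecidableEq W] {k : ℕ}

lemma potential_eq_ncard (k : ℕ) (G : SimpleGraph V) [DecidableRel G.Adj] (R : Finset V) :
    potential k G R = ((k : ℤ) + 1) * ((k : ℤ) - 2) * R.card
      - 2 * ((k : ℤ) - 1) * (G.edgeSet ∩ (R : Set V).sym2).ncard := by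
  have h : G.edgeSet ∩ (R : Set V).sym2 =
      ((G.induce (R : Set V)).edgeFinset.map
        (Function.Embedding.subtype (· ∈ (R : Set V))).sym2Map : Finset (Sym2 V)) := by
    classical
    simpa using congrArg ((↑) : Finset (Sym2 V) → Set (Sym2 V))
      (G.map_edgeFinset_induce (s := (R : Set V))).symm
  rw [potential, h, Set.ncard_coe_finset, Finset.card_map]

lemma potential_map_le {G : SimpleGraph V} {H : SimpleGraph W} [DecidableRel G.Adj]
    [DecidableRel H.Adj] (hk : 1 ≤ k) (f : V ↪ W) {R : Finset V}
    (hadj : ∀ a ∈ R, ∀ b ∈ R, G.Adj a b → H.Adj (f a) (f b)) :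
    potential k H (R.map f) ≤ potential k G R := by
  have hncard : (G.edgeSet ∩ (R : Set V).sym2).ncard ≤
      (H.edgeSet ∩ (R.map f : Set W).sym2).ncard := by
    refine Set.ncard_le_ncard_of_injOn (Sym2.map f) ?_ (Sym2.map.injective f.injective).injOn
    rintro ⟨a, b⟩ ⟨hab, ha, hb⟩
    exact ⟨hadj a ha b hb hab, Finset.mem_map_of_mem f ha, Finset.mem_map_of_mem f hb⟩
  have hk' : (0 : ℤ) ≤ 2 * ((k : ℤ) - 1) := by lia
  rw [potential_eq_ncard, potential_eq_ncard, Finset.card_map]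
  gcongr

lemma potential_anti {G H : SimpleGraph V} [DecidableRel G.Adj] [DecidableRel H.Adj]
    (hk : 1 ≤ k) (hGH : G ≤ H) (R : Finset V) : potential k H R ≤ potential k G R := by
  simpa using potential_map_le hk (.refl V) (R := R) fun a _ b _ hab => hGH hab

lemma potential_deleteEdges_singleton_le (G : SimpleGraph V) (e : Sym2 V) [DecidableRel G.Adj]
    [DecidableRel (G.deleteEdges {e}).Adj] (hk : 1 ≤ k) (R : Finset V) :
    potential k (G.deleteEdges {e}) R ≤ potential k G R + 2 * ((k : ℤ) - 1) := by
  have hncard : (G.edgeSet ∩ (R : Set V).sym2).ncard ≤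
      ((G.deleteEdges {e}).edgeSet ∩ (R : Set V).sym2).ncard + 1 := by
    rw [edgeSet_deleteEdges, Set.sdiff_inter_right_comm, ← Set.ncard_singleton e]
    exact Set.ncard_le_ncard_sdiff_add_ncard _ _
  rw [potential_eq_ncard, potential_eq_ncard]
  have hk' : (0 : ℤ) ≤ (k : ℤ) - 1 := by lia
  nlinarith [hk']

end Potential

section Sparse

variable {V W : Type*} [Fintype V] [Fintype W] {k : ℕ} {G : SimpleGraph V} {H : SimpleGraph W}

open scoped Classical in
/-- Every set of at least two vertices has a potential larger than `(k + 1)(k - 2)`, which is the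
potential of a single vertex. -/
def IsSparse (k : ℕ) (G : SimpleGraph V) : Prop :=
  ∀ R : Finset V, 2 ≤ R.card → ((k : ℤ) + 1) * ((k : ℤ) - 2) < potential k G R

open scoped Classical in
/-- Every proper set of at least two vertices has a potential larger than `(k + 1)(k - 2)`; this is
the hypothesis of the theorem on `G - uv`. -/
def IsProperSparse (k : ℕ) (G : SimpleGraph V) : Prop :=
  ∀ R : Finset V, 2 ≤ R.card → R ≠ Finset.univ →
    ((k : ℤ) + 1) * ((k : ℤ) - 2) < potential k G R

lemma IsSparse.lt_potential [DecidableEq V] [DecidableRel G.Adj] (h : IsSparse k G) {R : Finset V}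
    (hR : 2 ≤ R.card) : ((k : ℤ) + 1) * ((k : ℤ) - 2) < potential k G R := by
  simpa only [potential_eq_ncard] using h R hR

lemma IsProperSparse.lt_potential [DecidableEq V] [DecidableRel G.Adj] (h : IsProperSparse k G)
    {R : Finset V} (hR : 2 ≤ R.card) (hRuniv : R ≠ Finset.univ) :
    ((k : ℤ) + 1) * ((k : ℤ) - 2) < potential k G R := by
  simpa only [potential_eq_ncard] using h R hR hRuniv

lemma IsSparse.anti {G' : SimpleGraph V} (h : IsSparse k G) (hk : 1 ≤ k) (hle : G' ≤ G) :
    IsSparse k G' := by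
  classical
  exact fun R hR => (h R hR).trans_le (potential_anti hk hle R)

lemma IsProperSparse.of_hom (h : IsProperSparse k H) (hk : 1 ≤ k) (f : G →g H)
    (hf : Function.Injective f) : IsProperSparse k G := by
  classical
  intro R hR hRuniv
  refine (h (R.map ⟨f, hf⟩) (by simpa using hR) fun huniv => hRuniv ?_).trans_le
    (potential_map_le hk ⟨f, hf⟩ fun a _ b _ hab => f.map_adj hab)
  refine Finset.eq_univ_of_forall fun v => ?_
  have hv : f v ∈ R.map ⟨f, hf⟩ := huniv ▸ Finset.mem_univ (f v)
  simpa [hf.eq_iff] using hv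

lemma IsProperSparse.isSparse_of_hom (h : IsProperSparse k H) (hk : 1 ≤ k) (f : G →g H)
    (hf : Function.Injective f) (hsurj : ¬ Function.Surjective f) : IsSparse k G := by
  classical
  intro R hR
  refine (h (R.map ⟨f, hf⟩) (by simpa using hR) fun huniv => hsurj fun w => ?_).trans_le
    (potential_map_le hk ⟨f, hf⟩ fun a _ b _ hab => f.map_adj hab)
  obtain ⟨v, -, hv⟩ := Finset.mem_map.1 (huniv ▸ Finset.mem_univ w)
  exact ⟨v, hv⟩

lemma IsProperSparse.anti {G' : SimpleGraph V} (h : IsProperSparse k G) (hk : 1 ≤ k)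
    (hle : G' ≤ G) : IsProperSparse k G' :=
  h.of_hom hk (Hom.ofLE hle) Function.injective_id

end Sparse

section SplitColoring

variable {V C : Type*} {G : SimpleGraph V} {t u v : V} {f φ : V → C} {c : C}

/-- Split the vertex `t` of `G` into one vertex per color, where `f n` is the color of the copy of
`t` to which the neighbor `n` is attached. Then `φ` properly extends this coloring of the copies to
the other vertices; the value `φ t` is irrelevant. -/
structure IsSplitColoring (G : SimpleGraph V) (t : V) (f φ : V → C) : Prop where
  ne_of_adj : ∀ ⦃a b⦄, a ≠ t → b ≠ t → G.Adj a b → φ a ≠ φ b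
  ne_label : ∀ ⦃n⦄, G.Adj t n → φ n ≠ f n

/-- The graph obtained from `G` by keeping, among the edges at `t`, only those to neighbors with
label `c`: the copy of `t` colored `c`, together with the rest of `G`. -/
def splitPart (G : SimpleGraph V) (t : V) (f : V → C) (c : C) : SimpleGraph V where
  Adj a b := G.Adj a b ∧ (a = t → f b = c) ∧ (b = t → f a = c)
  symm := ⟨fun _ _ h => ⟨h.1.symm, h.2.2, h.2.1⟩⟩
  loopless := ⟨fun _ h => h.1.ne rfl⟩

lemma splitPart_adj {a b : V} :
    (splitPart G t f c).Adj a b ↔ G.Adj a b ∧ (a = t → f b = c) ∧ (b = t → f a = c) :=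
  Iff.rfl

lemma deleteEdges_le_splitPart {w : V} (h : G.neighborSet t \ f ⁻¹' {c} ⊆ {w}) :
    G.deleteEdges {s(t, w)} ≤ splitPart G t f c := by
  intro a b hab
  rw [deleteEdges_adj, Set.mem_singleton_iff] at hab
  have hlabel {n : V} (hn : G.Adj t n) (hnw : n ≠ w) : f n = c := by
    by_contra hc
    exact hnw (h ⟨hn, hc⟩)
  refine ⟨hab.1, ?_, ?_⟩
  · rintro rfl
    exact hlabel hab.1 fun hb => hab.2 (hb ▸ rfl)
  · rintro rfl
    exact hlabel hab.1.symm fun ha => hab.2 (ha ▸ Sym2.eq_swap)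

lemma splitPart_update_le_deleteEdges [DecidableEq V] {e : C} (he : e ≠ c) :
    splitPart G u (Function.update (fun _ => c) v e) c ≤ G.deleteEdges {s(u, v)} := by
  intro a b hab
  rw [splitPart_adj] at hab
  rw [deleteEdges_adj, Set.mem_singleton_iff, Sym2.eq_iff]
  refine ⟨hab.1, ?_⟩
  rintro (⟨rfl, rfl⟩ | ⟨rfl, rfl⟩)
  · exact he (by simpa using hab.2.1 rfl)
  · exact he (by simpa using hab.2.2 rfl)

/-- Merging the copies of `u` colored `c` and `e` leaves only the edge `uv` to be violated, and it
is, as `G` itself has no coloring. -/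
lemma IsSplitColoring.exists_coloring_deleteEdges [DecidableEq V] {e : C}
    (hφ : IsSplitColoring G u (Function.update (fun _ => c) v e) φ) (huv : u ≠ v)
    (hG : ¬ Nonempty (G.Coloring C)) :
    ∃ K : (G.deleteEdges {s(u, v)}).Coloring C, K u = c ∧ K v = c ∧ ∀ w ≠ u, K w = φ w := by
  have hne {n : V} (hun : G.Adj u n) (hn : n ≠ v ∨ φ v ≠ c) : c ≠ φ n := by
    by_cases hnv : n = v
    · exact hnv ▸ (hn.resolve_left (not_not.2 hnv)).symm
    · simpa [hnv] using (hφ.ne_label hun).symm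
  have hvalid {a b : V} (hab : G.Adj a b) (h : s(a, b) ≠ s(u, v) ∨ φ v ≠ c) :
      Function.update φ u c a ≠ Function.update φ u c b := by
    by_cases ha : a = u
    · subst ha
      simpa [hab.ne'] using hne hab (h.imp_left fun h hb => h (hb ▸ rfl))
    by_cases hb : b = u
    · subst hb
      simpa [ha] using (hne hab.symm (h.imp_left fun h hv => h (hv ▸ Sym2.eq_swap))).symm
    simpa [ha, hb] using hφ.ne_of_adj ha hb hab
  refine ⟨Coloring.mk (Function.update φ u c) fun {a b} hab => ?_, Function.update_self .., ?_,
    fun w hw => Function.update_of_ne hw ..⟩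
  · rw [deleteEdges_adj, Set.mem_singleton_iff] at hab
    exact hvalid hab.1 (.inl hab.2)
  · refine (Function.update_of_ne huv.symm ..).trans (not_not.1 fun hv => hG ?_)
    exact ⟨Coloring.mk (Function.update φ u c) fun hab => hvalid hab (.inr hv)⟩

lemma IsSplitColoring.comp_iso {W : Type*} {H : SimpleGraph W} {t : W} {f : W → C} (e : H ≃g G)
    (hφ : IsSplitColoring G (e t) (f ∘ e.symm) φ) : IsSplitColoring H t f (φ ∘ e) where
  ne_of_adj _ _ ha hb hab :=
    hφ.ne_of_adj (e.injective.ne ha) (e.injective.ne hb) (e.map_adj_iff.2 hab)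
  ne_label _ hn := by simpa using hφ.ne_label (e.map_adj_iff.2 hn)

lemma nontrivial_image_update {s : Set V} [DecidableEq V] {a b : V} {e : C} (ha : a ∈ s)
    (hb : b ∈ s) (hba : b ≠ a) (hfb : f b ≠ e) : (Function.update f a e '' s).Nontrivial :=
  ⟨_, Set.mem_image_of_mem _ hb, _, Set.mem_image_of_mem _ ha, by simpa [hba] using hfb⟩

end SplitColoring

section SplitCritical

open scoped Classical in
/-- The induction invariant, satisfied by all `k`-Ore graphs: `G` is not `(k - 1)`-colorable, but
becomes so, with any prescribed coloring of the copies, once a vertex is split nontrivially; and the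
color of one further vertex may be forced to avoid `c` if the copy colored `c` is in a sparse part
of the split graph. The exception is when only the edge to `w` is missing at this copy. -/
structure IsSplitCritical {V : Type*} [Fintype V] (k : ℕ) (G : SimpleGraph V) : Prop where
  not_colorable : ¬ G.Colorable (k - 1)
  nontrivial_neighborSet (v : V) : (G.neighborSet v).Nontrivial
  potential_univ_le : potential k G Finset.univ ≤ (k : ℤ) * ((k : ℤ) - 3)
  exists_isSplitColoring {t : V} {f : V → Fin (k - 1)} :
    (f '' G.neighborSet t).Nontrivial → ∃ φ, IsSplitColoring G t f φ
  exists_isSplitColoring_ne {t w : V} {f : V → Fin (k - 1)} {c : Fin (k - 1)} : w ≠ t →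
    (f '' G.neighborSet t).Nontrivial → IsProperSparse k (splitPart G t f c) →
    G.neighborSet t \ f ⁻¹' {c} ≠ {w} → ∃ φ, IsSplitColoring G t f φ ∧ φ w ≠ c

variable {V W : Type*} [Fintype V] [Fintype W] {k : ℕ} {G : SimpleGraph V} {H : SimpleGraph W}

namespace IsSplitCritical

lemma not_isSparse_deleteEdges (h : IsSplitCritical k G) (hk : 1 ≤ k) (x y : V) :
    ¬ IsSparse k (G.deleteEdges {s(x, y)}) := by
  classical
  intro hs
  have : Nontrivial V := Set.nontrivial_of_nontrivial (h.nontrivial_neighborSet x)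
  have hlt := (hs.lt_potential Fintype.one_lt_card).trans_le
    (potential_deleteEdges_singleton_le G s(x, y) hk Finset.univ)
  linarith [h.potential_univ_le]

lemma exists_isSplitColoring_ne_of_isSparse (h : IsSplitCritical k G) (hk : 1 ≤ k) {t w : V}
    {f : V → Fin (k - 1)} {c : Fin (k - 1)} (hwt : w ≠ t)
    (hf : (f '' G.neighborSet t).Nontrivial) (hs : IsSparse k (splitPart G t f c)) :
    ∃ φ, IsSplitColoring G t f φ ∧ φ w ≠ c :=
  h.exists_isSplitColoring_ne hwt hf (fun R hR _ => hs R hR) fun hw =>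
    h.not_isSparse_deleteEdges hk t w (hs.anti hk (deleteEdges_le_splitPart hw.subset))

lemma exists_coloring_deleteEdges (h : IsSplitCritical k G) (hk : 3 ≤ k) {x y : V}
    (hxy : G.Adj x y) (c : Fin (k - 1)) :
    ∃ K : (G.deleteEdges {s(x, y)}).Coloring (Fin (k - 1)), K x = c ∧ K y = c := by
  classical
  have : Nontrivial (Fin (k - 1)) := Fin.nontrivial_iff_two_le.2 (by lia)
  obtain ⟨e, hec⟩ := exists_ne c
  obtain ⟨n, hn, hny⟩ := (h.nontrivial_neighborSet x).exists_ne y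
  obtain ⟨φ, hφ⟩ := h.exists_isSplitColoring
    (nontrivial_image_update (f := fun _ => c) hxy hn hny hec.symm)
  obtain ⟨K, hx, hy, -⟩ := hφ.exists_coloring_deleteEdges hxy.ne h.not_colorable
  exact ⟨K, hx, hy⟩

lemma of_iso (h : IsSplitCritical k G) (hk : 1 ≤ k) (e : H ≃g G) : IsSplitCritical k H := by
  classical
  have hnontrivial {t : W} {f : W → Fin (k - 1)} (hf : (f '' H.neighborSet t).Nontrivial) :
      (f ∘ e.symm '' G.neighborSet (e t)).Nontrivial := by
    rwa [← e.image_neighborSet, ← Set.image_comp, Function.comp_assoc, e.symm_comp_self]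
  refine ⟨fun hH => h.not_colorable (hH.of_hom e.symm.toHom), fun v => ?_, ?_, fun hf => ?_,
    fun {t w f c} hwt hf hs hw => ?_⟩
  · rw [← Set.image_nontrivial e.injective, e.image_neighborSet]
    exact h.nontrivial_neighborSet _
  · have hle := potential_map_le (k := k) hk e.symm.toEquiv.toEmbedding (R := Finset.univ)
      fun a _ b _ hab => e.symm.map_adj_iff.2 hab
    rw [Finset.map_univ_equiv] at hle
    exact hle.trans h.potential_univ_le
  · obtain ⟨φ, hφ⟩ := h.exists_isSplitColoring (hnontrivial hf)
    exact ⟨φ ∘ e, hφ.comp_iso⟩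
  · let F : splitPart G (e t) (f ∘ e.symm) c →g splitPart H t f c :=
      ⟨e.symm, fun {a b} hab => by
        simpa [splitPart_adj, ← e.symm.map_adj_iff, e.symm_apply_eq] using hab⟩
    have hw' : G.neighborSet (e t) \ f ∘ e.symm ⁻¹' {c} ≠ {e w} := by
      rwa [Set.preimage_comp, ← e.image_eq_preimage_symm, ← e.image_neighborSet,
        ← Set.image_sdiff e.injective, ← Set.image_singleton, e.injective.image_injective.ne_iff]
    obtain ⟨φ, hφ, hc⟩ := h.exists_isSplitColoring_ne (e.injective.ne hwt) (hnontrivial hf)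
      (hs.of_hom hk F e.symm.injective) hw'
    exact ⟨φ ∘ e, hφ.comp_iso, hc⟩

end IsSplitCritical

end SplitCritical

section CompleteGraph

lemma exists_injective_mem_of_card_le {ι α : Type*} [Fintype ι] [Fintype α] {L : ι → Finset α}
    (w : ι) (hcard : Fintype.card ι ≤ Fintype.card α) (hw : (L w).Nonempty)
    (hL : ∀ i ≠ w, Fintype.card ι ≤ (L i).card + 1) (hcover : ∀ a, ∃ i, a ∈ L i) :
    ∃ g : ι → α, Function.Injective g ∧ ∀ i, g i ∈ L i := by
  classical
  rw [← Finset.all_card_le_biUnion_card_iff_exists_injective]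
  intro s
  by_cases hs : s = Finset.univ
  · have hunion : s.biUnion L = Finset.univ := by simpa [hs, Finset.eq_univ_iff_forall] using hcover
    rwa [hunion, hs, Finset.card_univ, Finset.card_univ]
  by_cases hsw : s ⊆ {w}
  · obtain rfl | rfl := Finset.subset_singleton_iff.1 hsw
    · simp
    · simpa using hw.card_pos
  · obtain ⟨i, his, hiw⟩ : ∃ i ∈ s, i ≠ w := by simpa [Finset.subset_iff] using hsw
    have hlt : s.card < Fintype.card ι := (Finset.card_lt_iff_ne_univ s).2 hs
    have hle := Finset.card_le_card (Finset.subset_biUnion_of_mem L his)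
    have hLi := hL i hiw
    lia

variable {V C : Type*}

lemma exists_ne_label_and_ne {t w : V} {f : V → C} {c : C} (hwt : w ≠ t)
    (hf : (f '' {t}ᶜ).Nontrivial) (hw : {t}ᶜ \ f ⁻¹' {c} ≠ {w}) (d : C) :
    ∃ v ≠ t, f v ≠ d ∧ (v = w → d ≠ c) := by
  by_contra! hd
  have hfd {v : V} (hvt : v ≠ t) (hvw : v ≠ w) : f v = d := by
    by_contra hvd
    exact hvw (hd v hvt hvd).1
  have hfw : f w ≠ d := by
    rintro hfw
    refine hf.not_subsingleton (Set.subsingleton_singleton (a := d) |>.anti ?_)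
    rintro _ ⟨v, hvt, rfl⟩
    exact (eq_or_ne v w).elim (fun h => h ▸ hfw) (hfd hvt)
  obtain ⟨-, rfl⟩ := hd w hwt hfw
  refine hw (Set.eq_singleton_iff_unique_mem.2 ⟨⟨hwt, hfw⟩, fun v hv => ?_⟩)
  by_contra hvw
  exact hv.2 (hfd hv.1 hvw)

variable [Fintype V] [Fintype C]

lemma exists_isSplitColoring_top_ne (hV : Fintype.card V = Fintype.card C + 1)
    (hC : 3 ≤ Fintype.card C) {t w : V} {f : V → C} {c : C} (hwt : w ≠ t)
    (hf : (f '' {t}ᶜ).Nontrivial) (hw : {t}ᶜ \ f ⁻¹' {c} ≠ {w}) :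
    ∃ φ, IsSplitColoring (⊤ : SimpleGraph V) t f φ ∧ φ w ≠ c := by
  classical
  let L (v : {v // v ≠ t}) : Finset C := {a | a ≠ f v ∧ ((v : V) = w → a ≠ c)}
  have hcover (d : C) : ∃ v, d ∈ L v := by
    obtain ⟨v, hvt, hfv, hvw⟩ := exists_ne_label_and_ne hwt hf hw d
    exact ⟨⟨v, hvt⟩, by simpa [L] using ⟨hfv.symm, hvw⟩⟩
  have hLw : (L ⟨w, hwt⟩).Nonempty := by
    obtain ⟨a, ha⟩ : ({f w, c}ᶜ : Finset C).Nonempty := by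
      rw [← Finset.card_pos, Finset.card_compl]
      have := Finset.card_le_two (a := f w) (b := c)
      lia
    exact ⟨a, by simpa [L] using ha⟩
  have hL (v : {v // v ≠ t}) (hv : v ≠ ⟨w, hwt⟩) : Fintype.card {v // v ≠ t} ≤ (L v).card + 1 := by
    have hvw : (v : V) ≠ w := fun h => hv (Subtype.ext h)
    have hLv : L v = {f v}ᶜ := by ext; simp [L, hvw]
    have hcard : Fintype.card {v // v ≠ t} = Fintype.card C := by simp [hV]
    rw [hLv, Finset.card_compl, Finset.card_singleton]
    lia
  obtain ⟨g, hg, hgL⟩ := exists_injective_mem_of_card_le ⟨w, hwt⟩ (by simp [hV]) hLw hL hcover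
  simp only [L, Finset.mem_filter_univ] at hgL
  refine ⟨fun v => if hv : v = t then c else g ⟨v, hv⟩, ⟨fun a b ha hb hab => ?_, fun n hn => ?_⟩,
    ?_⟩
  · simpa [ha, hb, hg.eq_iff] using hab
  · simpa [hn.ne'] using (hgL ⟨n, hn.ne'⟩).1
  · simpa [hwt] using (hgL ⟨w, hwt⟩).2 rfl

lemma isSplitCritical_top {k : ℕ} (hk : 4 ≤ k) (hV : Fintype.card V = k) :
    IsSplitCritical k (⊤ : SimpleGraph V) := by
  classical
  have hV' : Fintype.card V = Fintype.card (Fin (k - 1)) + 1 := by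
    rw [Fintype.card_fin]
    lia
  have hC : 3 ≤ Fintype.card (Fin (k - 1)) := by
    rw [Fintype.card_fin]
    lia
  refine ⟨fun h => ?_, fun v => ?_, ?_, fun {t f} hf => ?_, fun hwt hf _ hw => ?_⟩
  · have hle := h.chromaticNumber_le
    rw [chromaticNumber_top, hV, Nat.cast_le] at hle
    lia
  · rw [neighborSet_top, ← Set.one_lt_ncard_iff_nontrivial, Set.ncard_compl, Set.ncard_singleton,
      Nat.card_eq_fintype_card]
    lia
  · have hE : ((k.choose 2 : ℕ) : ℤ) * 2 = k * (k - 1) := by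
      rw [Nat.choose_two_right, ← Nat.cast_pred (by lia)]
      exact_mod_cast Nat.div_mul_cancel (Nat.even_mul_pred_self k).two_dvd
    rw [potential_eq_ncard, Finset.coe_univ, Set.sym2_univ, Set.inter_univ, ← coe_edgeFinset,
      Set.ncard_coe_finset, card_edgeFinset_top_eq_card_choose_two, Finset.card_univ, hV]
    linear_combination (1 - (k : ℤ)) * hE
  · rw [neighborSet_top] at hf
    obtain ⟨w, hwt⟩ := hf.nonempty.of_image
    obtain ⟨φ, hφ, -⟩ := exists_isSplitColoring_top_ne hV' hC (c := f w) hwt hf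
      fun h => (h.symm.subset rfl).2 rfl
    exact ⟨φ, hφ⟩
  · rw [neighborSet_top] at hf hw
    exact exists_isSplitColoring_top_ne hV' hC hwt hf hw

end CompleteGraph

section DHGO

variable {V₁ V₂ : Type*} {G₁ : SimpleGraph V₁} {G₂ : SimpleGraph V₂} {x y : V₁} {z : V₂}
  {P : Set V₂}

/-- The data of a DHGO-composition: an edge `xy` of `G₁` and a part `P` of the neighborhood of a
vertex `z` of `G₂` such that both `P` and the rest of the neighborhood are nonempty. -/
structure IsComposable (G₁ : SimpleGraph V₁) (G₂ : SimpleGraph V₂) (x y : V₁) (z : V₂)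
    (P : Set V₂) : Prop where
  adj : G₁.Adj x y
  subset : P ⊆ G₂.neighborSet z
  nonempty : P.Nonempty
  nonempty_sdiff : (G₂.neighborSet z \ P).Nonempty

lemma IsComposable.swap (h : IsComposable G₁ G₂ x y z P) :
    IsComposable G₁ G₂ y x z (G₂.neighborSet z \ P) where
  adj := h.adj.symm
  subset := Set.sdiff_subset
  nonempty := h.nonempty_sdiff
  nonempty_sdiff := by simpa [Set.inter_eq_right.2 h.subset] using h.nonempty

@[simp] lemma dhgoGraph_adj_inl_inl {a b : V₁} :
    (dhgoGraph G₁ G₂ x y z P).Adj (.inl a) (.inl b) ↔ G₁.Adj a b ∧ s(a, b) ≠ s(x, y) := by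
  simp only [dhgoGraph, fromRel_adj, G₁.adj_comm b a, Sym2.eq_swap (a := b) (b := a), or_self,
    and_iff_right_iff_imp, ne_eq, Sum.inl.injEq]
  exact fun h => h.1.ne

@[simp] lemma dhgoGraph_adj_inl_inr {a : V₁} {b : {w : V₂ // w ≠ z}} :
    (dhgoGraph G₁ G₂ x y z P).Adj (.inl a) (.inr b) ↔
      a = x ∧ (b : V₂) ∈ P ∨ a = y ∧ (b : V₂) ∈ G₂.neighborSet z \ P := by
  simp [dhgoGraph]

@[simp] lemma dhgoGraph_adj_inr_inl {a : V₁} {b : {w : V₂ // w ≠ z}} :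
    (dhgoGraph G₁ G₂ x y z P).Adj (.inr b) (.inl a) ↔
      a = x ∧ (b : V₂) ∈ P ∨ a = y ∧ (b : V₂) ∈ G₂.neighborSet z \ P := by
  rw [SimpleGraph.adj_comm, dhgoGraph_adj_inl_inr]

@[simp] lemma dhgoGraph_adj_inr_inr {a b : {w : V₂ // w ≠ z}} :
    (dhgoGraph G₁ G₂ x y z P).Adj (.inr a) (.inr b) ↔ G₂.Adj a b := by
  simp only [dhgoGraph, fromRel_adj, G₂.adj_comm b a, or_self, and_iff_right_iff_imp, ne_eq,
    Sum.inr.injEq, ← Subtype.coe_inj]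
  exact fun h => h.ne

lemma dhgoGraph_swap (hP : P ⊆ G₂.neighborSet z) :
    dhgoGraph G₁ G₂ y x z (G₂.neighborSet z \ P) = dhgoGraph G₁ G₂ x y z P := by
  ext (a | a) (b | b) <;>
    simp [Set.inter_eq_right.2 hP, Sym2.eq_swap (a := y) (b := x), or_comm]

lemma exists_mem_edgeSet_dhgoGraph_map_eq {e : Sym2 V₂} (he : e ∈ G₂.edgeSet) :
    ∃ d ∈ (dhgoGraph G₁ G₂ x y z P).edgeSet, d.map (Sum.elim (fun _ => z) Subtype.val) = e ∧
      (∀ a, .inl a ∈ d → a = x ∨ a = y) ∧ ∃ b, .inr b ∈ d := by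
  have hspoke {b : V₂} (hb : G₂.Adj z b) : ∃ d ∈ (dhgoGraph G₁ G₂ x y z P).edgeSet,
      d.map (Sum.elim (fun _ => z) Subtype.val) = s(z, b) ∧
        (∀ a, .inl a ∈ d → a = x ∨ a = y) ∧ ∃ b, .inr b ∈ d := by
    by_cases hbP : b ∈ P
    · exact ⟨s(.inl x, .inr ⟨b, hb.ne'⟩), by simp [hbP], rfl, by simp, _, Sym2.mem_mk_right ..⟩
    · exact ⟨s(.inl y, .inr ⟨b, hb.ne'⟩), by simp [hbP, hb], rfl, by simp, _,
        Sym2.mem_mk_right ..⟩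
  induction e with | _ a b
  rw [mem_edgeSet] at he
  by_cases ha : a = z
  · exact ha ▸ hspoke (ha ▸ he)
  by_cases hb : b = z
  · rw [Sym2.eq_swap]
    exact hb ▸ hspoke (hb ▸ he.symm)
  exact ⟨s(.inr ⟨a, ha⟩, .inr ⟨b, hb⟩), by simpa using he, rfl, by simp, _, Sym2.mem_mk_right ..⟩

/-- The composition contains `G₁[R] - xy` and, edge-disjoint from it, a preimage of `G₂` under the
contraction of the left side to `z`. -/
lemma ncard_edgeSet_add_ncard_edgeSet_le_dhgoGraph [Finite V₁] [Fintype V₂]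
    [DecidableEq V₂] {R : Finset V₁} (hx : x ∈ R) (hy : y ∈ R) :
    (G₁.edgeSet ∩ (R : Set V₁).sym2).ncard + G₂.edgeSet.ncard ≤
      ((dhgoGraph G₁ G₂ x y z P).edgeSet ∩
        (R.disjSum (Finset.univ : Finset {w : V₂ // w ≠ z}) : Set _).sym2).ncard + 1 := by
  set D := (dhgoGraph G₁ G₂ x y z P).edgeSet ∩
    (R.disjSum (Finset.univ : Finset {w : V₂ // w ≠ z}) : Set _).sym2
  set E := G₁.edgeSet ∩ (R : Set V₁).sym2
  set A : Set (Sym2 (V₁ ⊕ {w : V₂ // w ≠ z})) := Sym2.map .inl '' (E \ {s(x, y)})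
  have hA : E.ncard ≤ A.ncard + 1 := by
    rw [Set.ncard_image_of_injective _ (Sym2.map.injective Sum.inl_injective),
      ← Set.ncard_singleton s(x, y)]
    exact Set.ncard_le_ncard_sdiff_add_ncard _ _
  have hAD : A ⊆ D := by
    rintro _ ⟨⟨a, b⟩, ⟨⟨hab, ha, hb⟩, hne⟩, rfl⟩
    have hadj : (dhgoGraph G₁ G₂ x y z P).Adj (.inl a) (.inl b) :=
      dhgoGraph_adj_inl_inl.2 ⟨hab, hne⟩
    exact ⟨hadj, by simpa using And.intro ha hb⟩
  have hG₂ : G₂.edgeSet ⊆ Sym2.map (Sum.elim (fun _ => z) Subtype.val) '' (D \ A) := by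
    intro e he
    obtain ⟨d, hd, hde, hinl, b, hb⟩ := exists_mem_edgeSet_dhgoGraph_map_eq (G₁ := G₁) (x := x)
      (y := y) (P := P) he
    refine ⟨d, ⟨⟨hd, ?_⟩, ?_⟩, hde⟩
    · rw [Set.mem_sym2_iff_subset]
      rintro (a | a) ha
      · obtain rfl | rfl := hinl a ha <;> simpa
      · simp
    · rintro ⟨e, -, rfl⟩
      simp at hb
  have hncard : G₂.edgeSet.ncard ≤ (D \ A).ncard :=
    (Set.ncard_le_ncard hG₂).trans Set.ncard_image_le
  have hsdiff := Set.ncard_sdiff_add_ncard_of_subset hAD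
  lia

lemma potential_dhgoGraph_le {k : ℕ} [Fintype V₁] [DecidableEq V₁] [Fintype V₂] [DecidableEq V₂]
    [DecidableRel G₁.Adj] [DecidableRel G₂.Adj] [DecidableRel (dhgoGraph G₁ G₂ x y z P).Adj]
    (hk : 1 ≤ k) {R : Finset V₁} (hx : x ∈ R) (hy : y ∈ R) :
    potential k (dhgoGraph G₁ G₂ x y z P) (R.disjSum Finset.univ) ≤
      potential k G₁ R + potential k G₂ Finset.univ - (k : ℤ) * ((k : ℤ) - 3) := by
  have hncard := ncard_edgeSet_add_ncard_edgeSet_le_dhgoGraph (G₁ := G₁) (G₂ := G₂) (z := z)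
    (P := P) hx hy
  have hcard : ((R.disjSum (Finset.univ : Finset {w : V₂ // w ≠ z})).card : ℤ) =
      R.card + (Finset.univ : Finset V₂).card - 1 := by
    have hpos := Fintype.card_pos_iff.2 ⟨z⟩
    simp only [Finset.card_disjSum, Finset.card_univ, ne_eq, Fintype.card_subtype_compl,
      Fintype.card_unique]
    lia
  rw [potential_eq_ncard, potential_eq_ncard, potential_eq_ncard, hcard, Finset.coe_univ,
    Set.sym2_univ, Set.inter_univ]
  have hk' : (0 : ℤ) ≤ (k : ℤ) - 1 := by lia
  nlinarith [hk']

lemma IsProperSparse.of_dhgoGraph {k : ℕ} [Fintype V₁] [Fintype V₂] [DecidableEq V₂]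
    [DecidableRel G₂.Adj] (h : IsProperSparse k (dhgoGraph G₁ G₂ x y z P)) (hk : 1 ≤ k)
    (hG₂ : potential k G₂ Finset.univ ≤ (k : ℤ) * ((k : ℤ) - 3)) : IsProperSparse k G₁ := by
  classical
  intro R hR hRuniv
  by_cases hxy : x ∈ R ∧ y ∈ R
  · have hlt := h.lt_potential (R := R.disjSum Finset.univ)
      (by rw [Finset.card_disjSum]; lia)
      (by simpa [← Finset.univ_disjSum_univ] using hRuniv)
    have hle := potential_dhgoGraph_le (G₁ := G₁) (G₂ := G₂) (z := z) (P := P) hk hxy.1 hxy.2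
    linarith
  · refine (h.lt_potential (R := R.map .inl) (by simpa using hR) fun huniv => hRuniv ?_).trans_le
      (potential_map_le hk .inl fun a ha b hb hab => dhgoGraph_adj_inl_inl.2 ⟨hab, ?_⟩)
    · refine Finset.eq_univ_of_forall fun v => ?_
      have hv : (.inl v : V₁ ⊕ {w : V₂ // w ≠ z}) ∈ R.map .inl := huniv ▸ Finset.mem_univ _
      simpa using hv
    · rw [Ne, Sym2.eq_iff]
      rintro (⟨rfl, rfl⟩ | ⟨rfl, rfl⟩)
      · exact hxy ⟨ha, hb⟩
      · exact hxy ⟨hb, ha⟩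

end DHGO

section Gluing

variable {V₁ V₂ C : Type*} {G₁ : SimpleGraph V₁} {G₂ : SimpleGraph V₂} {x y t : V₁} {z : V₂}
  {P : Set V₂}

lemma dhgoGraph_adj_induction {r : V₁ ⊕ {w : V₂ // w ≠ z} → V₁ ⊕ {w : V₂ // w ≠ z} → Prop}
    (hr : ∀ a b, r a b → r b a)
    (inl_inl : ∀ a b, G₁.Adj a b → s(a, b) ≠ s(x, y) → r (.inl a) (.inl b))
    (inl_inr_left : ∀ p : {w // w ≠ z}, (p : V₂) ∈ P → r (.inl x) (.inr p))
    (inl_inr_right : ∀ q : {w // w ≠ z}, (q : V₂) ∈ G₂.neighborSet z \ P → r (.inl y) (.inr q))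
    (inr_inr : ∀ a b : {w // w ≠ z}, G₂.Adj a b → r (.inr a) (.inr b)) ⦃a b⦄
    (hab : (dhgoGraph G₁ G₂ x y z P).Adj a b) : r a b := by
  have inl_inr {a : V₁} {b : {w // w ≠ z}}
      (hab : (dhgoGraph G₁ G₂ x y z P).Adj (.inl a) (.inr b)) : r (.inl a) (.inr b) := by
    rcases dhgoGraph_adj_inl_inr.1 hab with ⟨rfl, hb⟩ | ⟨rfl, hb⟩
    exacts [inl_inr_left b hb, inl_inr_right b hb]
  rcases a with a | a <;> rcases b with b | b
  · exact inl_inl a b (dhgoGraph_adj_inl_inl.1 hab).1 (dhgoGraph_adj_inl_inl.1 hab).2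
  · exact inl_inr hab
  · exact hr _ _ (inl_inr hab.symm)
  · exact inr_inr a b (dhgoGraph_adj_inr_inr.1 hab)

lemma IsComposable.inl_not_surjective (h : IsComposable G₁ G₂ x y z P) :
    ¬ Function.Surjective (Sum.inl : V₁ → V₁ ⊕ {w : V₂ // w ≠ z}) := by
  intro hsurj
  obtain ⟨p, hp⟩ := h.nonempty
  obtain ⟨a, ha⟩ := hsurj (.inr ⟨p, (h.subset hp).ne'⟩)
  simp at ha

lemma neighborSet_dhgoGraph_inl_of_ne (htx : t ≠ x) (hty : t ≠ y) :
    (dhgoGraph G₁ G₂ x y z P).neighborSet (.inl t) = .inl '' G₁.neighborSet t := by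
  ext (n | n) <;> simp [htx, hty]

/-- By symmetry, a vertex of the composition may be assumed to be neither `y` nor a neighbor of `x`
on the right. -/
lemma IsComposable.dhgoGraph_cases
    {p : SimpleGraph (V₁ ⊕ {w : V₂ // w ≠ z}) → V₁ ⊕ {w : V₂ // w ≠ z} → Prop}
    (h : IsComposable G₁ G₂ x y z P) (v : V₁ ⊕ {w : V₂ // w ≠ z})
    (inl : ∀ {x y P t}, IsComposable G₁ G₂ x y z P → t ≠ y →
      p (dhgoGraph G₁ G₂ x y z P) (.inl t))
    (inr : ∀ {x y P} {t : {w : V₂ // w ≠ z}}, IsComposable G₁ G₂ x y z P → (t : V₂) ∉ P →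
      p (dhgoGraph G₁ G₂ x y z P) (.inr t)) :
    p (dhgoGraph G₁ G₂ x y z P) v := by
  rcases v with t | t
  · by_cases hty : t = y
    · rw [← dhgoGraph_swap h.subset]
      exact inl h.swap (hty ▸ h.adj.ne')
    · exact inl h hty
  · by_cases ht : (t : V₂) ∈ P
    · rw [← dhgoGraph_swap h.subset]
      exact inr h.swap fun htP => htP.2 ht
    · exact inr h ht

open scoped Classical in
/-- The inclusion of `V₂` into the vertices of a DHGO-composition sending the split vertex `z` to
the vertex `s` on the left, which is meant to be one of the two halves of `z`. -/
noncomputable def splitEmb (z : V₂) (s : V₁) : V₂ ↪ V₁ ⊕ {w : V₂ // w ≠ z} where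
  toFun b := if hb : b = z then .inl s else .inr ⟨b, hb⟩
  inj' a b hab := by
    by_cases ha : a = z <;> by_cases hb : b = z <;> simp_all

@[simp] lemma splitEmb_self (z : V₂) (s : V₁) : splitEmb z s z = .inl s := dif_pos rfl

lemma splitEmb_of_ne {b : V₂} (s : V₁) (hb : b ≠ z) : splitEmb z s b = .inr ⟨b, hb⟩ := dif_neg hb

lemma splitEmb_eq_inl_iff {s a : V₁} {b : V₂} : splitEmb z s b = .inl a ↔ b = z ∧ a = s := by
  obtain rfl | hb := eq_or_ne b z
  · simp [eq_comm]
  · simp [splitEmb_of_ne s hb, hb]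

lemma splitEmb_eq_inr_iff {s : V₁} {a : {w : V₂ // w ≠ z}} {b : V₂} :
    splitEmb z s b = .inr a ↔ b = a := by
  obtain rfl | hb := eq_or_ne b z
  · simp [a.2.symm]
  · simp [splitEmb_of_ne s hb, Subtype.ext_iff]

lemma splitEmb_not_surjective {s s' : V₁} (hs : s' ≠ s) :
    ¬ Function.Surjective (splitEmb z s) := by
  intro h
  obtain ⟨b, hb⟩ := h (.inl s')
  exact hs (splitEmb_eq_inl_iff.1 hb).2

lemma neighborSet_dhgoGraph_inr_of_notMem {t : {w : V₂ // w ≠ z}} (ht : (t : V₂) ∉ P) :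
    (dhgoGraph G₁ G₂ x y z P).neighborSet (.inr t) = splitEmb z y '' G₂.neighborSet t := by
  ext (n | n) <;>
    simp [splitEmb_eq_inl_iff, splitEmb_eq_inr_iff, ht, G₂.adj_comm z, and_comm]

namespace IsComposable

lemma not_nonempty_coloring (h : IsComposable G₁ G₂ x y z P) (h₁ : ¬ Nonempty (G₁.Coloring C))
    (h₂ : ¬ Nonempty (G₂.Coloring C)) :
    ¬ Nonempty ((dhgoGraph G₁ G₂ x y z P).Coloring C) := by
  rintro ⟨φ⟩
  by_cases hxy : φ (.inl x) = φ (.inl y)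
  · refine h₂ ⟨Coloring.mk (φ ∘ splitEmb z x) ?_⟩
    have hspoke {b : V₂} (hb : G₂.Adj z b) : φ (.inl x) ≠ φ (splitEmb z x b) := by
      rw [splitEmb_of_ne x hb.ne']
      by_cases hbP : b ∈ P
      · exact φ.valid (by simp [hbP])
      · exact hxy ▸ φ.valid (by simp [hbP, hb])
    intro a b hab
    by_cases ha : a = z
    · subst ha
      simpa using hspoke hab
    by_cases hb : b = z
    · subst hb
      simpa using (hspoke hab.symm).symm
    exact φ.valid (by simpa [splitEmb_of_ne, ha, hb] using hab)
  · refine h₁ ⟨Coloring.mk (φ ∘ .inl) fun {a b} hab => ?_⟩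
    by_cases hs : s(a, b) = s(x, y)
    · rcases Sym2.eq_iff.1 hs with ⟨rfl, rfl⟩ | ⟨rfl, rfl⟩
      exacts [hxy, Ne.symm hxy]
    · exact φ.valid (dhgoGraph_adj_inl_inl.2 ⟨hab, hs⟩)

lemma neighborSet_inl_left (h : IsComposable G₁ G₂ x y z P) :
    (dhgoGraph G₁ G₂ x y z P).neighborSet (.inl x) =
      .inl '' (G₁.neighborSet x \ {y}) ∪ splitEmb z x '' P := by
  have hz : z ∉ P := fun hz => (h.subset hz).ne rfl
  ext (n | n) <;> simp [splitEmb_eq_inl_iff, splitEmb_eq_inr_iff, h.adj.ne, hz]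

lemma nontrivial_neighborSet_inl (h : IsComposable G₁ G₂ x y z P) (hty : t ≠ y)
    (ht : (G₁.neighborSet t).Nontrivial) :
    ((dhgoGraph G₁ G₂ x y z P).neighborSet (.inl t)).Nontrivial := by
  by_cases htx : t = x
  · subst htx
    obtain ⟨n, hn, hny⟩ := ht.exists_ne y
    obtain ⟨p, hp⟩ := h.nonempty
    rw [h.neighborSet_inl_left]
    refine ⟨_, .inl ⟨n, ⟨hn, hny⟩, rfl⟩, _, .inr ⟨p, hp, rfl⟩, ?_⟩
    simp [splitEmb_of_ne t (h.subset hp).ne']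
  · rw [neighborSet_dhgoGraph_inl_of_ne htx hty]
    exact ht.image Sum.inl_injective

end IsComposable

open scoped Classical in
/-- The labels at `z` left over from a splitting of the vertex `inl t` of a DHGO-composition with
labels `f`, once the left side is colored by `φ₁`: the neighbors in `P` have to avoid the color of
`x`, or their own label if `x` is the vertex being split, and the others the color of `y`. -/
noncomputable def splitLabel (P : Set V₂) (z : V₂) (t x y : V₁)
    (f : V₁ ⊕ {w : V₂ // w ≠ z} → C) (φ₁ : V₁ → C) : V₂ → C :=
  P.piecewise (if t = x then f ∘ splitEmb z x else fun _ => φ₁ x) fun _ => φ₁ y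

section splitLabel

variable {f : V₁ ⊕ {w : V₂ // w ≠ z} → C} {φ₁ : V₁ → C} {b : V₂}

lemma splitLabel_of_mem (htx : t ≠ x) (hb : b ∈ P) : splitLabel P z t x y f φ₁ b = φ₁ x := by
  simp [splitLabel, htx, hb]

lemma splitLabel_left_of_mem (hb : b ∈ P) :
    splitLabel P z x x y f φ₁ b = f (splitEmb z x b) := by
  simp [splitLabel, hb]

lemma splitLabel_of_notMem (hb : b ∉ P) : splitLabel P z t x y f φ₁ b = φ₁ y := by
  simp [splitLabel, hb]

end splitLabel

lemma IsSplitColoring.dhgoGraph_inl {f : V₁ ⊕ {w : V₂ // w ≠ z} → C} {f₁ φ₁ : V₁ → C} {φ₂ : V₂ → C}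
    (h : IsComposable G₁ G₂ x y z P) (hty : t ≠ y)
    (hf₁ : ∀ n, (dhgoGraph G₁ G₂ x y z P).Adj (.inl t) (.inl n) → f₁ n = f (.inl n))
    (hφ₁ : IsSplitColoring G₁ t f₁ φ₁)
    (hφ₂ : IsSplitColoring G₂ z (splitLabel P z t x y f φ₁) φ₂) :
    IsSplitColoring (dhgoGraph G₁ G₂ x y z P) (.inl t) f (Sum.elim φ₁ (φ₂ ∘ Subtype.val)) where
  ne_of_adj a b ha hb hab := by
    let ψ : V₁ ⊕ {w : V₂ // w ≠ z} → C := Sum.elim φ₁ (φ₂ ∘ Subtype.val)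
    revert ha hb
    refine dhgoGraph_adj_induction (r := fun a b => a ≠ .inl t → b ≠ .inl t → ψ a ≠ ψ b)
      (fun a b hr ha hb => (hr hb ha).symm) (fun a b hab _ ha hb => ?_) (fun p hp hx _ => ?_)
      (fun q hq _ _ => ?_) (fun a b hab _ _ => ?_) hab
    · exact hφ₁.ne_of_adj (by simpa using ha) (by simpa using hb) hab
    · have hxt : t ≠ x := fun htx => hx (htx ▸ rfl)
      simpa [ψ, splitLabel_of_mem hxt hp] using (hφ₂.ne_label (h.subset hp)).symm
    · simpa [ψ, splitLabel_of_notMem hq.2] using (hφ₂.ne_label hq.1).symm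
    · exact hφ₂.ne_of_adj a.2 b.2 hab
  ne_label n hn := by
    rcases n with n | p
    · exact hf₁ n hn ▸ hφ₁.ne_label (dhgoGraph_adj_inl_inl.1 hn).1
    · obtain ⟨rfl, hp⟩ | ⟨rfl, -⟩ := dhgoGraph_adj_inl_inr.1 hn
      · simpa [splitLabel_left_of_mem hp, splitEmb_of_ne t p.2] using hφ₂.ne_label (h.subset hp)
      · exact absurd rfl hty

lemma IsSplitColoring.dhgoGraph_inr {f : V₁ ⊕ {w : V₂ // w ≠ z} → C} {t : {w : V₂ // w ≠ z}}
    {φ₂ : V₂ → C} (hP : P ⊆ G₂.neighborSet z) (ht : (t : V₂) ∉ P)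
    (hφ₂ : IsSplitColoring G₂ t (f ∘ splitEmb z y) φ₂) (K : (G₁.deleteEdges {s(x, y)}).Coloring C)
    (hx : K x = φ₂ z) (hy : K y = φ₂ z) :
    IsSplitColoring (dhgoGraph G₁ G₂ x y z P) (.inr t) f (Sum.elim K (φ₂ ∘ Subtype.val)) where
  ne_of_adj a b ha hb hab := by
    let ψ : V₁ ⊕ {w : V₂ // w ≠ z} → C := Sum.elim K (φ₂ ∘ Subtype.val)
    revert ha hb
    refine dhgoGraph_adj_induction (r := fun a b => a ≠ .inr t → b ≠ .inr t → ψ a ≠ ψ b)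
      (fun a b hr ha hb => (hr hb ha).symm) (fun a b hab hs _ _ => ?_) (fun p hp _ hpt => ?_)
      (fun q hq _ hqt => ?_) (fun a b hab ha hb => ?_) hab
    · exact K.valid (by simpa using And.intro hab (by simpa using hs))
    · simpa [ψ, hx] using hφ₂.ne_of_adj t.2.symm (by grind) (hP hp)
    · simpa [ψ, hy] using hφ₂.ne_of_adj t.2.symm (by grind) hq.1
    · exact hφ₂.ne_of_adj (by grind) (by grind) hab
  ne_label n hn := by
    rcases n with n | n
    · obtain ⟨-, htP⟩ | ⟨rfl, htQ⟩ := dhgoGraph_adj_inr_inl.1 hn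
      · exact absurd htP ht
      · simpa [hy] using hφ₂.ne_label htQ.1.symm
    · simpa [splitEmb_of_ne y n.2] using hφ₂.ne_label (dhgoGraph_adj_inr_inr.1 hn)

end Gluing

section LeftLabel

variable {V₁ V₂ C : Type*} {G₁ : SimpleGraph V₁} {G₂ : SimpleGraph V₂}
  {x y t : V₁} {z : V₂} {P : Set V₂} {f : V₁ ⊕ {w : V₂ // w ≠ z} → C} {f₁ : V₁ → C} {c : C}

/-- Labels `f₁` splitting the vertex `t` of `G₁` in accordance with the labels `f` splitting `inl t`
in the composition, such that every split coloring of the left side leaves a nontrivial splitting of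
`z` on the right. Only the label of `y` is not determined by `f`. -/
structure IsLeftLabel (G₁ : SimpleGraph V₁) (G₂ : SimpleGraph V₂) (x y : V₁) (z : V₂) (P : Set V₂)
    (t : V₁) (f : V₁ ⊕ {w : V₂ // w ≠ z} → C) (f₁ : V₁ → C) : Prop where
  eq_of_adj : ∀ n, (dhgoGraph G₁ G₂ x y z P).Adj (.inl t) (.inl n) → f₁ n = f (.inl n)
  nontrivial : (f₁ '' G₁.neighborSet t).Nontrivial
  nontrivial_splitLabel : ∀ φ₁, IsSplitColoring G₁ t f₁ φ₁ →
    (splitLabel P z t x y f φ₁ '' G₂.neighborSet z).Nontrivial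

lemma IsLeftLabel.splitPart_adj_inl_inl (hf₁ : IsLeftLabel G₁ G₂ x y z P t f f₁) {a b : V₁} :
    (splitPart (dhgoGraph G₁ G₂ x y z P) (.inl t) f c).Adj (.inl a) (.inl b) ↔
      (splitPart G₁ t f₁ c).Adj a b ∧ s(a, b) ≠ s(x, y) := by
  rw [splitPart_adj, splitPart_adj, dhgoGraph_adj_inl_inl, Sum.inl.injEq, Sum.inl.injEq,
    and_right_comm]
  refine and_congr_left fun hne => and_congr_right fun hab => and_congr ?_ ?_ <;>
    refine forall_congr' ?_ <;> rintro rfl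
  · rw [hf₁.eq_of_adj b (dhgoGraph_adj_inl_inl.2 ⟨hab, hne⟩)]
  · rw [hf₁.eq_of_adj a (dhgoGraph_adj_inl_inl.2 ⟨hab, hne⟩).symm]

lemma IsLeftLabel.neighborSet_sdiff_preimage (hf₁ : IsLeftLabel G₁ G₂ x y z P t f f₁) (hty : t ≠ y)
    (hinr : ∀ b, (dhgoGraph G₁ G₂ x y z P).Adj (.inl t) (.inr b) → f (.inr b) = c)
    (hy : t = x → f₁ y = c) :
    (dhgoGraph G₁ G₂ x y z P).neighborSet (.inl t) \ f ⁻¹' {c} =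
      .inl '' (G₁.neighborSet t \ f₁ ⁻¹' {c}) := by
  ext (n | n)
  · rw [Sum.inl_injective.mem_set_image, Set.mem_sdiff, mem_neighborSet]
    refine ⟨fun hn => ⟨(dhgoGraph_adj_inl_inl.1 hn.1).1, ?_⟩, fun hn => ?_⟩
    · rw [Set.mem_preimage, hf₁.eq_of_adj n hn.1]
      exact hn.2
    · have hD : (dhgoGraph G₁ G₂ x y z P).Adj (.inl t) (.inl n) := by
        refine dhgoGraph_adj_inl_inl.2 ⟨hn.1, fun hne => ?_⟩
        obtain ⟨rfl, rfl⟩ | ⟨rfl, -⟩ := Sym2.eq_iff.1 hne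
        exacts [hn.2 (hy rfl), hty rfl]
      exact ⟨hD, fun hc => hn.2 ((hf₁.eq_of_adj n hD).trans hc)⟩
  · simpa using hinr n

namespace IsComposable

lemma splitLabel_image_nontrivial (h : IsComposable G₁ G₂ x y z P) {φ₁ : V₁ → C} {p : V₂}
    (hp : p ∈ P) (hpy : splitLabel P z t x y f φ₁ p ≠ φ₁ y) :
    (splitLabel P z t x y f φ₁ '' G₂.neighborSet z).Nontrivial := by
  obtain ⟨q, hq⟩ := h.nonempty_sdiff
  exact ⟨_, Set.mem_image_of_mem _ (h.subset hp), _, Set.mem_image_of_mem _ hq.1,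
    by rwa [splitLabel_of_notMem hq.2]⟩

lemma isLeftLabel_of_ne (h : IsComposable G₁ G₂ x y z P) (htx : t ≠ x) (hty : t ≠ y)
    (hf : (f '' (dhgoGraph G₁ G₂ x y z P).neighborSet (.inl t)).Nontrivial) :
    IsLeftLabel G₁ G₂ x y z P t f (f ∘ .inl) where
  eq_of_adj _ _ := rfl
  nontrivial := by rwa [Set.image_comp, ← neighborSet_dhgoGraph_inl_of_ne htx hty]
  nontrivial_splitLabel φ₁ hφ₁ := by
    obtain ⟨p, hp⟩ := h.nonempty
    refine h.splitLabel_image_nontrivial hp ?_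
    rw [splitLabel_of_mem htx hp]
    exact hφ₁.ne_of_adj htx.symm hty.symm h.adj

lemma isLeftLabel_update [DecidableEq V₁] (h : IsComposable G₁ G₂ x y z P) {n : V₁} {e : C}
    (hn : n ∈ G₁.neighborSet x) (hny : n ≠ y) (hne : f (.inl n) ≠ e)
    (he : (f ∘ splitEmb z x '' P).Nontrivial ∨ e ∈ f ∘ splitEmb z x '' P) :
    IsLeftLabel G₁ G₂ x y z P x f (Function.update (f ∘ .inl) y e) where
  eq_of_adj m hm := by
    refine Function.update_of_ne ?_ ..
    rintro rfl
    exact (dhgoGraph_adj_inl_inl.1 hm).2 rfl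
  nontrivial := nontrivial_image_update h.adj hn hny hne
  nontrivial_splitLabel φ₁ hφ₁ := by
    obtain ⟨_, ⟨p, hp, rfl⟩, hpy⟩ : ∃ a ∈ f ∘ splitEmb z x '' P, a ≠ φ₁ y := by
      refine he.elim (fun hP => hP.exists_ne (φ₁ y)) fun he => ⟨e, he, ?_⟩
      simpa using (hφ₁.ne_label h.adj).symm
    exact h.splitLabel_image_nontrivial hp (by rwa [splitLabel_left_of_mem hp])

lemma exists_neighbor_ne (h : IsComposable G₁ G₂ x y z P) {a : C}
    (hf : (f '' (dhgoGraph G₁ G₂ x y z P).neighborSet (.inl x)).Nontrivial)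
    (ha : f ∘ splitEmb z x '' P ⊆ {a}) : ∃ n ∈ G₁.neighborSet x, n ≠ y ∧ f (.inl n) ≠ a := by
  rw [h.neighborSet_inl_left, Set.image_union, ← Set.image_comp, ← Set.image_comp] at hf
  obtain ⟨_, hb, hba⟩ := hf.exists_ne a
  obtain ⟨n, hn, rfl⟩ | hb := hb
  · exact ⟨n, hn.1, hn.2, hba⟩
  · exact absurd (ha hb) hba

end IsComposable

end LeftLabel

section Composition

variable {V₁ V₂ : Type*} [Fintype V₁] {k : ℕ}
  {G₁ : SimpleGraph V₁} {G₂ : SimpleGraph V₂} {x y t : V₁} {z : V₂} {P : Set V₂}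
  {f : V₁ ⊕ {w : V₂ // w ≠ z} → Fin (k - 1)} {c : Fin (k - 1)}

namespace IsComposable

/-- The label of `y` is the color of the neighbors in `P` if they all have the same label, and
otherwise a third color. -/
lemma exists_isLeftLabel_update [DecidableEq V₁] (h : IsComposable G₁ G₂ x y z P)
    (h₁ : IsSplitCritical k G₁) (hk : 4 ≤ k)
    (hf : (f '' (dhgoGraph G₁ G₂ x y z P).neighborSet (.inl x)).Nontrivial) (c : Fin (k - 1)) :
    ∃ e, IsLeftLabel G₁ G₂ x y z P x f (Function.update (f ∘ .inl) y e) ∧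
      (e = c → f ∘ splitEmb z x '' P ⊆ {c}) := by
  by_cases hP : (f ∘ splitEmb z x '' P).Nontrivial
  · obtain ⟨n, hn, hny⟩ := (h₁.nontrivial_neighborSet x).exists_ne y
    obtain ⟨e, hen, hec⟩ := Fin.exists_ne_and_ne_of_two_lt (f (.inl n)) c (by lia)
    exact ⟨e, h.isLeftLabel_update hn hny hen.symm (.inl hP), fun he => absurd he hec⟩
  · rw [Set.not_nontrivial_iff] at hP
    obtain ⟨a, ha⟩ := h.nonempty.image (f ∘ splitEmb z x)
    have hPa : f ∘ splitEmb z x '' P ⊆ {a} := fun b hb => hP hb ha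
    obtain ⟨n, hn, hny, hna⟩ := h.exists_neighbor_ne hf hPa
    exact ⟨a, h.isLeftLabel_update hn hny hna (.inr ha), fun hac => hac ▸ hPa⟩

lemma exists_isLeftLabel (h : IsComposable G₁ G₂ x y z P)
    (h₁ : IsSplitCritical k G₁) (hk : 4 ≤ k) (hty : t ≠ y)
    (hf : (f '' (dhgoGraph G₁ G₂ x y z P).neighborSet (.inl t)).Nontrivial) :
    ∃ f₁, IsLeftLabel G₁ G₂ x y z P t f f₁ := by
  classical
  by_cases htx : t = x
  · subst htx
    obtain ⟨e, he, -⟩ := h.exists_isLeftLabel_update h₁ hk hf ⟨0, by lia⟩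
    exact ⟨_, he⟩
  · exact ⟨_, h.isLeftLabel_of_ne htx hty hf⟩

variable [Fintype V₂]

lemma exists_isSplitColoring_inl (h : IsComposable G₁ G₂ x y z P) (h₁ : IsSplitCritical k G₁)
    (h₂ : IsSplitCritical k G₂) (hk : 4 ≤ k) (hty : t ≠ y)
    (hf : (f '' (dhgoGraph G₁ G₂ x y z P).neighborSet (.inl t)).Nontrivial) :
    ∃ φ, IsSplitColoring (dhgoGraph G₁ G₂ x y z P) (.inl t) f φ := by
  obtain ⟨f₁, hf₁⟩ := h.exists_isLeftLabel h₁ hk hty hf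
  obtain ⟨φ₁, hφ₁⟩ := h₁.exists_isSplitColoring hf₁.nontrivial
  obtain ⟨φ₂, hφ₂⟩ := h₂.exists_isSplitColoring (hf₁.nontrivial_splitLabel φ₁ hφ₁)
  exact ⟨_, hφ₁.dhgoGraph_inl h hty hf₁.eq_of_adj hφ₂⟩

lemma exists_isSplitColoring_inr (h : IsComposable G₁ G₂ x y z P) (h₁ : IsSplitCritical k G₁)
    (h₂ : IsSplitCritical k G₂) (hk : 3 ≤ k) {t : {w : V₂ // w ≠ z}} (ht : (t : V₂) ∉ P)
    (hf : (f '' (dhgoGraph G₁ G₂ x y z P).neighborSet (.inr t)).Nontrivial) :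
    ∃ φ, IsSplitColoring (dhgoGraph G₁ G₂ x y z P) (.inr t) f φ := by
  rw [neighborSet_dhgoGraph_inr_of_notMem ht, ← Set.image_comp] at hf
  obtain ⟨φ₂, hφ₂⟩ := h₂.exists_isSplitColoring hf
  obtain ⟨K, hx, hy⟩ := h₁.exists_coloring_deleteEdges hk h.adj (φ₂ z)
  exact ⟨_, hφ₂.dhgoGraph_inr h.subset ht K hx hy⟩

end IsComposable

variable [Fintype V₂] [DecidableEq V₂]

/-- All the edges at `inl t` to the right are kept in the sparse part, which therefore contains the
composition with the sparse part of `G₁`. -/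
lemma IsLeftLabel.exists_isSplitColoring_ne {f₁ : V₁ → Fin (k - 1)}
    (hf₁ : IsLeftLabel G₁ G₂ x y z P t f f₁) (h₁ : IsSplitCritical k G₁) (h₂ : IsSplitCritical k G₂)
    (hk : 1 ≤ k) (hty : t ≠ y)
    (hinr : ∀ b, (dhgoGraph G₁ G₂ x y z P).Adj (.inl t) (.inr b) → f (.inr b) = c)
    (hy : t = x → f₁ y = c) {w : V₁} (hwt : w ≠ t)
    (hs : IsProperSparse k (splitPart (dhgoGraph G₁ G₂ x y z P) (.inl t) f c))
    (hw : (dhgoGraph G₁ G₂ x y z P).neighborSet (.inl t) \ f ⁻¹' {c} ≠ {.inl w}) :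
    ∃ φ₁, IsSplitColoring G₁ t f₁ φ₁ ∧ φ₁ w ≠ c := by
  classical
  have hle : dhgoGraph (splitPart G₁ t f₁ c) G₂ x y z P ≤
      splitPart (dhgoGraph G₁ G₂ x y z P) (.inl t) f c := by
    refine dhgoGraph_adj_induction (fun _ _ => .symm) (fun a b hab hne => ?_) (fun p hp => ?_)
      (fun q hq => ?_) fun a b hab => ?_
    · exact hf₁.splitPart_adj_inl_inl.2 ⟨hab, hne⟩
    · have hD : (dhgoGraph G₁ G₂ x y z P).Adj (.inl x) (.inr p) := by simp [hp]
      exact ⟨hD, fun hx => hinr p (hx ▸ hD), nofun⟩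
    · have hD : (dhgoGraph G₁ G₂ x y z P).Adj (.inl y) (.inr q) :=
        dhgoGraph_adj_inl_inr.2 (.inr ⟨rfl, hq⟩)
      exact ⟨hD, fun hy => hinr q (hy ▸ hD), nofun⟩
    · exact ⟨dhgoGraph_adj_inr_inr.2 hab, nofun, nofun⟩
  refine h₁.exists_isSplitColoring_ne hwt hf₁.nontrivial
    ((hs.anti hk hle).of_dhgoGraph hk h₂.potential_univ_le) fun hw₁ => hw ?_
  rw [hf₁.neighborSet_sdiff_preimage hty hinr hy, hw₁, Set.image_singleton]

lemma isSparse_splitPart_of_splitEmb {H : SimpleGraph (V₁ ⊕ {w : V₂ // w ≠ z})}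
    {L : V₂ → Fin (k - 1)} (hH : IsProperSparse k H) (hk : 1 ≤ k) {s s' : V₁} (hs : s' ≠ s)
    (hinr : ∀ a b : {w : V₂ // w ≠ z}, G₂.Adj a b → H.Adj (.inr a) (.inr b))
    (hinl : ∀ b : {w : V₂ // w ≠ z}, G₂.Adj z b → L b = c → H.Adj (.inl s) (.inr b)) :
    IsSparse k (splitPart G₂ z L c) := by
  have hspoke {b : V₂} (hb : (splitPart G₂ z L c).Adj z b) :
      H.Adj (.inl s) (splitEmb z s b) := by
    rw [splitEmb_of_ne s hb.ne']
    exact hinl ⟨b, hb.ne'⟩ hb.1 (hb.2.1 rfl)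
  let F : splitPart G₂ z L c →g H := ⟨splitEmb z s, fun {a b} hab => by
    by_cases ha : a = z
    · subst ha
      simpa using hspoke hab
    by_cases hb : b = z
    · subst hb
      simpa using (hspoke hab.symm).symm
    simpa [splitEmb_of_ne, ha, hb] using hinr ⟨a, ha⟩ ⟨b, hb⟩ hab.1⟩
  exact hH.isSparse_of_hom hk F (splitEmb z s).injective (splitEmb_not_surjective hs)

namespace IsComposable

lemma not_isProperSparse_of_inl (h : IsComposable G₁ G₂ x y z P) (h₁ : IsSplitCritical k G₁)
    (hk : 1 ≤ k) {H : SimpleGraph (V₁ ⊕ {w : V₂ // w ≠ z})}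
    (hH : ∀ a b, G₁.Adj a b → s(a, b) ≠ s(x, y) → H.Adj (.inl a) (.inl b)) :
    ¬ IsProperSparse k H := by
  intro hs
  let F : G₁.deleteEdges {s(x, y)} →g H :=
    ⟨.inl, fun {a b} hab => by
      rw [deleteEdges_adj, Set.mem_singleton_iff] at hab
      exact hH a b hab.1 hab.2⟩
  exact h₁.not_isSparse_deleteEdges hk x y
    (hs.isSparse_of_hom hk F Sum.inl_injective h.inl_not_surjective)

/-- If all the neighbors of `x` other than `y` were labeled `c`, the sparse part would contain
`G₁ - xy`. Hence `y` may be labeled `c` unless all the neighbors in `P` have the same label. -/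
lemma exists_isLeftLabel_update_of_isProperSparse [DecidableEq V₁]
    (h : IsComposable G₁ G₂ x y z P) (h₁ : IsSplitCritical k G₁) (hk : 1 ≤ k)
    (hf : (f '' (dhgoGraph G₁ G₂ x y z P).neighborSet (.inl x)).Nontrivial)
    (hs : IsProperSparse k (splitPart (dhgoGraph G₁ G₂ x y z P) (.inl x) f c)) :
    ∃ e, IsLeftLabel G₁ G₂ x y z P x f (Function.update (f ∘ .inl) y e) ∧
      (e ≠ c → c ∉ f ∘ splitEmb z x '' P) := by
  by_cases hP : (f ∘ splitEmb z x '' P).Nontrivial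
  · obtain ⟨n, hn, hny, hnc⟩ : ∃ n ∈ G₁.neighborSet x, n ≠ y ∧ f (.inl n) ≠ c := by
      by_contra! hc
      refine h.not_isProperSparse_of_inl h₁ hk (fun a b hab hxy => ?_) hs
      refine ⟨dhgoGraph_adj_inl_inl.2 ⟨hab, hxy⟩, ?_, ?_⟩ <;> rintro ⟨⟩
      · exact hc b hab fun hb => hxy (hb ▸ rfl)
      · exact hc a hab.symm fun ha => hxy (ha ▸ Sym2.eq_swap)
    exact ⟨c, h.isLeftLabel_update hn hny hnc (.inl hP), fun hc => absurd rfl hc⟩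
  · rw [Set.not_nontrivial_iff] at hP
    obtain ⟨a, ha⟩ := h.nonempty.image (f ∘ splitEmb z x)
    obtain ⟨n, hn, hny, hna⟩ := h.exists_neighbor_ne hf fun b hb => hP hb ha
    exact ⟨a, h.isLeftLabel_update hn hny hna (.inr ha), fun hac hc => hac (hP ha hc)⟩

lemma exists_isSplitColoring_ne_of_label_ne (h : IsComposable G₁ G₂ x y z P)
    (h₁ : IsSplitCritical k G₁) (hk : 1 ≤ k) {f₁ : V₁ → Fin (k - 1)}
    (hf₁ : IsLeftLabel G₁ G₂ x y z P x f f₁) (hy : f₁ y ≠ c) {w : V₁} (hwx : w ≠ x)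
    (hs : IsProperSparse k (splitPart (dhgoGraph G₁ G₂ x y z P) (.inl x) f c)) :
    ∃ φ₁, IsSplitColoring G₁ x f₁ φ₁ ∧ φ₁ w ≠ c := by
  let F : splitPart G₁ x f₁ c →g splitPart (dhgoGraph G₁ G₂ x y z P) (.inl x) f c :=
    ⟨.inl, fun {a b} hab => by
      refine hf₁.splitPart_adj_inl_inl.2 ⟨hab, fun hne => hy ?_⟩
      obtain ⟨rfl, rfl⟩ | ⟨rfl, rfl⟩ := Sym2.eq_iff.1 hne
      exacts [hab.2.1 rfl, hab.2.2 rfl]⟩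
  exact h₁.exists_isSplitColoring_ne_of_isSparse hk hwx hf₁.nontrivial
    (hs.isSparse_of_hom hk F Sum.inl_injective h.inl_not_surjective)

lemma exists_isLeftLabel_and_ne (h : IsComposable G₁ G₂ x y z P) (h₁ : IsSplitCritical k G₁)
    (h₂ : IsSplitCritical k G₂) (hk : 4 ≤ k) (hty : t ≠ y) {w : V₁} (hwt : w ≠ t)
    (hf : (f '' (dhgoGraph G₁ G₂ x y z P).neighborSet (.inl t)).Nontrivial)
    (hs : IsProperSparse k (splitPart (dhgoGraph G₁ G₂ x y z P) (.inl t) f c))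
    (hw : (dhgoGraph G₁ G₂ x y z P).neighborSet (.inl t) \ f ⁻¹' {c} ≠ {.inl w}) :
    ∃ f₁ φ₁, IsLeftLabel G₁ G₂ x y z P t f f₁ ∧ IsSplitColoring G₁ t f₁ φ₁ ∧ φ₁ w ≠ c := by
  classical
  by_cases htx : t = x
  · subst htx
    obtain ⟨e, he, hP⟩ := h.exists_isLeftLabel_update h₁ hk hf c
    by_cases hec : e = c
    · have hinr (b) (hb : (dhgoGraph G₁ G₂ t y z P).Adj (.inl t) (.inr b)) : f (.inr b) = c := by
        obtain ⟨-, hbP⟩ | ⟨rfl, -⟩ := dhgoGraph_adj_inl_inr.1 hb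
        · simpa [splitEmb_of_ne t b.2] using hP hec (Set.mem_image_of_mem _ hbP)
        · exact absurd rfl hty
      exact ⟨_, (he.exists_isSplitColoring_ne h₁ h₂ (by lia) hty hinr (by simpa using hec) hwt hs
        hw).imp fun _ hφ₁ => ⟨he, hφ₁⟩⟩
    · exact ⟨_, (h.exists_isSplitColoring_ne_of_label_ne h₁ (by lia) he (by simpa using hec) hwt
        hs).imp fun _ hφ₁ => ⟨he, hφ₁⟩⟩
  · have hf₁ := h.isLeftLabel_of_ne htx hty hf
    exact ⟨_, (hf₁.exists_isSplitColoring_ne h₁ h₂ (by lia) hty (by simp [htx, hty])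
      (fun htx' => absurd htx' htx) hwt hs hw).imp fun _ hφ₁ => ⟨hf₁, hφ₁⟩⟩

/-- At most one half of `z` is adjacent to vertices labeled `c`, so that the sparse part embeds into
the one of the composition. -/
lemma isSparse_splitPart_splitLabel (h : IsComposable G₁ G₂ x y z P) (hk : 1 ≤ k) (hty : t ≠ y)
    {φ₁ : V₁ → Fin (k - 1)} (hP : φ₁ y = c → ∀ p ∈ P, splitLabel P z t x y f φ₁ p ≠ c)
    (hs : IsProperSparse k (splitPart (dhgoGraph G₁ G₂ x y z P) (.inl t) f c)) :
    IsSparse k (splitPart G₂ z (splitLabel P z t x y f φ₁) c) := by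
  have hinr (a b : {w : V₂ // w ≠ z}) (hab : G₂.Adj a b) :
      (splitPart (dhgoGraph G₁ G₂ x y z P) (.inl t) f c).Adj (.inr a) (.inr b) :=
    ⟨dhgoGraph_adj_inr_inr.2 hab, nofun, nofun⟩
  by_cases hy : φ₁ y = c
  · refine isSparse_splitPart_of_splitEmb hs hk h.adj.ne hinr fun q hq hqc => ?_
    have hqP : (q : V₂) ∉ P := fun hqP => hP hy q hqP hqc
    exact ⟨by simp [hqP, hq], fun hyt => absurd (Sum.inl_injective hyt).symm hty, nofun⟩
  · refine isSparse_splitPart_of_splitEmb hs hk h.adj.ne' hinr fun p _ hpc => ?_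
    have hpP : (p : V₂) ∈ P := by
      by_contra hpP
      exact hy (by rwa [splitLabel_of_notMem hpP] at hpc)
    refine ⟨by simp [hpP], ?_, nofun⟩
    rintro ⟨⟩
    rwa [splitLabel_left_of_mem hpP, splitEmb_of_ne x p.2] at hpc

lemma exists_isLeftLabel_and_isSparse (h : IsComposable G₁ G₂ x y z P) (h₁ : IsSplitCritical k G₁)
    (hk : 1 ≤ k) (hty : t ≠ y)
    (hf : (f '' (dhgoGraph G₁ G₂ x y z P).neighborSet (.inl t)).Nontrivial)
    (hs : IsProperSparse k (splitPart (dhgoGraph G₁ G₂ x y z P) (.inl t) f c)) :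
    ∃ f₁ φ₁, IsLeftLabel G₁ G₂ x y z P t f f₁ ∧ IsSplitColoring G₁ t f₁ φ₁ ∧
      IsSparse k (splitPart G₂ z (splitLabel P z t x y f φ₁) c) := by
  classical
  by_cases htx : t = x
  · subst htx
    obtain ⟨e, he, hP⟩ := h.exists_isLeftLabel_update_of_isProperSparse h₁ hk hf hs
    obtain ⟨φ₁, hφ₁⟩ := h₁.exists_isSplitColoring he.nontrivial
    refine ⟨_, φ₁, he, hφ₁, h.isSparse_splitPart_splitLabel hk hty (fun hy p hp hpc => ?_) hs⟩
    have hye : φ₁ y ≠ e := by simpa using hφ₁.ne_label h.adj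
    exact hP (hy ▸ hye.symm) ⟨p, hp, by rwa [splitLabel_left_of_mem hp] at hpc⟩
  · have hf₁ := h.isLeftLabel_of_ne htx hty hf
    obtain ⟨φ₁, hφ₁⟩ := h₁.exists_isSplitColoring hf₁.nontrivial
    refine ⟨_, φ₁, hf₁, hφ₁, h.isSparse_splitPart_splitLabel hk hty (fun hy p hp => ?_) hs⟩
    rw [splitLabel_of_mem htx hp, ← hy]
    exact hφ₁.ne_of_adj (Ne.symm htx) hty.symm h.adj

lemma exists_isSplitColoring_inl_ne (h : IsComposable G₁ G₂ x y z P) (h₁ : IsSplitCritical k G₁)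
    (h₂ : IsSplitCritical k G₂) (hk : 4 ≤ k) (hty : t ≠ y) {w : V₁ ⊕ {w : V₂ // w ≠ z}}
    (hwt : w ≠ .inl t)
    (hf : (f '' (dhgoGraph G₁ G₂ x y z P).neighborSet (.inl t)).Nontrivial)
    (hs : IsProperSparse k (splitPart (dhgoGraph G₁ G₂ x y z P) (.inl t) f c))
    (hw : (dhgoGraph G₁ G₂ x y z P).neighborSet (.inl t) \ f ⁻¹' {c} ≠ {w}) :
    ∃ φ, IsSplitColoring (dhgoGraph G₁ G₂ x y z P) (.inl t) f φ ∧ φ w ≠ c := by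
  rcases w with w | w
  · obtain ⟨f₁, φ₁, hf₁, hφ₁, hwc⟩ :=
      h.exists_isLeftLabel_and_ne h₁ h₂ hk hty (by simpa using hwt) hf hs hw
    obtain ⟨φ₂, hφ₂⟩ := h₂.exists_isSplitColoring (hf₁.nontrivial_splitLabel φ₁ hφ₁)
    exact ⟨_, hφ₁.dhgoGraph_inl h hty hf₁.eq_of_adj hφ₂, hwc⟩
  · obtain ⟨f₁, φ₁, hf₁, hφ₁, hsparse⟩ :=
      h.exists_isLeftLabel_and_isSparse h₁ (by lia) hty hf hs
    obtain ⟨φ₂, hφ₂, hwc⟩ := h₂.exists_isSplitColoring_ne_of_isSparse (by lia) w.2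
      (hf₁.nontrivial_splitLabel φ₁ hφ₁) hsparse
    exact ⟨_, hφ₁.dhgoGraph_inl h hty hf₁.eq_of_adj hφ₂, hwc⟩

end IsComposable

lemma IsSplitCritical.dhgoGraph (h₁ : IsSplitCritical k G₁) (h₂ : IsSplitCritical k G₂)
    (hk : 4 ≤ k) (h : IsComposable G₁ G₂ x y z P) :
    IsSplitCritical k (dhgoGraph G₁ G₂ x y z P) where
  not_colorable := h.not_nonempty_coloring h₁.not_colorable h₂.not_colorable
  nontrivial_neighborSet v := by
    refine h.dhgoGraph_cases (p := fun D v => (D.neighborSet v).Nontrivial) v ?_ ?_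
    · exact fun h hty => h.nontrivial_neighborSet_inl hty (h₁.nontrivial_neighborSet _)
    · intro _ _ _ t _ ht
      rw [neighborSet_dhgoGraph_inr_of_notMem ht]
      exact (h₂.nontrivial_neighborSet t).image (splitEmb z _).injective
  potential_univ_le := by
    classical
    have hle := potential_dhgoGraph_le (G₁ := G₁) (G₂ := G₂) (z := z) (P := P) (k := k) (by lia)
      (Finset.mem_univ x) (Finset.mem_univ y)
    rw [Finset.univ_disjSum_univ] at hle
    have h₁le := h₁.potential_univ_le
    have h₂le := h₂.potential_univ_le
    simp only [potential_eq_ncard] at hle h₁le h₂le ⊢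
    linarith
  exists_isSplitColoring {v f} := by
    refine h.dhgoGraph_cases (p := fun D v => (f '' D.neighborSet v).Nontrivial →
      ∃ φ, IsSplitColoring D v f φ) v ?_ ?_
    · exact fun h hty hf => h.exists_isSplitColoring_inl h₁ h₂ hk hty hf
    · exact fun h ht hf => h.exists_isSplitColoring_inr h₁ h₂ (by lia) ht hf
  exists_isSplitColoring_ne {v w f c} := by
    refine h.dhgoGraph_cases (p := fun D v => w ≠ v → (f '' D.neighborSet v).Nontrivial →
      IsProperSparse k (splitPart D v f c) → D.neighborSet v \ f ⁻¹' {c} ≠ {w} →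
      ∃ φ, IsSplitColoring D v f φ ∧ φ w ≠ c) v ?_ ?_
    · exact fun h hty hwt hf hs hw => h.exists_isSplitColoring_inl_ne h₁ h₂ hk hty hwt hf hs hw
    · intro _ _ _ t h _ _ _ hs
      refine absurd hs (h.not_isProperSparse_of_inl h₁ (by lia) fun a b hab hxy => ?_)
      exact ⟨dhgoGraph_adj_inl_inl.2 ⟨hab, hxy⟩, nofun, nofun⟩

end Composition

lemma isSplitCritical_of_isOreFin {k n : ℕ} (hk : 4 ≤ k) {G : SimpleGraph (Fin n)}
    (h : IsOreFin k G) : IsSplitCritical k G := by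
  induction h with
  | complete hiso =>
    obtain ⟨e⟩ := hiso
    exact (isSplitCritical_top hk (Fintype.card_fin k)).of_iso (by lia) e
  | comp _ _ hcomp h₁ h₂ =>
    obtain ⟨x, y, z, P, hxy, hP, hne, hne', ⟨e⟩⟩ := hcomp
    exact (h₁.dhgoGraph h₂ hk ⟨hxy, hP, hne, hne'⟩).of_iso (by lia) e

lemma IsKOre.isSplitCritical {V : Type*} [Fintype V] {k : ℕ} (hk : 4 ≤ k) {G : SimpleGraph V}
    (h : IsKOre k G) : IsSplitCritical k G := by
  obtain ⟨n, H, hH, ⟨e⟩⟩ := h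
  exact (isSplitCritical_of_isOreFin hk hH).of_iso (by lia) e

/-- **Lemma.** Let `k ≥ 4`, let `G` be a `k`-Ore graph, and let `uv` be an edge of `G` such
that `ρ_{k,G-uv}(W) > (k+1)(k-2)` for every `W ⊆ V(G)` with `2 ≤ |W| ≤ |V(G)|-1`. Then for
each `w ∈ V(G) - {u,v}` there is a proper `(k-1)`-coloring `φ` of `G - uv` with
`φ(w) ≠ φ(u) = φ(v)`. -/
theorem kOre_coloring_of_deleteEdge {V : Type*} [Fintype V] [DecidableEq V] (k : ℕ)
    (hk : 4 ≤ k) (G : SimpleGraph V) [DecidableRel G.Adj] (hG : IsKOre k G)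
    (u v : V) (huv : G.Adj u v)
    (hpot : ∀ W : Finset V, 2 ≤ W.card → W.card ≤ Fintype.card V - 1 →
      ((k : ℤ) + 1) * ((k : ℤ) - 2) < potential k (G.deleteEdges {s(u, v)}) W)
    (w : V) (hwu : w ≠ u) (hwv : w ≠ v) :
    ∃ C : (G.deleteEdges {s(u, v)}).Coloring (Fin (k - 1)), C w ≠ C u ∧ C u = C v := by
  have := Fintype.card_pos_iff.2 ⟨u⟩
  have : Nontrivial (Fin (k - 1)) := Fin.nontrivial_iff_two_le.2 (by lia)
  obtain ⟨c, e, hce⟩ := exists_pair_ne (Fin (k - 1))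
  have hcritical := hG.isSplitCritical hk
  have hsparse : IsProperSparse k (G.deleteEdges {s(u, v)}) := fun R hR hRuniv => by
    have hcard := (Finset.card_lt_iff_ne_univ R).2 hRuniv
    simpa only [potential_eq_ncard] using hpot R hR (by lia)
  let f : V → Fin (k - 1) := Function.update (fun _ => c) v e
  have hf : (f '' G.neighborSet u).Nontrivial := by
    obtain ⟨n, hn, hnv⟩ := (hcritical.nontrivial_neighborSet u).exists_ne v
    exact nontrivial_image_update huv hn hnv hce
  have hw : G.neighborSet u \ f ⁻¹' {c} ≠ {w} := fun h =>
    (h.symm.subset rfl).2 (Function.update_of_ne hwv ..)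
  obtain ⟨φ, hφ, hφw⟩ := hcritical.exists_isSplitColoring_ne hwu hf
    (hsparse.anti (by lia) (splitPart_update_le_deleteEdges hce.symm)) hw
  obtain ⟨K, hu, hv, hK⟩ := hφ.exists_coloring_deleteEdges huv.ne hcritical.not_colorable
  exact ⟨K, by rwa [hK w hwu, hu], hu.trans hv.symm⟩
end

section
/- Let k ≥ 4, let G be a k-Ore graph, and let u ∈ V(G) be such that ρ_{k,G}(W) > (k+1)(k−2) for every W ⊆ V(G) − u with |W| ≥ 2. Then G contains a set S of k−1 vertices such that G[S] is a complete graph, every vertex of S has degree exactly k−1 in G, and the set N(S) − S of outside neighbors of S is an independent set in G. -/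
open SimpleGraph

/-!
A `k`-Ore graph has potential `k(k-3)`: each composition `D = O(G₁, G₂)` satisfies
`ρ(D) = ρ(G₁) + ρ(G₂) - k(k-3)`. In such a composition the `G₁`-side of `D` is `G₁ - xy`, whose
potential `k(k-3) + 2(k-1) = (k+1)(k-2)` violates the hypothesis on `u` unless `u` lies in that
side. Every set of the `G₂`-side then avoids `u`, so the split vertex `z` satisfies the same
hypothesis in `G₂`. By induction `G₂` has a clique as required that avoids `z`, and this clique
survives in `D`, because contracting the `G₁`-side to `z` maps the neighborhood of each vertex of
`G₂ - z` bijectively onto its neighborhood in `G₂`. Keeping track of the fact that the clique avoids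
the special vertex is what makes the induction work.
-/

section Potential

variable {V W : Type*} [Fintype V] [DecidableEq V] [Fintype W] [DecidableEq W]
  {G : SimpleGraph V} {H : SimpleGraph W} [DecidableRel G.Adj] [DecidableRel H.Adj]

theorem potential_map (k : ℕ) (f : G ↪g H) (R : Finset V) :
    potential k H (R.map f.toEmbedding) = potential k G R := by
  let e : G.induce (R : Set V) ≃g H.induce (R.map f.toEmbedding : Set W) :=
    { toEquiv := (Equiv.Set.image f R f.injective).trans
        (Equiv.setCongr (Finset.coe_map f.toEmbedding R).symm)
      map_rel_iff' := f.map_adj_iff }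
  rw [potential, potential, Finset.card_map, e.card_edgeFinset_eq]

theorem potential_univ (k : ℕ) (G : SimpleGraph V) [DecidableRel G.Adj] :
    potential k G Finset.univ =
      ((k : ℤ) + 1) * ((k : ℤ) - 2) * Fintype.card V
        - 2 * ((k : ℤ) - 1) * G.edgeFinset.card := by
  let e : G.induce ((Finset.univ : Finset V) : Set V) ≃g G :=
    { toEquiv := Equiv.subtypeUnivEquiv fun v => Finset.mem_coe.2 (Finset.mem_univ v)
      map_rel_iff' := Iff.rfl }
  rw [potential, e.card_edgeFinset_eq, Finset.card_univ]

theorem potential_univ_congr (k : ℕ) (e : G ≃g H) :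
    potential k G Finset.univ = potential k H Finset.univ := by
  rw [potential_univ, potential_univ, e.card_edgeFinset_eq, Fintype.card_congr e.toEquiv]

theorem potential_univ_top (k : ℕ) :
    potential k (⊤ : SimpleGraph V) Finset.univ =
      Fintype.card V *
        (((k : ℤ) + 1) * ((k : ℤ) - 2) - ((k : ℤ) - 1) * (Fintype.card V - 1)) := by
  have two_mul_card : (2 : ℤ) * (⊤ : SimpleGraph V).edgeFinset.card =
      Fintype.card V * (Fintype.card V - 1) := by
    have h := (⊤ : SimpleGraph V).sum_degrees_eq_twice_card_edges
    simp only [complete_graph_degree, Finset.sum_const, Finset.card_univ, smul_eq_mul] at h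
    rcases Nat.eq_zero_or_pos (Fintype.card V) with h0 | hpos
    · simp_all
    · have := congrArg (Nat.cast : ℕ → ℤ) h
      push_cast [Nat.cast_sub hpos] at this
      exact this.symm
  rw [potential_univ]
  linear_combination (1 - (k : ℤ)) * two_mul_card

theorem card_edgeFinset_deleteEdges_singleton_add_one {e : Sym2 V} (he : e ∈ G.edgeSet) :
    (G.deleteEdges {e}).edgeFinset.card + 1 = G.edgeFinset.card := by
  have h : (G.deleteEdges {e}).edgeFinset = G.edgeFinset.erase e := by
    ext; simp [and_comm]
  rw [h, Finset.card_erase_add_one (mem_edgeFinset.2 he)]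

theorem potential_univ_deleteEdges_singleton (k : ℕ) {e : Sym2 V} (he : e ∈ G.edgeSet) :
    potential k (G.deleteEdges {e}) Finset.univ =
      potential k G Finset.univ + 2 * ((k : ℤ) - 1) := by
  rw [potential_univ, potential_univ, ← card_edgeFinset_deleteEdges_singleton_add_one he]
  push_cast
  ring

/-- The hypothesis on the special vertex `u`: every set of at least two vertices avoiding `u` has
potential larger than `(k+1)(k-2)`, the potential of a single vertex. -/
def HasHighPotentialAvoiding (k : ℕ) (G : SimpleGraph V) [DecidableRel G.Adj] (u : V) : Prop :=
  ∀ W : Finset V, u ∉ W → 2 ≤ W.card → ((k : ℤ) + 1) * ((k : ℤ) - 2) < potential k G W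

theorem HasHighPotentialAvoiding.map_iso {k : ℕ} {u : V} (hu : HasHighPotentialAvoiding k G u)
    (e : G ≃g H) : HasHighPotentialAvoiding k H (e u) := by
  intro R huR hR
  rw [← potential_map k e.symm.toEmbedding]
  refine hu _ (fun h => huR ?_) (by rwa [Finset.card_map])
  obtain ⟨w, hw, rfl⟩ := Finset.mem_map.1 h
  simpa using hw

end Potential

section SpecialClique

/-- The cliques of the theorem: `k - 1` pairwise adjacent vertices of degree `k - 1` whose outside
neighbors form an independent set. -/
def IsSpecialClique {V : Type*} (k : ℕ) (G : SimpleGraph V) [G.LocallyFinite] (S : Finset V) :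
    Prop :=
  S.card = k - 1 ∧ G.IsClique (S : Set V) ∧ (∀ v ∈ S, G.degree v = k - 1) ∧
    ∀ a b : V, a ∉ S → b ∉ S → (∃ a' ∈ S, G.Adj a' a) → (∃ b' ∈ S, G.Adj b' b) → ¬G.Adj a b

variable {V W : Type*} {k : ℕ} {G : SimpleGraph V} {H : SimpleGraph W}

theorem IsSpecialClique.map_iso [G.LocallyFinite] [H.LocallyFinite] {S : Finset V}
    (hS : IsSpecialClique k G S) (e : G ≃g H) :
    IsSpecialClique k H (S.map e.toEquiv.toEmbedding) := by
  obtain ⟨hcard, hclique, hdeg, hind⟩ := hS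
  refine ⟨by rwa [Finset.card_map], ?_, ?_, ?_⟩
  · rw [Finset.coe_map]
    rintro _ ⟨a, ha, rfl⟩ _ ⟨b, hb, rfl⟩ hab
    exact e.map_adj_iff.2 (hclique ha hb (ne_of_apply_ne e hab))
  · intro w hw
    obtain ⟨v, hv, rfl⟩ := Finset.mem_map.1 hw
    exact (e.degree_eq v).trans (hdeg v hv)
  · have mem_map (w : W) : w ∈ S.map e.toEquiv.toEmbedding ↔ e.symm w ∈ S :=
      Finset.mem_map_equiv
    rintro a b ha hb ⟨a', ha', haa'⟩ ⟨b', hb', hbb'⟩ hab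
    rw [mem_map] at ha hb ha' hb'
    exact hind _ _ ha hb ⟨_, ha', e.symm.map_adj_iff.2 haa'⟩ ⟨_, hb', e.symm.map_adj_iff.2 hbb'⟩
      (e.symm.map_adj_iff.2 hab)

theorem isSpecialClique_univ_erase_top [Fintype V] [DecidableEq V] (hV : Fintype.card V = k)
    (u : V) : IsSpecialClique k (⊤ : SimpleGraph V) (Finset.univ.erase u) := by
  refine ⟨by simp [hV], fun a _ b _ hab => hab, fun v _ => by simp [hV], ?_⟩
  intro a b ha hb _ _ hab
  have eq_of_notMem : ∀ v, v ∉ Finset.univ.erase u → v = u := by simp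
  exact hab.ne ((eq_of_notMem a ha).trans (eq_of_notMem b hb).symm)

end SpecialClique

namespace dhgoGraph

variable {V₁ V₂ : Type*} {G₁ : SimpleGraph V₁} {G₂ : SimpleGraph V₂} {x y : V₁} {z : V₂}
  {P : Set V₂}

theorem adj_inl_inl {a b : V₁} :
    (dhgoGraph G₁ G₂ x y z P).Adj (Sum.inl a) (Sum.inl b) ↔
      (G₁.deleteEdges {s(x, y)}).Adj a b := by
  have := G₁.ne_of_adj (a := a) (b := b)
  simp only [dhgoGraph, fromRel_adj, deleteEdges_adj, Set.mem_singleton_iff, G₁.adj_comm b a,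
    Sym2.eq_swap (a := b), ne_eq, Sum.inl.injEq]
  tauto

theorem adj_inr_inr {v w : {w : V₂ // w ≠ z}} :
    (dhgoGraph G₁ G₂ x y z P).Adj (Sum.inr v) (Sum.inr w) ↔ G₂.Adj v w := by
  have := G₂.ne_of_adj (a := v) (b := w)
  simp only [dhgoGraph, fromRel_adj, G₂.adj_comm w v, ne_eq, Sum.inr.injEq, Subtype.ext_iff]
  tauto

theorem adj_inr_inl {w : {w : V₂ // w ≠ z}} {a : V₁} :
    (dhgoGraph G₁ G₂ x y z P).Adj (Sum.inr w) (Sum.inl a) ↔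
      a = x ∧ (w : V₂) ∈ P ∨ a = y ∧ (w : V₂) ∈ G₂.neighborSet z \ P := by
  simp [dhgoGraph]

variable (G₁ G₂ x y z P) in
/-- The inclusion of `G₁ - xy` in the DHGO-composition. -/
def inlEmbedding : G₁.deleteEdges {s(x, y)} ↪g dhgoGraph G₁ G₂ x y z P where
  toEmbedding := Function.Embedding.inl
  map_rel_iff' := adj_inl_inl

variable (G₁ G₂ x y z P) in
/-- The inclusion of `G₂ - z` in the DHGO-composition. -/
def inrEmbedding :
    G₂.comap (Function.Embedding.subtype (· ≠ z)) ↪g dhgoGraph G₁ G₂ x y z P where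
  toEmbedding := Function.Embedding.inr
  map_rel_iff' := adj_inr_inr

variable (V₁ z) in
/-- The contraction of the `G₁`-side of a DHGO-composition to the split vertex `z` of `G₂`. -/
def contract : V₁ ⊕ {w : V₂ // w ≠ z} → V₂ :=
  Sum.elim (fun _ => z) Subtype.val

theorem contract_eq_coe_iff {v : V₁ ⊕ {w : V₂ // w ≠ z}} {w : {w : V₂ // w ≠ z}} :
    contract V₁ z v = w ↔ v = Sum.inr w := by
  rcases v with a | v
  · simpa [contract] using w.2.symm
  · simp [contract, Subtype.ext_iff]

theorem bijOn_contract_neighborSet (hP : P ⊆ G₂.neighborSet z) (w : {w : V₂ // w ≠ z}) :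
    Set.BijOn (contract V₁ z) ((dhgoGraph G₁ G₂ x y z P).neighborSet (Sum.inr w))
      (G₂.neighborSet w) := by
  refine ⟨?_, ?_, ?_⟩
  · rintro (a | v) h
    · rcases adj_inr_inl.1 ((mem_neighborSet ..).1 h) with ⟨-, hw⟩ | ⟨-, hw, -⟩
      · exact (hP hw).symm
      · exact hw.symm
    · rwa [mem_neighborSet, adj_inr_inr] at h
  · rintro u hu (b | v) hv huv
    · rcases u with a | u
      · rw [mem_neighborSet, adj_inr_inl] at hu hv
        congr 1
        grind
      · exact (contract_eq_coe_iff.1 huv.symm).symm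
    · exact contract_eq_coe_iff.1 huv
  · intro v hv
    by_cases hvz : v = z
    · subst hvz
      by_cases hw : (w : V₂) ∈ P
      · exact ⟨Sum.inl x, (mem_neighborSet ..).2 (adj_inr_inl.2 (.inl ⟨rfl, hw⟩)), rfl⟩
      · exact ⟨Sum.inl y, (mem_neighborSet ..).2 (adj_inr_inl.2 (.inr ⟨rfl, hv.symm, hw⟩)), rfl⟩
    · exact ⟨Sum.inr ⟨v, hvz⟩, (mem_neighborSet ..).2 (adj_inr_inr.2 hv), rfl⟩

theorem adj_contract_of_adj_inr (hP : P ⊆ G₂.neighborSet z) {w : {w : V₂ // w ≠ z}}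
    {v : V₁ ⊕ {w : V₂ // w ≠ z}} (h : (dhgoGraph G₁ G₂ x y z P).Adj (Sum.inr w) v) :
    G₂.Adj w (contract V₁ z v) :=
  (bijOn_contract_neighborSet hP w).mapsTo h

theorem degree_inr (hP : P ⊆ G₂.neighborSet z) (w : {w : V₂ // w ≠ z})
    [Fintype ((dhgoGraph G₁ G₂ x y z P).neighborSet (Sum.inr w))] [Fintype (G₂.neighborSet w)] :
    (dhgoGraph G₁ G₂ x y z P).degree (Sum.inr w) = G₂.degree w := by
  rw [← card_neighborSet_eq_degree, ← card_neighborSet_eq_degree]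
  exact Fintype.card_congr (bijOn_contract_neighborSet hP w).equiv

theorem not_adj_inl_inl_of_adj_inr {a b : V₁} {v w : {w : V₂ // w ≠ z}}
    (ha : (dhgoGraph G₁ G₂ x y z P).Adj (Sum.inr v) (Sum.inl a))
    (hb : (dhgoGraph G₁ G₂ x y z P).Adj (Sum.inr w) (Sum.inl b)) :
    ¬(dhgoGraph G₁ G₂ x y z P).Adj (Sum.inl a) (Sum.inl b) := by
  have mem_pair : ∀ {c u}, (dhgoGraph G₁ G₂ x y z P).Adj (Sum.inr u) (Sum.inl c) →
      c = x ∨ c = y := fun h => (adj_inr_inl.1 h).imp And.left And.left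
  rw [adj_inl_inl, deleteEdges_adj, Set.mem_singleton_iff]
  rintro ⟨hab, hne⟩
  rcases mem_pair ha with rfl | rfl <;> rcases mem_pair hb with rfl | rfl
  · exact hab.ne rfl
  · exact hne rfl
  · exact hne Sym2.eq_swap
  · exact hab.ne rfl

theorem mem_edgeSet_sdiff_iff {e : Sym2 (V₁ ⊕ {w : V₂ // w ≠ z})} :
    e ∈ (dhgoGraph G₁ G₂ x y z P).edgeSet \
        Sym2.map Sum.inl '' (G₁.deleteEdges {s(x, y)}).edgeSet ↔
      ∃ w v, (dhgoGraph G₁ G₂ x y z P).Adj (Sum.inr w) v ∧ e = s(Sum.inr w, v) := by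
  constructor
  · induction e with | _ u v
    rintro ⟨huv, hnot⟩
    rcases u with a | w
    · rcases v with b | w
      · rw [mem_edgeSet, adj_inl_inl] at huv
        exact absurd ⟨s(a, b), huv, rfl⟩ hnot
      · exact ⟨w, Sum.inl a, huv.symm, Sym2.eq_swap⟩
    · exact ⟨w, v, huv, rfl⟩
  · rintro ⟨w, v, hwv, rfl⟩
    refine ⟨hwv, ?_⟩
    rintro ⟨e, -, he⟩
    obtain ⟨a, -, ha⟩ := Sym2.mem_map.1 (he ▸ Sym2.mem_mk_left (Sum.inr w) v)
    exact Sum.inl_ne_inr ha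

theorem bijOn_contract_edgeSet (hP : P ⊆ G₂.neighborSet z) :
    Set.BijOn (Sym2.map (contract V₁ z))
      ((dhgoGraph G₁ G₂ x y z P).edgeSet \
        Sym2.map Sum.inl '' (G₁.deleteEdges {s(x, y)}).edgeSet)
      G₂.edgeSet := by
  refine ⟨?_, ?_, ?_⟩
  · intro e he
    obtain ⟨w, v, hwv, rfl⟩ := mem_edgeSet_sdiff_iff.1 he
    exact adj_contract_of_adj_inr hP hwv
  · intro e he e' he' hee'
    obtain ⟨w, v, hwv, rfl⟩ := mem_edgeSet_sdiff_iff.1 he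
    obtain ⟨w', v', hwv', rfl⟩ := mem_edgeSet_sdiff_iff.1 he'
    rcases Sym2.eq_iff.1 hee' with ⟨hw, hv⟩ | ⟨hw, hv⟩
    · obtain rfl : w = w' := Subtype.ext hw
      rw [(bijOn_contract_neighborSet hP w).injOn hwv hwv' hv]
    · rw [contract_eq_coe_iff.1 hv, contract_eq_coe_iff.1 hw.symm, Sym2.eq_swap]
  · intro e he
    obtain ⟨w, v, hwv, rfl⟩ : ∃ (w : {w : V₂ // w ≠ z}) (v : V₂), G₂.Adj w v ∧ e = s(↑w, v) := by
      induction e with | _ u v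
      by_cases hu : u = z
      · exact ⟨⟨v, fun hv => he.ne (hu.trans hv.symm)⟩, u, he.symm, Sym2.eq_swap⟩
      · exact ⟨⟨u, hu⟩, v, he, rfl⟩
    obtain ⟨v, hv, rfl⟩ :=
      (bijOn_contract_neighborSet (G₁ := G₁) (x := x) (y := y) hP w).surjOn hwv
    exact ⟨s(Sum.inr w, v), mem_edgeSet_sdiff_iff.2 ⟨w, v, hv, rfl⟩, rfl⟩

theorem _root_.IsSpecialClique.dhgoGraph [(dhgoGraph G₁ G₂ x y z P).LocallyFinite]
    [G₂.LocallyFinite] [DecidableEq V₂] {k : ℕ} {S : Finset V₂} (hP : P ⊆ G₂.neighborSet z)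
    (hz : z ∉ S) (hS : IsSpecialClique k G₂ S) :
    IsSpecialClique k (dhgoGraph G₁ G₂ x y z P)
      ((S.subtype (· ≠ z)).map Function.Embedding.inr) := by
  obtain ⟨hcard, hclique, hdeg, hind⟩ := hS
  have ne_z : ∀ v ∈ S, v ≠ z := fun v hv hvz => hz (hvz ▸ hv)
  have mem_iff (v : V₁ ⊕ {w : V₂ // w ≠ z}) :
      v ∈ (S.subtype (· ≠ z)).map Function.Embedding.inr ↔ contract V₁ z v ∈ S := by
    rcases v with a | v <;> simp [contract, hz]
  have outside_neighbor (v : V₁ ⊕ {w : V₂ // w ≠ z})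
      (h : ∃ s ∈ (S.subtype (· ≠ z)).map Function.Embedding.inr,
        (_root_.dhgoGraph G₁ G₂ x y z P).Adj s v) :
      ∃ s ∈ S, G₂.Adj s (contract V₁ z v) := by
    obtain ⟨s, hs, hsv⟩ := h
    obtain ⟨s, hsS, rfl⟩ := Finset.mem_map.1 hs
    exact ⟨s, Finset.mem_subtype.1 hsS, adj_contract_of_adj_inr hP hsv⟩
  refine ⟨?_, ?_, ?_, ?_⟩
  · rw [Finset.card_map, Finset.card_subtype, Finset.filter_true_of_mem ne_z, hcard]
  · rintro _ ha _ hb hab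
    obtain ⟨a, haS, rfl⟩ := Finset.mem_map.1 ha
    obtain ⟨b, hbS, rfl⟩ := Finset.mem_map.1 hb
    refine adj_inr_inr.2 (hclique (Finset.mem_subtype.1 haS) (Finset.mem_subtype.1 hbS) ?_)
    exact fun h => hab (congrArg Sum.inr (Subtype.ext h))
  · intro v hv
    obtain ⟨v, hvS, rfl⟩ := Finset.mem_map.1 hv
    exact (degree_inr hP v).trans (hdeg v (Finset.mem_subtype.1 hvS))
  · intro a b ha hb hSa hSb hab
    have contract_not_adj := hind _ _ (mt (mem_iff a).2 ha) (mt (mem_iff b).2 hb)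
      (outside_neighbor a hSa) (outside_neighbor b hSb)
    rcases a with a | a
    · rcases b with b | b
      · obtain ⟨s, hs, hsa⟩ := hSa
        obtain ⟨t, ht, htb⟩ := hSb
        obtain ⟨s, -, rfl⟩ := Finset.mem_map.1 hs
        obtain ⟨t, -, rfl⟩ := Finset.mem_map.1 ht
        exact not_adj_inl_inl_of_adj_inr hsa htb hab
      · exact contract_not_adj (adj_contract_of_adj_inr hP hab.symm).symm
    · exact contract_not_adj (adj_contract_of_adj_inr hP hab)

section Finite

variable [Fintype V₁] [Fintype V₂] [DecidableEq V₂]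
  [DecidableRel (dhgoGraph G₁ G₂ x y z P).Adj]

theorem card_edgeFinset_add_one [DecidableRel G₁.Adj] [DecidableRel G₂.Adj]
    (hxy : G₁.Adj x y) (hP : P ⊆ G₂.neighborSet z) :
    (dhgoGraph G₁ G₂ x y z P).edgeFinset.card + 1 =
      G₁.edgeFinset.card + G₂.edgeFinset.card := by
  classical
  have ncard_left : (Sym2.map (Sum.inl (β := {w : V₂ // w ≠ z})) ''
      (G₁.deleteEdges {s(x, y)}).edgeSet).ncard + 1 = G₁.edgeFinset.card := by
    rw [Set.ncard_image_of_injective _ (Sym2.map.injective Sum.inl_injective),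
      ← coe_edgeFinset, Set.ncard_coe_finset, card_edgeFinset_deleteEdges_singleton_add_one hxy]
  have left_subset : Sym2.map Sum.inl '' (G₁.deleteEdges {s(x, y)}).edgeSet ⊆
      (dhgoGraph G₁ G₂ x y z P).edgeSet := by
    rintro _ ⟨e, he, rfl⟩
    exact (inlEmbedding G₁ G₂ x y z P).toHom.map_mem_edgeSet he
  have h := Set.ncard_sdiff_add_ncard_of_subset left_subset
  rw [(bijOn_contract_edgeSet hP).ncard_eq, ← coe_edgeFinset G₂, ← coe_edgeFinset (dhgoGraph ..),
    Set.ncard_coe_finset, Set.ncard_coe_finset] at h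
  omega

variable [DecidableEq V₁] (k : ℕ)

theorem potential_univ [DecidableRel G₁.Adj] [DecidableRel G₂.Adj]
    (hxy : G₁.Adj x y) (hP : P ⊆ G₂.neighborSet z) :
    potential k (dhgoGraph G₁ G₂ x y z P) Finset.univ =
      potential k G₁ Finset.univ + potential k G₂ Finset.univ - (k : ℤ) * ((k : ℤ) - 3) := by
  have card_vert : (Fintype.card (V₁ ⊕ {w : V₂ // w ≠ z}) : ℤ) + 1 =
      Fintype.card V₁ + Fintype.card V₂ := by
    have := Fintype.card_pos_iff.2 ⟨z⟩
    rw [Fintype.card_sum, Fintype.card_subtype_compl, Fintype.card_subtype_eq]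
    omega
  have card_edge := congrArg (Nat.cast : ℕ → ℤ) (card_edgeFinset_add_one hxy hP)
  push_cast at card_edge
  rw [_root_.potential_univ, _root_.potential_univ, _root_.potential_univ]
  linear_combination
    ((k : ℤ) + 1) * ((k : ℤ) - 2) * card_vert - 2 * ((k : ℤ) - 1) * card_edge

theorem potential_map_inl [DecidableRel G₁.Adj] (hxy : G₁.Adj x y) :
    potential k (dhgoGraph G₁ G₂ x y z P) (Finset.univ.map Function.Embedding.inl) =
      potential k G₁ Finset.univ + 2 * ((k : ℤ) - 1) := by
  rw [← potential_univ_deleteEdges_singleton k ((mem_edgeSet G₁).2 hxy)]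
  exact potential_map k (inlEmbedding G₁ G₂ x y z P) Finset.univ

theorem potential_map_inr [DecidableRel G₂.Adj] (W : Finset {w : V₂ // w ≠ z}) :
    potential k (dhgoGraph G₁ G₂ x y z P) (W.map Function.Embedding.inr) =
      potential k G₂ (W.map (Function.Embedding.subtype (· ≠ z))) :=
  (potential_map k (inrEmbedding G₁ G₂ x y z P) W).trans
    (potential_map k (.comap (Function.Embedding.subtype (· ≠ z)) G₂) W).symm

end Finite

end dhgoGraph

namespace HasHighPotentialAvoiding

variable {V₁ V₂ : Type*} [Fintype V₁] [DecidableEq V₁] [Fintype V₂] [DecidableEq V₂]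
  {G₁ : SimpleGraph V₁} {G₂ : SimpleGraph V₂} {x y : V₁} {z : V₂} {P : Set V₂}
  [DecidableRel (dhgoGraph G₁ G₂ x y z P).Adj] {k : ℕ}

theorem exists_eq_inl [DecidableRel G₁.Adj] {u : V₁ ⊕ {w : V₂ // w ≠ z}}
    (hu : HasHighPotentialAvoiding k (dhgoGraph G₁ G₂ x y z P) u) (hxy : G₁.Adj x y)
    (hG₁ : potential k G₁ Finset.univ = (k : ℤ) * ((k : ℤ) - 3)) : ∃ a, u = Sum.inl a := by
  rcases u with a | w
  · exact ⟨a, rfl⟩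
  · have := Fintype.one_lt_card_iff.2 ⟨x, y, hxy.ne⟩
    have high := hu (Finset.univ.map Function.Embedding.inl) (by simp)
      (by rwa [Finset.card_map, Finset.card_univ])
    rw [dhgoGraph.potential_map_inl k hxy, hG₁] at high
    linarith

theorem of_dhgoGraph_inl [DecidableRel G₂.Adj] {a : V₁}
    (ha : HasHighPotentialAvoiding k (dhgoGraph G₁ G₂ x y z P) (Sum.inl a)) :
    HasHighPotentialAvoiding k G₂ z := by
  intro W hzW hW
  have map_subtype : (W.subtype (· ≠ z)).map (Function.Embedding.subtype _) = W :=
    Finset.subtype_map_of_mem fun w hw hwz => hzW (hwz ▸ hw)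
  have high := ha ((W.subtype (· ≠ z)).map Function.Embedding.inr) (by simp)
  rw [dhgoGraph.potential_map_inr, map_subtype, Finset.card_map,
    ← Finset.card_map (Function.Embedding.subtype _), map_subtype] at high
  exact high hW

end HasHighPotentialAvoiding

theorem IsOreFin.potential_univ {k n : ℕ} {G : SimpleGraph (Fin n)} [inst : DecidableRel G.Adj]
    (hG : IsOreFin k G) : potential k G Finset.univ = (k : ℤ) * ((k : ℤ) - 3) := by
  induction hG generalizing inst with
  | complete h =>
    obtain ⟨e⟩ := h
    rw [potential_univ_congr k e, potential_univ_top, Fintype.card_fin]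
    ring
  | comp _ _ h ih₁ ih₂ =>
    classical
    obtain ⟨x, y, z, P, hxy, hP, -, -, ⟨e⟩⟩ := h
    rw [potential_univ_congr k e, dhgoGraph.potential_univ k hxy hP, ih₁, ih₂]
    ring

theorem exists_isSpecialClique_of_iso {V W : Type*} {k : ℕ} {G : SimpleGraph V}
    {H : SimpleGraph W} [G.LocallyFinite] [H.LocallyFinite] (e : G ≃g H) {u : V}
    (h : ∃ S, e u ∉ S ∧ IsSpecialClique k H S) : ∃ S, u ∉ S ∧ IsSpecialClique k G S := by
  obtain ⟨S, huS, hS⟩ := h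
  exact ⟨_, fun hu => huS (Finset.mem_map_equiv.1 hu), hS.map_iso e.symm⟩

theorem IsOreFin.exists_isSpecialClique {k n : ℕ} {G : SimpleGraph (Fin n)}
    [inst : DecidableRel G.Adj] (hG : IsOreFin k G) {u : Fin n}
    (hu : HasHighPotentialAvoiding k G u) : ∃ S, u ∉ S ∧ IsSpecialClique k G S := by
  induction hG generalizing inst with
  | complete h =>
    obtain ⟨e⟩ := h
    exact exists_isSpecialClique_of_iso e
      ⟨_, Finset.notMem_erase _ _, isSpecialClique_univ_erase_top (Fintype.card_fin k) (e u)⟩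
  | comp h₁ _ h _ ih₂ =>
    classical
    obtain ⟨x, y, z, P, hxy, hP, -, -, ⟨e⟩⟩ := h
    refine exists_isSpecialClique_of_iso e ?_
    have heu := hu.map_iso e
    obtain ⟨a, ha⟩ := heu.exists_eq_inl hxy h₁.potential_univ
    rw [ha] at heu ⊢
    obtain ⟨S, hzS, hS⟩ := ih₂ heu.of_dhgoGraph_inl
    exact ⟨_, by simp, hS.dhgoGraph hP hzS⟩

theorem kOre_special_clique_general {V : Type*} [Fintype V] [DecidableEq V] {k : ℕ}
    {G : SimpleGraph V} [DecidableRel G.Adj] (hG : IsKOre k G) {u : V}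
    (hu : HasHighPotentialAvoiding k G u) : ∃ S, u ∉ S ∧ IsSpecialClique k G S := by
  classical
  obtain ⟨n, H, hH, ⟨e⟩⟩ := hG
  exact exists_isSpecialClique_of_iso e (hH.exists_isSpecialClique (hu.map_iso e))

/-- **Claim.** Let `k ≥ 4`, let `G` be a `k`-Ore graph, and let `u ∈ V(G)` be such that
`ρ_{k,G}(W) > (k+1)(k-2)` for every `W ⊆ V(G) - u` with `|W| ≥ 2`. Then `G` contains a
`(k-1)`-clique `S` all of whose vertices have degree exactly `k-1` in `G`, such that the set
`N(S) - S` of outside neighbors of `S` is an independent set. -/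
theorem kOre_special_clique {V : Type*} [Fintype V] [DecidableEq V] (k : ℕ) (hk : 4 ≤ k)
    (G : SimpleGraph V) [DecidableRel G.Adj] (hG : IsKOre k G) (u : V)
    (hpot : ∀ W : Finset V, u ∉ W → 2 ≤ W.card →
      ((k : ℤ) + 1) * ((k : ℤ) - 2) < potential k G W) :
    ∃ S : Finset V, S.card = k - 1 ∧ G.IsClique (S : Set V) ∧
      (∀ v ∈ S, G.degree v = k - 1) ∧
      ∀ a b : V, a ∉ S → b ∉ S → (∃ a' ∈ S, G.Adj a' a) → (∃ b' ∈ S, G.Adj b' b) →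
        ¬G.Adj a b := by
  obtain ⟨S, -, hS⟩ := kOre_special_clique_general hG hpot
  exact ⟨S, hS⟩
end

section
/- Let k ≥ 4, let G be a k-critical graph, and let A and B be disjoint subsets of V(G) such that A or B is an independent set, every vertex of A has degree k−1 in G, every vertex of B has degree k in G, and |A| + |B| ≥ 3. Then the number of edges of G with one endpoint in A and the other in B satisfies both e(A,B) ≤ 2(|A|+|B|) − 4 and e(A,B) ≤ |A| + 3|B| − 3. -/
open SimpleGraph

/-!
By deleting, one at a time, vertices with few neighbours on the other side, it suffices to exclude
that every vertex of `A` has at least `P` neighbours in `B` and every vertex of `B` at least `Q`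
neighbours in `A`, for `(P, Q) = (3, 3)` and `(P, Q) = (2, 4)`. In that situation Hall's theorem
reserves one cross edge for each vertex of `A` and two for each vertex of `B`, all distinct. Replace
every edge of `G` by two opposite arcs and delete the arcs leaving each vertex along its reserved
edges. Each edge keeps an arc, and every vertex of `A ∪ B` has fewer than `k - 1` outgoing arcs. As
one of `A` and `B` is independent and the digraph is symmetric off it, the digraph is
kernel-perfect. A `(k - 1)`-colouring of `G - (A ∪ B)`, which exists by criticality, therefore
extends to `G`, because kernels yield list colourings from lists longer than the out-degrees.
-/

open scoped Finset

section Kernel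

variable {V C : Type*} {D : V → V → Prop}

/-- `K` is a kernel of the digraph induced by `D` on `S`: no arc joins two vertices of `K`, and
every vertex of `S` outside `K` has an arc into `K`. -/
structure IsKernel (D : V → V → Prop) (S K : Finset V) : Prop where
  subset : K ⊆ S
  indep : ∀ u ∈ K, ∀ v ∈ K, ¬D u v
  absorbing : ∀ v ∈ S, v ∉ K → ∃ w ∈ K, D v w

/-- A digraph, given by its arc relation `D`, is kernel-perfect if each of its finite induced
subdigraphs has a kernel. -/
def IsKernelPerfect (D : V → V → Prop) : Prop :=
  ∀ S : Finset V, ∃ K, IsKernel D S K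

theorem IsKernel.insert [DecidableEq V] [DecidableRel D] {S K : Finset V} {r : V}
    (hK : IsKernel D {v ∈ S | v ≠ r ∧ ¬D v r} K) (hrS : r ∈ S) (hrr : ¬D r r)
    (hrK : ∀ v ∈ K, ¬D r v) : IsKernel D S (insert r K) where
  subset := Finset.insert_subset hrS (hK.subset.trans (Finset.filter_subset _ _))
  indep := by
    have hKr : ∀ v ∈ K, ¬D v r := fun v hv => (Finset.mem_filter.1 (hK.subset hv)).2.2
    simp only [Finset.forall_mem_insert]
    exact ⟨⟨hrr, hrK⟩, fun v hv => ⟨hKr v hv, hK.indep v hv⟩⟩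
  absorbing := by
    intro v hvS hv
    rw [Finset.mem_insert, not_or] at hv
    rw [Finset.exists_mem_insert]
    by_cases hvr : D v r
    · exact .inl hvr
    · exact .inr (hK.absorbing v (Finset.mem_filter.2 ⟨hvS, hv.1, hvr⟩) hv.2)

theorem isKernelPerfect_of_symm_off {I : Set V} (hirr : ∀ v, ¬D v v)
    (hI : ∀ u ∈ I, ∀ v ∈ I, ¬D u v) (hsymm : ∀ u ∉ I, ∀ v ∉ I, D u v → D v u) :
    IsKernelPerfect D := by
  classical
  intro S
  induction S using Finset.strongInduction with
  | H S ih =>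
    by_cases h : ∃ r ∈ S, r ∉ I ∧ ∀ w ∈ S, w ∈ I → ¬D r w
    · obtain ⟨r, hrS, hrI, hr⟩ := h
      obtain ⟨K, hK⟩ := ih {v ∈ S | v ≠ r ∧ ¬D v r}
        (Finset.filter_ssubset.2 ⟨r, hrS, fun h => h.1 rfl⟩)
      refine ⟨insert r K, hK.insert hrS (hirr r) fun v hv hrv => ?_⟩
      obtain ⟨hvS, -, hvr⟩ := Finset.mem_filter.1 (hK.subset hv)
      by_cases hvI : v ∈ I
      · exact hr v hvS hvI hrv
      · exact hvr (hsymm r hrI v hvI hrv)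
    · push Not at h
      refine ⟨{v ∈ S | v ∈ I}, Finset.filter_subset _ _, fun u hu v hv => ?_, fun v hvS hv => ?_⟩
      · exact hI u (Finset.mem_filter.1 hu).2 v (Finset.mem_filter.1 hv).2
      · obtain ⟨w, hwS, hwI, hvw⟩ := h v hvS fun hvI => hv (Finset.mem_filter.2 ⟨hvS, hvI⟩)
        exact ⟨w, Finset.mem_filter.2 ⟨hwS, hwI⟩, hvw⟩

theorem IsKernel.card_out_sdiff_lt_card_erase [DecidableEq V] [DecidableEq C] [DecidableRel D]
    {S K : Finset V} {L : V → Finset C} {i : C} (hK : IsKernel D {v ∈ S | i ∈ L v} K) {v : V}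
    (hv : v ∈ S \ K) (hL : #{w ∈ S | D v w} < #(L v)) :
    #{w ∈ S \ K | D v w} < #((L v).erase i) := by
  obtain ⟨hvS, hvK⟩ := Finset.mem_sdiff.1 hv
  have hsub : {w ∈ S \ K | D v w} ⊆ {w ∈ S | D v w} :=
    Finset.filter_subset_filter _ Finset.sdiff_subset
  by_cases hi : i ∈ L v
  · obtain ⟨w, hwK, hvw⟩ := hK.absorbing v (Finset.mem_filter.2 ⟨hvS, hi⟩) hvK
    have hwS : w ∈ S := (Finset.mem_filter.1 (hK.subset hwK)).1
    have hlt : #{w ∈ S \ K | D v w} < #{w ∈ S | D v w} :=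
      Finset.card_lt_card <| (Finset.ssubset_iff_of_subset hsub).2
        ⟨w, Finset.mem_filter.2 ⟨hwS, hvw⟩,
          fun hw => (Finset.mem_sdiff.1 (Finset.mem_filter.1 hw).1).2 hwK⟩
    rw [Finset.card_erase_of_mem hi]
    omega
  · rw [Finset.erase_eq_of_notMem hi]
    exact (Finset.card_le_card hsub).trans_lt hL

/-- Bondy, Boppana and Siegel: give one colour to a kernel of the set of vertices having it in
their lists; every other such vertex loses a colour but also an out-neighbour. -/
theorem IsKernelPerfect.exists_listColoring_extending [DecidableRel D] (hD : IsKernelPerfect D)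
    (c₀ : V → C) (S : Finset V) (L : V → Finset C) (hL : ∀ v ∈ S, #{w ∈ S | D v w} < #(L v)) :
    ∃ c : V → C, (∀ v ∉ S, c v = c₀ v) ∧ (∀ v ∈ S, c v ∈ L v) ∧
      ∀ u ∈ S, ∀ v ∈ S, D u v → c u ≠ c v := by
  classical
  induction S using Finset.strongInduction generalizing L with
  | H S ih =>
    obtain rfl | ⟨v₀, hv₀⟩ := S.eq_empty_or_nonempty
    · exact ⟨c₀, by simp⟩
    obtain ⟨i, hi⟩ := Finset.card_pos.1 ((Nat.zero_le _).trans_lt (hL v₀ hv₀))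
    obtain ⟨K, hK⟩ := hD {v ∈ S | i ∈ L v}
    have hKS : ∀ v ∈ K, v ∈ S ∧ i ∈ L v := fun v hv => Finset.mem_filter.1 (hK.subset hv)
    have hKne : K.Nonempty := by
      by_cases hv₀K : v₀ ∈ K
      · exact ⟨v₀, hv₀K⟩
      · obtain ⟨w, hw, -⟩ := hK.absorbing v₀ (Finset.mem_filter.2 ⟨hv₀, hi⟩) hv₀K
        exact ⟨w, hw⟩
    obtain ⟨c, hc₀, hcL, hcD⟩ := ih (S \ K)
      (Finset.sdiff_ssubset (fun v hv => (hKS v hv).1) hKne) (fun v => (L v).erase i)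
      fun v hv => hK.card_out_sdiff_lt_card_erase hv (hL v (Finset.mem_sdiff.1 hv).1)
    have hci : ∀ v ∈ S, v ∉ K → c v ≠ i := fun v hv hvK =>
      Finset.ne_of_mem_erase (hcL v (Finset.mem_sdiff.2 ⟨hv, hvK⟩))
    refine ⟨fun v => if v ∈ K then i else c v, fun v hv => ?_, fun v hv => ?_,
      fun u hu v hv huv => ?_⟩ <;> dsimp only
    · rw [if_neg fun hvK => hv (hKS v hvK).1]
      exact hc₀ v fun h => hv (Finset.mem_sdiff.1 h).1
    · split_ifs with hvK
      · exact (hKS v hvK).2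
      · exact Finset.mem_of_mem_erase (hcL v (Finset.mem_sdiff.2 ⟨hv, hvK⟩))
    · split_ifs with huK hvK hvK
      · exact absurd huv (hK.indep u huK v hvK)
      · exact (hci v hv hvK).symm
      · exact hci u hu huK
      · exact hcD u (Finset.mem_sdiff.2 ⟨hu, huK⟩) v (Finset.mem_sdiff.2 ⟨hv, hvK⟩) huv

end Kernel

theorem exists_pairwise_disjoint_subset_card_eq {ι α : Type*} [DecidableEq α]
    (t : ι → Finset α) (w : ι → ℕ) (h : ∀ s : Finset ι, ∑ i ∈ s, w i ≤ #(s.biUnion t)) :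
    ∃ T : ι → Finset α, (∀ i, T i ⊆ t i) ∧ (∀ i, #(T i) = w i) ∧
      Pairwise (Function.onFun Disjoint T) := by
  classical
  have hall : ∀ s : Finset (Σ i, Fin (w i)), #s ≤ #(s.biUnion fun x => t x.1) := fun s =>
    calc #s ≤ #((s.image Sigma.fst).sigma fun i => (Finset.univ : Finset (Fin (w i)))) :=
          Finset.card_le_card fun x hx =>
            Finset.mem_sigma.2 ⟨Finset.mem_image_of_mem _ hx, Finset.mem_univ _⟩
      _ = ∑ i ∈ s.image Sigma.fst, w i := by simp only [Finset.card_sigma, Finset.card_fin]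
      _ ≤ #((s.image Sigma.fst).biUnion t) := h _
      _ = #(s.biUnion fun x => t x.1) := by rw [Finset.image_biUnion]
  obtain ⟨f, hf, hft⟩ := (Finset.all_card_le_biUnion_card_iff_exists_injective _).1 hall
  refine ⟨fun i => Finset.univ.image fun j : Fin (w i) => f ⟨i, j⟩, fun i => ?_, fun i => ?_,
    fun i i' hii' => ?_⟩
  · exact Finset.image_subset_iff.2 fun j _ => hft ⟨i, j⟩
  · exact (Finset.card_image_of_injective _ (hf.comp sigma_mk_injective)).trans (Finset.card_fin _)
  · rw [Function.onFun, Finset.disjoint_left]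
    simp only [Finset.mem_image, Finset.mem_univ, true_and]
    rintro _ ⟨j, rfl⟩ ⟨j', hj'⟩
    exact hii' (congrArg Sigma.fst (hf hj')).symm

section Incidence

variable {V : Type*} [DecidableEq V] {G H : SimpleGraph V}

theorem mul_card_inter_le_card_biUnion_incidenceFinset [H.LocallyFinite] {d : ℕ} {I : Finset V}
    (hI : H.IsIndepSet (I : Set V)) (hd : ∀ v ∈ I, d ≤ H.degree v) (s : Finset V) :
    d * #(s ∩ I) ≤ #(s.biUnion fun v => H.incidenceFinset v) := by
  have hdisj : ((s ∩ I : Finset V) : Set V).PairwiseDisjoint fun v => H.incidenceFinset v := by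
    intro u hu v hv huv
    rw [Function.onFun, ← Finset.disjoint_coe, coe_incidenceFinset, coe_incidenceFinset,
      Set.disjoint_iff_inter_eq_empty]
    exact H.incidenceSet_inter_incidenceSet_of_not_adj
      (hI (Finset.mem_inter.1 hu).2 (Finset.mem_inter.1 hv).2 huv) huv
  calc d * #(s ∩ I) = #(s ∩ I) • d := by rw [smul_eq_mul, mul_comm]
    _ ≤ ∑ v ∈ s ∩ I, #(H.incidenceFinset v) := Finset.card_nsmul_le_sum _ _ _ fun v hv => by
        rw [card_incidenceFinset_eq_degree]
        exact hd v (Finset.mem_inter.1 hv).2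
    _ = #((s ∩ I).biUnion fun v => H.incidenceFinset v) := (Finset.card_biUnion hdisj).symm
    _ ≤ #(s.biUnion fun v => H.incidenceFinset v) := Finset.card_le_card <|
        Finset.biUnion_subset_biUnion_of_subset_left _ Finset.inter_subset_left

omit [DecidableEq V] in
theorem isIndepSet_of_isBipartiteWith {A B : Set V} (hH : H.IsBipartiteWith A B) :
    H.IsIndepSet A := fun _ hu _ hv _ huv =>
  Set.disjoint_left.1 hH.disjoint hv (hH.mem_of_mem_adj hu huv)

theorem exists_disjoint_incident_edges [H.LocallyFinite] {A B : Finset V}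
    (hH : H.IsBipartiteWith (A : Set V) (B : Set V)) {P Q : ℕ} (hP : 0 < P) (hQ : 0 < Q)
    (hA : ∀ a ∈ A, P ≤ H.degree a) (hB : ∀ b ∈ B, Q ≤ H.degree b) {α β : ℕ}
    (hPQ : α * Q + β * P ≤ P * Q) :
    ∃ T : V → Finset (Sym2 V), (∀ v, T v ⊆ H.incidenceFinset v) ∧
      Pairwise (Function.onFun Disjoint T) ∧ (∀ a ∈ A, #(T a) = α) ∧ ∀ b ∈ B, #(T b) = β := by
  have hAB : Disjoint A B := Finset.disjoint_coe.1 hH.disjoint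
  have hall : ∀ s : Finset V, ∑ v ∈ s, ((if v ∈ A then α else 0) + if v ∈ B then β else 0) ≤
      #(s.biUnion fun v => H.incidenceFinset v) := by
    intro s
    have hsA := mul_card_inter_le_card_biUnion_incidenceFinset
      (isIndepSet_of_isBipartiteWith hH) hA s
    have hsB := mul_card_inter_le_card_biUnion_incidenceFinset
      (isIndepSet_of_isBipartiteWith hH.symm) hB s
    set e := #(s.biUnion fun v => H.incidenceFinset v)
    simp only [Finset.sum_add_distrib, Finset.sum_ite_mem, Finset.sum_const, smul_eq_mul]
    refine Nat.le_of_mul_le_mul_left ?_ (Nat.mul_pos hP hQ)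
    calc P * Q * (#(s ∩ A) * α + #(s ∩ B) * β)
        = α * Q * (P * #(s ∩ A)) + β * P * (Q * #(s ∩ B)) := by ring
      _ ≤ α * Q * e + β * P * e := by gcongr
      _ = (α * Q + β * P) * e := by ring
      _ ≤ P * Q * e := by gcongr
  obtain ⟨T, hTH, hcard, hdisj⟩ := exists_pairwise_disjoint_subset_card_eq _ _ hall
  refine ⟨T, hTH, hdisj, fun a ha => ?_, fun b hb => ?_⟩
  · rw [hcard, if_pos ha, if_neg (Finset.disjoint_left.1 hAB ha), add_zero]
  · rw [hcard, if_neg (Finset.disjoint_right.1 hAB hb), if_pos hb, zero_add]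

/-- The arc relation obtained from `G` by replacing every edge by two opposite arcs and then
deleting, for each vertex `v`, the arcs leaving `v` along the edges in `T v`. -/
def deleteOutArcs (G : SimpleGraph V) (T : V → Finset (Sym2 V)) (u v : V) : Prop :=
  G.Adj u v ∧ s(u, v) ∉ T u

variable {T : V → Finset (Sym2 V)}

omit [DecidableEq V] in
theorem isKernelPerfect_deleteOutArcs {I : Set V} (hI : G.IsIndepSet I) (hHI : H.IsVertexCover I)
    (hT : ∀ v, ∀ e ∈ T v, e ∈ H.edgeSet) : IsKernelPerfect (deleteOutArcs G T) := by
  refine isKernelPerfect_of_symm_off (I := I) (fun v hv => G.irrefl hv.1)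
    (fun u hu v hv huv => hI hu hv huv.1.ne huv.1) fun u hu v hv huv => ⟨huv.1.symm, fun hvu => ?_⟩
  exact (hHI (hT v _ hvu)).elim hv hu

theorem card_out_deleteOutArcs_add_card_le [G.LocallyFinite] [DecidableRel (deleteOutArcs G T)]
    {v : V} (hT : T v ⊆ G.incidenceFinset v) :
    #{w ∈ G.neighborFinset v | deleteOutArcs G T v w} + #(T v) ≤ G.degree v := by
  have hle : #{w ∈ G.neighborFinset v | deleteOutArcs G T v w} ≤ #(G.incidenceFinset v \ T v) := by
    refine Finset.card_le_card_of_injOn (fun w => s(v, w)) (fun w hw => ?_)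
      fun w _ w' _ h => Sym2.congr_right.1 h
    obtain ⟨hvw, hTw⟩ := (Finset.mem_filter.1 hw).2
    exact Finset.mem_sdiff.2 ⟨(mem_incidenceFinset ..).2 ((mem_incidenceSet ..).2 hvw), hTw⟩
  have hsdiff := Finset.card_sdiff_add_card_eq_card hT
  rw [card_incidenceFinset_eq_degree] at hsdiff
  omega

end Incidence

section Critical

variable {V : Type*} {G : SimpleGraph V} {k : ℕ}

theorem colorable_of_isKernelPerfect [G.LocallyFinite] {D : V → V → Prop}
    [DecidableRel D] (hD : IsKernelPerfect D) (hDG : ∀ u v, D u v → G.Adj u v) {S : Finset V}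
    (hin : ∀ u ∈ S, ∀ v ∈ S, G.Adj u v → D u v ∨ D v u)
    (hout : ∀ u ∈ S, ∀ v ∉ S, G.Adj u v → D u v) {m : ℕ}
    (hdeg : ∀ v ∈ S, #{w ∈ G.neighborFinset v | D v w} < m)
    (hcol : (G.induce (S : Set V)ᶜ).spanningCoe.Colorable m) : G.Colorable m := by
  classical
  obtain ⟨c₀⟩ := hcol
  let N (v : V) : Finset V := {w ∈ G.neighborFinset v | w ∉ S}
  have hL : ∀ v ∈ S, #{w ∈ S | D v w} < #(Finset.univ \ (N v).image c₀) := by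
    intro v hv
    have hsum : #{w ∈ S | D v w} + #(N v) ≤ #{w ∈ G.neighborFinset v | D v w} := by
      have hdisj : Disjoint {w ∈ S | D v w} (N v) := Finset.disjoint_left.2 fun w hw hwN =>
        (Finset.mem_filter.1 hwN).2 (Finset.mem_filter.1 hw).1
      rw [← Finset.card_union_of_disjoint hdisj]
      refine Finset.card_le_card (Finset.union_subset (fun w hw => ?_) fun w hw => ?_)
      · have hvw := (Finset.mem_filter.1 hw).2
        exact Finset.mem_filter.2 ⟨(G.mem_neighborFinset v w).2 (hDG v w hvw), hvw⟩
      · obtain ⟨hvw, hwS⟩ := Finset.mem_filter.1 hw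
        exact Finset.mem_filter.2 ⟨hvw, hout v hv w hwS ((G.mem_neighborFinset v w).1 hvw)⟩
    have himage : #((N v).image c₀) ≤ #(N v) := Finset.card_image_le
    have hlist := Finset.card_sdiff_add_card_eq_card (Finset.subset_univ ((N v).image c₀))
    rw [Finset.card_fin] at hlist
    have := hdeg v hv
    omega
  obtain ⟨c, hc₀, hcL, hcD⟩ := hD.exists_listColoring_extending c₀ S _ hL
  have hcross : ∀ u ∈ S, ∀ v ∉ S, G.Adj u v → c u ≠ c v := fun u hu v hv huv h =>
    (Finset.mem_sdiff.1 (hcL u hu)).2 <| Finset.mem_image.2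
      ⟨v, Finset.mem_filter.2 ⟨(G.mem_neighborFinset u v).2 huv, hv⟩, by rw [h, hc₀ v hv]⟩
  refine ⟨Coloring.mk c fun {u v} huv => ?_⟩
  by_cases hu : u ∈ S <;> by_cases hv : v ∈ S
  · exact (hin u hu v hv huv).elim (hcD u hu v hv) fun h => (hcD v hv u hu h).symm
  · exact hcross u hu v hv huv
  · exact (hcross v hv u hu huv.symm).symm
  · rw [hc₀ u hu, hc₀ v hv]
    exact c₀.valid (by simpa [hu, hv] using huv)

theorem IsKCritical.not_colorable_pred [Nonempty V] (hG : IsKCritical k G) :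
    ¬G.Colorable (k - 1) := by
  intro hcol
  have hle : k ≤ k - 1 := by exact_mod_cast hG.1 ▸ hcol.chromaticNumber_le
  have hk : G.chromaticNumber = 0 := by rw [hG.1, show k = 0 by omega, Nat.cast_zero]
  exact not_isEmpty_of_nonempty V (chromaticNumber_eq_zero_iff.1 hk)

theorem IsKCritical.colorable_induce_compl (hG : IsKCritical k G) {S : Set V} {u v : V}
    (hu : u ∈ S) (huv : G.Adj u v) : (G.induce Sᶜ).spanningCoe.Colorable (k - 1) := by
  refine hG.2 _ (lt_of_le_of_ne (G.spanningCoe_induce_le _) fun h => ?_)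
  rw [← h] at huv
  simp [hu] at huv

theorem IsKCritical.exists_add_card_le_degree [DecidableEq V] [G.LocallyFinite]
    (hG : IsKCritical k G) {T : V → Finset (Sym2 V)} (hker : IsKernelPerfect (deleteOutArcs G T))
    (hTG : ∀ v, T v ⊆ G.incidenceFinset v) (hTdisj : Pairwise (Function.onFun Disjoint T))
    {S : Finset V} (hTS : ∀ u v, s(u, v) ∈ T u → v ∈ S) (hS : ∃ u ∈ S, ∃ v, G.Adj u v) :
    ∃ v ∈ S, k - 1 + #(T v) ≤ G.degree v := by
  classical
  by_contra! hlt
  obtain ⟨x, hxS, y, hxy⟩ := hS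
  have : Nonempty V := ⟨x⟩
  refine hG.not_colorable_pred (colorable_of_isKernelPerfect hker (fun u v h => h.1) (S := S)
    (fun u _ v _ huv => ?_) (fun u _ v hv huv => ⟨huv, fun h => hv (hTS u v h)⟩) (fun v hv => ?_)
    (hG.colorable_induce_compl (Finset.mem_coe.2 hxS) hxy))
  · by_cases hu : s(u, v) ∈ T u
    · refine .inr ⟨huv.symm, fun hv => Finset.disjoint_left.1 (hTdisj huv.ne) hu ?_⟩
      rwa [Sym2.eq_swap]
    · exact .inl ⟨huv, hu⟩
  · have := card_out_deleteOutArcs_add_card_le (hTG v)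
    have := hlt v hv
    omega

/-- The condition on `P` and `Q` is `1 / P + 2 / Q ≤ 1`: if each edge of `H` gives `1 / P` to its
end in `A` and `2 / Q` to its end in `B`, then each vertex of `A` gets at least `1` and each vertex
of `B` at least `2`, which is Hall's condition. -/
theorem IsKCritical.exists_degree_lt_of_isBipartiteWith [DecidableEq V] [G.LocallyFinite]
    (hG : IsKCritical k G) {H : SimpleGraph V} [H.LocallyFinite] (hHG : H ≤ G) {A B : Finset V}
    (hH : H.IsBipartiteWith (A : Set V) (B : Set V)) (hne : (A ∪ B).Nonempty)
    (hind : G.IsIndepSet (A : Set V) ∨ G.IsIndepSet (B : Set V))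
    (hA : ∀ a ∈ A, G.degree a ≤ k - 1) (hB : ∀ b ∈ B, G.degree b ≤ k) {P Q : ℕ} (hP : 0 < P)
    (hPQ : Q + 2 * P ≤ P * Q) :
    (∃ a ∈ A, H.degree a < P) ∨ ∃ b ∈ B, H.degree b < Q := by
  by_contra! ⟨hHA, hHB⟩
  have hQ : 0 < Q := Nat.pos_of_ne_zero fun h => by
    subst h
    omega
  obtain ⟨T, hTH, hTdisj, hTA, hTB⟩ := exists_disjoint_incident_edges hH hP hQ hHA hHB
    (α := 1) (β := 2) (by omega)
  have hTE : ∀ v, ∀ e ∈ T v, e ∈ H.edgeSet := fun v e he =>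
    ((mem_incidenceFinset ..).1 (hTH v he)).1
  have hTG : ∀ v, T v ⊆ G.incidenceFinset v := fun v e he => (mem_incidenceFinset ..).2
    ⟨edgeSet_mono hHG (hTE v e he), ((mem_incidenceFinset ..).1 (hTH v he)).2⟩
  have hker : IsKernelPerfect (deleteOutArcs G T) := hind.elim
    (fun hI => isKernelPerfect_deleteOutArcs hI
      (fun u v h => (hH.mem_of_adj h).imp And.left And.right) hTE)
    (fun hI => isKernelPerfect_deleteOutArcs hI
      (fun u v h => (hH.mem_of_adj h).symm.imp And.left And.right) hTE)
  have hTS : ∀ u v, s(u, v) ∈ T u → v ∈ A ∪ B := fun u v h =>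
    Finset.mem_union.2 ((hH.mem_of_adj (hTE u _ h)).symm.imp And.right And.right)
  have hS : ∃ u ∈ A ∪ B, ∃ v, G.Adj u v := by
    obtain ⟨x, hx⟩ := hne
    have hpos : 0 < H.degree x := (Finset.mem_union.1 hx).elim
      (fun hxA => hP.trans_le (hHA x hxA)) fun hxB => hQ.trans_le (hHB x hxB)
    obtain ⟨y, hxy⟩ := (H.degree_pos_iff_exists_adj x).1 hpos
    exact ⟨x, hx, y, hHG hxy⟩
  obtain ⟨v, hv, hle⟩ := hG.exists_add_card_le_degree hker hTG hTdisj hTS hS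
  obtain hvA | hvB := Finset.mem_union.1 hv
  · have := hA v hvA
    rw [hTA v hvA] at hle
    omega
  · have := hB v hvB
    rw [hTB v hvB] at hle
    omega

theorem IsKCritical.exists_card_neighbors_lt [DecidableEq V] [G.LocallyFinite]
    [DecidableRel G.Adj] (hG : IsKCritical k G) {A B : Finset V} (hAB : Disjoint A B)
    (hne : (A ∪ B).Nonempty) (hind : G.IsIndepSet (A : Set V) ∨ G.IsIndepSet (B : Set V))
    (hA : ∀ a ∈ A, G.degree a ≤ k - 1) (hB : ∀ b ∈ B, G.degree b ≤ k) {P Q : ℕ} (hP : 0 < P)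
    (hPQ : Q + 2 * P ≤ P * Q) :
    (∃ a ∈ A, #{b ∈ B | G.Adj a b} < P) ∨ ∃ b ∈ B, #{a ∈ A | G.Adj b a} < Q := by
  let H := G.between (A : Set V) (B : Set V)
  let _ : H.LocallyFinite := fun v =>
    ((G.neighborSet v).toFinite.subset fun _ h => h.1).fintype
  have hH : H.IsBipartiteWith A B := between_isBipartiteWith (Finset.disjoint_coe.2 hAB)
  have hHA : ∀ a ∈ A, #{b ∈ B | G.Adj a b} ≤ H.degree a := fun a ha =>
    Finset.card_le_card fun b hb => by
      obtain ⟨hbB, hab⟩ := Finset.mem_filter.1 hb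
      exact (H.mem_neighborFinset a b).2 ⟨hab, .inl ⟨ha, hbB⟩⟩
  have hHB : ∀ b ∈ B, #{a ∈ A | G.Adj b a} ≤ H.degree b := fun b hb =>
    Finset.card_le_card fun a ha => by
      obtain ⟨haA, hba⟩ := Finset.mem_filter.1 ha
      exact (H.mem_neighborFinset b a).2 ⟨hba, .inr ⟨hb, haA⟩⟩
  exact (hG.exists_degree_lt_of_isBipartiteWith between_le hH hne hind hA hB hP hPQ).imp
    (fun ⟨a, ha, hlt⟩ => ⟨a, ha, (hHA a ha).trans_lt hlt⟩)
    fun ⟨b, hb, hlt⟩ => ⟨b, hb, (hHB b hb).trans_lt hlt⟩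

end Critical

section Interedges

variable {V : Type*} [DecidableEq V] {G : SimpleGraph V} [DecidableRel G.Adj]

theorem card_interedges_erase_left_add {A B : Finset V} {a : V} (ha : a ∈ A) :
    #(G.interedges (A.erase a) B) + #{b ∈ B | G.Adj a b} = #(G.interedges A B) := by
  simp only [interedges_def, Finset.card_filter, Finset.sum_product]
  exact Finset.sum_erase_add A _ ha

theorem card_interedges_erase_right_add {A B : Finset V} {b : V} (hb : b ∈ B) :
    #(G.interedges A (B.erase b)) + #{a ∈ A | G.Adj b a} = #(G.interedges A B) := by
  have := G.symm
  have hcomm (X : Finset V) : #(G.interedges A X) = #(G.interedges X A) :=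
    Rel.card_interedges_comm A X
  rw [hcomm, hcomm]
  exact card_interedges_erase_left_add hb

omit [DecidableEq V] in
theorem IsKCritical.card_interedges_add_le {k : ℕ} (hG : IsKCritical k G) [G.LocallyFinite]
    {p q r n : ℕ} (hpq : p + 2 ≤ p * q) (hbase : ∀ x y, x + y = n → x * y + r ≤ p * x + q * y)
    {A B : Finset V} (hAB : Disjoint A B)
    (hind : G.IsIndepSet (A : Set V) ∨ G.IsIndepSet (B : Set V))
    (hA : ∀ a ∈ A, G.degree a ≤ k - 1) (hB : ∀ b ∈ B, G.degree b ≤ k) (hcard : n ≤ #A + #B) :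
    #(G.interedges A B) + r ≤ p * #A + q * #B := by
  classical
  obtain ⟨d, hd⟩ := Nat.exists_eq_add_of_le hcard
  induction d generalizing A B with
  | zero => exact (Nat.add_le_add_right (G.card_interedges_le_mul A B) r).trans (hbase _ _ hd)
  | succ d ih =>
    have hne : (A ∪ B).Nonempty := by
      rw [← Finset.card_pos, Finset.card_union_of_disjoint hAB]
      omega
    obtain ⟨a, ha, hap⟩ | ⟨b, hb, hbq⟩ := hG.exists_card_neighbors_lt hAB hne hind hA hB
      (Q := q + 1) p.succ_pos (by linarith)
    · have hle := ih (hAB.mono_left (A.erase_subset a))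
        (hind.imp_left fun h => h.mono (Finset.coe_subset.2 (A.erase_subset a)))
        (fun x hx => hA x (Finset.mem_of_mem_erase hx)) hB
      have he := card_interedges_erase_left_add (G := G) (B := B) ha
      rw [← Finset.card_erase_add_one ha] at hd ⊢
      have := hle (by omega) (by omega)
      linarith
    · have hle := ih (hAB.mono_right (B.erase_subset b))
        (hind.imp_right fun h => h.mono (Finset.coe_subset.2 (B.erase_subset b)))
        hA fun x hx => hB x (Finset.mem_of_mem_erase hx)
      have he := card_interedges_erase_right_add (G := G) (A := A) hb
      rw [← Finset.card_erase_add_one hb] at hd ⊢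
      have := hle (by omega) (by omega)
      linarith

end Interedges

theorem kCritical_edges_between_low_degree_general {V : Type*} (k : ℕ)
    (G : SimpleGraph V) [DecidableRel G.Adj] [G.LocallyFinite] (hG : IsKCritical k G)
    (A B : Finset V) (hAB : Disjoint A B)
    (hind : (∀ a ∈ A, ∀ a' ∈ A, ¬G.Adj a a') ∨ (∀ b ∈ B, ∀ b' ∈ B, ¬G.Adj b b'))
    (hA : ∀ a ∈ A, G.degree a ≤ k - 1) (hB : ∀ b ∈ B, G.degree b ≤ k)
    (hcard : 3 ≤ A.card + B.card) :
    (((A ×ˢ B).filter fun p => G.Adj p.1 p.2).card : ℤ) ≤ 2 * ((A.card : ℤ) + B.card) - 4 ∧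
      (((A ×ˢ B).filter fun p => G.Adj p.1 p.2).card : ℤ) ≤ (A.card : ℤ) + 3 * B.card - 3 := by
  rw [← interedges_def]
  have hind' : G.IsIndepSet (A : Set V) ∨ G.IsIndepSet (B : Set V) :=
    hind.imp (fun h a ha a' ha' _ => h a ha a' ha') fun h b hb b' hb' _ => h b hb b' hb'
  have hsmall : ∀ x y, x + y = 3 → x * y + 4 ≤ 2 * x + 2 * y ∧ x * y + 3 ≤ 1 * x + 3 * y := by
    intro x y hxy
    have hx : x ≤ 3 := by omega
    interval_cases x <;> omega
  have h₂₂ := hG.card_interedges_add_le le_rfl (fun x y h => (hsmall x y h).1) hAB hind' hA hB hcard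
  have h₁₃ := hG.card_interedges_add_le le_rfl (fun x y h => (hsmall x y h).2) hAB hind' hA hB hcard
  omega

/-- **Lemma (Kostochka–Yancey, Corollary 9).** Let `G` be a `k`-critical graph and let `A`,
`B` be disjoint vertex subsets such that `A` or `B` is independent, every vertex of `A` has
degree `k-1`, every vertex of `B` has degree `k`, and `|A| + |B| ≥ 3`. Then
`e(A,B) ≤ 2(|A|+|B|) - 4` and `e(A,B) ≤ |A| + 3|B| - 3`. -/
theorem kCritical_edges_between_low_degree {V : Type*} [Fintype V] [DecidableEq V] (k : ℕ)
    (hk : 4 ≤ k) (G : SimpleGraph V) [DecidableRel G.Adj] (hG : IsKCritical k G)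
    (A B : Finset V) (hAB : Disjoint A B)
    (hind : (∀ a ∈ A, ∀ a' ∈ A, ¬G.Adj a a') ∨ (∀ b ∈ B, ∀ b' ∈ B, ¬G.Adj b b'))
    (hA : ∀ a ∈ A, G.degree a = k - 1) (hB : ∀ b ∈ B, G.degree b = k)
    (hcard : 3 ≤ A.card + B.card) :
    (((A ×ˢ B).filter fun p => G.Adj p.1 p.2).card : ℤ) ≤ 2 * ((A.card : ℤ) + B.card) - 4 ∧
      (((A ×ˢ B).filter fun p => G.Adj p.1 p.2).card : ℤ) ≤ (A.card : ℤ) + 3 * B.card - 3 := by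
  exact kCritical_edges_between_low_degree_general k G hG A B hAB hind (fun a ha => (hA a ha).le)
    (fun b hb => (hB b hb).le) hcard
end

section
/- Let i ≥ 1 and s ≥ 2 be integers, let R = {u_1, …, u_s} be a finite set, and let w : R → ℤ assign a positive integer weight to each element with w(u_1) + ⋯ + w(u_s) ≥ 2i. Then there exists a graph H with vertex set R and at most i edges such that d_H(u_j) ≤ w(u_j) for every 1 ≤ j ≤ s, and for every independent set M of H with |M| ≥ 2 one has Σ_{u ∈ R − M} w(u) ≥ i. -/
open SimpleGraph

/-!
Apply the desired inequality to `M = {v}`: it reads `i ≤ ∑ u ≠ v, w u`. If this fails for some `r`,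
then fewer than `i` units of weight lie outside `r`, so there are fewer than `i` vertices other than
`r`, while `w r > i`; the star centred at `r` works because an independent set with two vertices
misses `r`.

If it holds for all `v`, there is a loopless multigraph with exactly `i` edges and degrees bounded
by `w`: join a heaviest vertex to another vertex of positive weight, lower both weights by one, and
recurse. For independent `M`, each of the `i` edges has an endpoint outside `M`, so the degrees
outside `M` already sum to at least `i`. Forgetting multiplicities preserves independence and only
lowers degrees and the number of edges.
-/

section Multigraph

variable {V : Type*}

/-- The simple graph underlying the multigraph on `V` with edge multiset `E`: multiplicities are
forgotten and loops are dropped. -/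
def underlyingGraph (E : Multiset (Sym2 V)) : SimpleGraph V :=
  fromEdgeSet {e | e ∈ E}

lemma underlyingGraph_adj {E : Multiset (Sym2 V)} {a b : V} :
    (underlyingGraph E).Adj a b ↔ s(a, b) ∈ E ∧ a ≠ b :=
  fromEdgeSet_adj _

lemma mem_of_mem_edgeSet_underlyingGraph {E : Multiset (Sym2 V)} {e : Sym2 V}
    (he : e ∈ (underlyingGraph E).edgeSet) : e ∈ E := by
  rw [underlyingGraph, edgeSet_fromEdgeSet] at he
  exact he.1

lemma card_edgeFinset_underlyingGraph_le (E : Multiset (Sym2 V))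
    [Fintype (underlyingGraph E).edgeSet] : (underlyingGraph E).edgeFinset.card ≤ E.card := by
  classical
  calc (underlyingGraph E).edgeFinset.card
    _ ≤ E.toFinset.card := Finset.card_le_card fun _ he =>
        Multiset.mem_toFinset.2 (mem_of_mem_edgeSet_underlyingGraph (mem_edgeFinset.1 he))
    _ ≤ E.card := E.toFinset_card_le

variable [DecidableEq V]

instance (E : Multiset (Sym2 V)) : DecidableRel (underlyingGraph E).Adj := fun _ _ =>
  decidable_of_iff _ underlyingGraph_adj.symm

/-- The degree of `v` in the multigraph with edge multiset `E`, i.e. the number of edges at `v`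
counted with multiplicity. A loop contributes `1` instead of the usual `2`; the notion is meant for
loopless multigraphs. -/
def multiDegree (E : Multiset (Sym2 V)) (v : V) : ℕ :=
  E.countP (v ∈ ·)

lemma multiDegree_cons {a b : V} (hab : a ≠ b) (E : Multiset (Sym2 V)) :
    multiDegree (s(a, b) ::ₘ E) = multiDegree E + Pi.single a 1 + Pi.single b 1 := by
  funext v
  simp only [multiDegree, Multiset.countP_cons, Sym2.mem_iff, Pi.add_apply, Pi.single_apply]
  grind

lemma degree_underlyingGraph_le (E : Multiset (Sym2 V)) (v : V)
    [Fintype ((underlyingGraph E).neighborSet v)] :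
    (underlyingGraph E).degree v ≤ multiDegree E v := by
  rw [← card_incidenceFinset_eq_degree, multiDegree, Multiset.countP_eq_card_filter]
  calc ((underlyingGraph E).incidenceFinset v).card
    _ ≤ (E.filter (v ∈ ·)).toFinset.card := Finset.card_le_card fun e he => by
        obtain ⟨heE, hve⟩ := (mem_incidenceFinset _ v e).1 he
        simp [mem_of_mem_edgeSet_underlyingGraph heE, hve]
    _ ≤ (E.filter (v ∈ ·)).card := Multiset.toFinset_card_le _

lemma card_le_sum_multiDegree {E : Multiset (Sym2 V)} {S : Finset V}
    (hS : ∀ e ∈ E, ∃ v ∈ S, v ∈ e) : E.card ≤ ∑ v ∈ S, multiDegree E v := by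
  induction E using Multiset.induction_on with
  | empty => simp
  | cons e E ih =>
    obtain ⟨v, hvS, hve⟩ := hS e (Multiset.mem_cons_self e E)
    have hle : E.card ≤ ∑ v ∈ S, multiDegree E v :=
      ih fun e he => hS e (Multiset.mem_cons_of_mem he)
    have hpos : 1 ≤ ∑ u ∈ S, if u ∈ e then 1 else 0 := by
      rw [Finset.sum_boole]
      exact Finset.card_pos.2 ⟨v, Finset.mem_filter.2 ⟨hvS, hve⟩⟩
    simpa only [multiDegree, Multiset.card_cons, Multiset.countP_cons, Finset.sum_add_distrib]
      using add_le_add hle hpos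

lemma card_le_sum_multiDegree_of_isVertexCover {E : Multiset (Sym2 V)}
    (hE : ∀ e ∈ E, ¬e.IsDiag) {S : Finset V} (hS : (underlyingGraph E).IsVertexCover S) :
    E.card ≤ ∑ v ∈ S, multiDegree E v := by
  refine card_le_sum_multiDegree fun e he => ?_
  induction e with
  | _ a b =>
    rcases hS (underlyingGraph_adj.2 ⟨he, hE _ he⟩) with ha | hb
    · exact ⟨a, ha, Sym2.mem_mk_left a b⟩
    · exact ⟨b, hb, Sym2.mem_mk_right a b⟩

variable [Fintype V]

lemma card_le_sum_compl_multiDegree_of_isIndepSet {E : Multiset (Sym2 V)}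
    (hE : ∀ e ∈ E, ¬e.IsDiag) {M : Finset V} (hM : (underlyingGraph E).IsIndepSet M) :
    E.card ≤ ∑ v ∈ Mᶜ, multiDegree E v :=
  card_le_sum_multiDegree_of_isVertexCover hE <| by
    rwa [Finset.coe_compl, isVertexCover_compl]

lemma le_sum_compl_singleton_of_le_add_one {n : ℕ} {w : V → ℕ} (htotal : 2 * n ≤ ∑ v, w v)
    {a v : V} (hav : a ≠ v) (hv : w v ≤ w a + 1) : n ≤ ∑ u ∈ {v}ᶜ, w u := by
  have hsplit : ∑ u, w u = w v + ∑ u ∈ {v}ᶜ, w u := Fintype.sum_eq_add_sum_compl v w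
  have ha : w a ≤ ∑ u ∈ {v}ᶜ, w u :=
    Finset.single_le_sum_of_canonicallyOrdered (by simpa using hav)
  omega

lemma exists_forall_le_and_exists_ne_pos [Nonempty V] {M : Type*} [AddCommMonoid M]
    [LinearOrder M] [CanonicallyOrderedAdd M] {w : V → M}
    (hw : ∀ v, 0 < ∑ u ∈ {v}ᶜ, w u) : ∃ a, (∀ v, w v ≤ w a) ∧ ∃ b, a ≠ b ∧ 0 < w b := by
  obtain ⟨a, ha⟩ := Finite.exists_max w
  obtain ⟨b, hb, hwb⟩ := Finset.sum_pos_iff.1 (hw a)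
  exact ⟨a, ha, b, by simpa [eq_comm] using hb, hwb⟩

lemma exists_eq_add_single_add_single {n : ℕ} {w : V → ℕ} (htotal : 2 * (n + 1) ≤ ∑ v, w v)
    (hcompl : ∀ v, n + 1 ≤ ∑ u ∈ {v}ᶜ, w u) :
    ∃ (a b : V) (w' : V → ℕ), a ≠ b ∧ w = w' + Pi.single a 1 + Pi.single b 1 ∧
      2 * n ≤ ∑ v, w' v ∧ ∀ v, n ≤ ∑ u ∈ {v}ᶜ, w' u := by
  have hV : Nonempty V := by
    by_contra h
    simp [not_nonempty_iff.1 h] at htotal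
  obtain ⟨a, hmax, b, hab, hb⟩ :=
    exists_forall_le_and_exists_ne_pos fun v => n.succ_pos.trans_le (hcompl v)
  have hle : Pi.single a 1 + Pi.single b 1 ≤ w := fun v => by
    have := hmax b
    simp only [Pi.add_apply, Pi.single_apply]
    grind
  obtain ⟨w', rfl⟩ := exists_add_of_le hle
  simp only [Pi.add_apply, Finset.sum_add_distrib, Finset.sum_pi_single', Finset.mem_univ,
    Finset.mem_compl, Finset.mem_singleton, if_true] at htotal hcompl
  have htotal' : 2 * n ≤ ∑ v, w' v := by omega
  refine ⟨a, b, w', hab, by abel, htotal', fun v => ?_⟩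
  by_cases hv : v = a ∨ v = b
  · grind
  · -- `v` keeps its weight, and it was at most the weight of `a`, which dropped by one.
    push Not at hv
    refine le_sum_compl_singleton_of_le_add_one htotal' hv.1.symm ?_
    simpa [hv.1, hv.2, hab, add_comm] using hmax v

theorem exists_loopless_multiDegree_le {n : ℕ} {w : V → ℕ} (htotal : 2 * n ≤ ∑ v, w v)
    (hcompl : ∀ v, n ≤ ∑ u ∈ {v}ᶜ, w u) :
    ∃ E : Multiset (Sym2 V), E.card = n ∧ (∀ e ∈ E, ¬e.IsDiag) ∧ multiDegree E ≤ w := by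
  induction n generalizing w with
  | zero => exact ⟨0, by simp [Pi.le_def, multiDegree]⟩
  | succ n ih =>
    obtain ⟨a, b, w', hab, rfl, htotal', hcompl'⟩ := exists_eq_add_single_add_single htotal hcompl
    obtain ⟨E, hcard, hloop, hdeg⟩ := ih htotal' hcompl'
    refine ⟨s(a, b) ::ₘ E, by simp [hcard], ?_, ?_⟩
    · simpa [hab] using hloop
    · rw [multiDegree_cons hab]
      gcongr

end Multigraph

section Star

variable {V : Type*} {r : V}

lemma center_notMem_of_isIndepSet_starGraph {M : Set V} (hM : (starGraph r).IsIndepSet M)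
    (hnt : M.Nontrivial) : r ∉ M := by
  intro hr
  obtain ⟨v, hv, hvr⟩ := hnt.exists_ne r
  exact hM hr hv hvr.symm (starGraph_center_adj hvr.symm)

lemma weight_center_le_sum_compl_of_isIndepSet_starGraph [Fintype V] [DecidableEq V] {M : Finset V}
    (hM : (starGraph r).IsIndepSet M) (hnt : M.Nontrivial) (w : V → ℕ) :
    w r ≤ ∑ v ∈ Mᶜ, w v :=
  Finset.single_le_sum_of_canonicallyOrdered <|
    Finset.mem_compl.2 (center_notMem_of_isIndepSet_starGraph hM hnt)

lemma card_edgeFinset_starGraph [Fintype V] [Fintype (starGraph r).edgeSet] :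
    (starGraph r).edgeFinset.card = Fintype.card V - 1 := by
  have := (isTree_starGraph r).card_edgeFinset
  omega

lemma card_sub_one_le_sum_compl_singleton [Fintype V] [DecidableEq V] {w : V → ℕ}
    (hw : ∀ v ≠ r, 1 ≤ w v) : Fintype.card V - 1 ≤ ∑ v ∈ {r}ᶜ, w v := by
  simpa [Finset.card_compl] using
    Finset.card_nsmul_le_sum {r}ᶜ w 1 fun v hv => hw v (by simpa using hv)

lemma degree_starGraph_le [Fintype V] [DecidableEq V] {w : V → ℕ}
    (hw : ∀ v ≠ r, 1 ≤ w v) (hr : Fintype.card V - 1 ≤ w r) (v : V) :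
    (starGraph r).degree v ≤ w v := by
  obtain rfl | hv := eq_or_ne v r
  · rwa [degree_starGraph_center]
  · rw [degree_starGraph_of_ne_center hv]
    exact hw v hv

end Star

/-- **Lemma.** Let `i ≥ 1` and `s ≥ 2` be integers, let `R = {u_1, …, u_s}` be a finite set,
and let `w` assign a positive integer weight to each element with total weight at least `2i`.
Then there is a graph `H` on `R` with at most `i` edges such that `d_H(u) ≤ w(u)` for every
`u`, and for every independent set `M` of `H` with `|M| ≥ 2` one has `Σ_{u ∈ R - M} w(u) ≥ i`. -/
theorem weighted_graph_exists {V : Type*} [Fintype V] [DecidableEq V] (i s : ℕ)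
    (hi : 1 ≤ i) (hs : 2 ≤ s) (hcard : Fintype.card V = s) (w : V → ℕ) (hw : ∀ v, 1 ≤ w v)
    (hsum : 2 * i ≤ ∑ v, w v) :
    ∃ (H : SimpleGraph V) (_ : DecidableRel H.Adj),
      H.edgeFinset.card ≤ i ∧ (∀ v, H.degree v ≤ w v) ∧
      ∀ M : Finset V, (∀ a ∈ M, ∀ b ∈ M, ¬H.Adj a b) → 2 ≤ M.card →
        i ≤ ∑ u ∈ Mᶜ, w u := by
  by_cases hcompl : ∀ v, i ≤ ∑ u ∈ {v}ᶜ, w u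
  · obtain ⟨E, hcardE, hloop, hdeg⟩ := exists_loopless_multiDegree_le hsum hcompl
    refine ⟨underlyingGraph E, inferInstance,
      (card_edgeFinset_underlyingGraph_le E).trans_eq hcardE,
      fun v => (degree_underlyingGraph_le E v).trans (hdeg v), fun M hM _ => ?_⟩
    have hindep : (underlyingGraph E).IsIndepSet M := fun a ha b hb _ => hM a ha b hb
    calc i
      _ = E.card := hcardE.symm
      _ ≤ ∑ u ∈ Mᶜ, multiDegree E u := card_le_sum_compl_multiDegree_of_isIndepSet hloop hindep
      _ ≤ ∑ u ∈ Mᶜ, w u := Finset.sum_le_sum fun u _ => hdeg u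
  · obtain ⟨r, hr⟩ := not_forall.1 hcompl
    have hsplit : ∑ u, w u = w r + ∑ u ∈ {r}ᶜ, w u := Fintype.sum_eq_add_sum_compl r w
    have hcard_lt : Fintype.card V - 1 < i :=
      (card_sub_one_le_sum_compl_singleton fun v _ => hw v).trans_lt (not_le.1 hr)
    have hi_lt : i < w r := by omega
    refine ⟨starGraph r, inferInstance, card_edgeFinset_starGraph.trans_le hcard_lt.le,
      degree_starGraph_le (fun v _ => hw v) (hcard_lt.trans hi_lt).le, fun M hM hM2 => ?_⟩
    have hindep : (starGraph r).IsIndepSet M := fun a ha b hb _ => hM a ha b hb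
    exact hi_lt.le.trans <| weight_center_le_sum_compl_of_isIndepSet_starGraph hindep
      (Finset.one_lt_card_iff_nontrivial.1 hM2) w
end

section
/- Let k ≥ 4, let G be a 3-connected k-critical graph, let e = uv ∈ E(G), and let w ∈ V(G) − {u,v} be a vertex such that every proper (k−1)-coloring φ of G − e satisfies φ(w) = φ(u) = φ(v). Let X be a complete graph on k−1 new vertices with vertex set partitioned into nonempty parts S1, S2, S3, and let G' be the graph with vertex set V(G) ∪ V(X) and edge set (E(G) − e) ∪ E(X) ∪ {ua : a ∈ S1} ∪ {vb : b ∈ S2} ∪ {wc : c ∈ S3}. Then G' is a 3-connected k-critical graph. -/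
open SimpleGraph

/-- The graph `G'` of Toft's construction: delete the edge `uv` from `G`, add a complete graph
on a new vertex set `W` partitioned into `S₁ ∪ S₂ ∪ S₃`, and join `u` to `S₁`, `v` to `S₂`,
and `w` to `S₃`. -/
def toftGraph {V W : Type*} (G : SimpleGraph V) (u v w : V) (S₁ S₂ S₃ : Set W) :
    SimpleGraph (V ⊕ W) :=
  SimpleGraph.fromRel (fun a b =>
    match a, b with
    | Sum.inl a, Sum.inl b => G.Adj a b ∧ s(a, b) ≠ s(u, v)
    | Sum.inl a, Sum.inr b => (a = u ∧ b ∈ S₁) ∨ (a = v ∧ b ∈ S₂) ∨ (a = w ∧ b ∈ S₃)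
    | Sum.inr _, Sum.inr _ => True
    | _, _ => False)

/-! Think of the new clique as a complete graph on `W` in which each `b` gets exactly one further
neighbour `π b ∈ {u, v, w}`. A colouring of the old part with as many colours as `W` has vertices
extends to the clique iff some injective, hence bijective, colouring of `W` avoids the colour of
`π b` at every `b`; by Hall's theorem this fails iff all the `π b` have the same colour. All
colourings of `G - uv` are of that kind. Deleting a further edge `ab` of `G` destroys this, because
`G - ab` has a colouring that separates `u` from `v`; deleting a new edge lets its end `b` take the
colour of `π b`, or lets its two ends share a colour.

For 3-connectivity, suppose at most two vertices are deleted. If one of them lies in the clique,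
then at most one lies in `G`, and `G - uv` stays connected. Otherwise follow a path of `G` to one of
`u`, `v`, `w` and stop at its first end of `uv`, if there is one: the clique is reached without
using `uv`.
-/

section Critical

variable {V : Type*} {G : SimpleGraph V} {n : ℕ}

lemma colorable_add_one_of_colorable_deleteEdges {a b : V}
    (h : (G.deleteEdges {s(a, b)}).Colorable n) : G.Colorable (n + 1) := by
  classical
  obtain ⟨C⟩ := h
  let C' : G.Coloring (Option (Fin n)) := .mk (fun x ↦ if x = a then none else some (C x)) <| by
    intro x y hxy
    by_cases hx : x = a <;> by_cases hy : y = a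
    · exact absurd (hx.trans hy.symm) hxy.ne
    · simp [hx, hy]
    · simp [hx, hy]
    · have hdel : (G.deleteEdges {s(a, b)}).Adj x y := by simp [hxy, hx, hy]
      simpa [hx, hy] using C.valid hdel
  simpa using C'.colorable

lemma isKCritical_add_one_iff :
    IsKCritical (n + 1) G ↔
      ¬G.Colorable n ∧ ∀ a b, G.Adj a b → (G.deleteEdges {s(a, b)}).Colorable n := by
  rw [IsKCritical, Nat.cast_add_one, chromaticNumber_eq_iff_colorable_not_colorable,
    Nat.add_sub_cancel]
  constructor
  · rintro ⟨⟨-, hn⟩, hlt⟩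
    refine ⟨hn, fun a b hab ↦ hlt _ <| (G.deleteEdges_le _).lt_of_ne fun h ↦ ?_⟩
    rw [← h] at hab
    simp at hab
  · rintro ⟨hn, hdel⟩
    refine ⟨⟨?_, hn⟩, fun H hH ↦ ?_⟩
    · by_cases hbot : G = ⊥
      · exact (colorable_one_iff.2 hbot).mono (Nat.le_add_left 1 n)
      · obtain ⟨a, b, hab⟩ := ne_bot_iff_exists_adj.1 hbot
        exact colorable_add_one_of_colorable_deleteEdges (hdel a b hab)
    · obtain ⟨a, b, hab, hnab⟩ : ∃ a b, G.Adj a b ∧ ¬H.Adj a b := by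
        by_contra! hcon
        exact hH.not_ge fun a b ↦ hcon a b
      refine (hdel a b hab).mono_left ?_
      rw [deleteEdges, le_sdiff, disjoint_fromEdgeSet]
      exact ⟨hH.le, by simpa using hnab⟩

lemma IsKCritical.exists_coloring_deleteEdges_ne (hG : IsKCritical (n + 1) G) {u v a b : V}
    (huv : G.Adj u v) (hab : (G.deleteEdges {s(u, v)}).Adj a b) :
    ∃ C : ((G.deleteEdges {s(u, v)}).deleteEdges {s(a, b)}).Coloring (Fin n), C u ≠ C v := by
  rw [deleteEdges_adj, Set.mem_singleton_iff] at hab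
  obtain ⟨C⟩ := (isKCritical_add_one_iff.1 hG).2 a b hab.1
  refine ⟨C.comp (.ofLE (deleteEdges_mono (G.deleteEdges_le _))), C.valid ?_⟩
  simpa [huv] using Ne.symm hab.2

end Critical

section AttachClique

variable {V W : Type*}

/-- The graph obtained from `H` by adding a complete graph on the new vertex set `W` and joining
each new vertex `b` to the single old vertex `π b`. The construction of Toft is the case in which
`π` takes the values `u`, `v`, `w` on the three parts of the clique. -/
def attachClique (H : SimpleGraph V) (π : W → V) : SimpleGraph (V ⊕ W) where
  Adj
    | .inl a, .inl b => H.Adj a b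
    | .inl a, .inr y => a = π y
    | .inr x, .inl b => b = π x
    | .inr x, .inr y => x ≠ y
  symm := ⟨by
    rintro (a | x) (b | y) h
    exacts [h.symm, h, h, h.symm]⟩
  loopless := ⟨by
    rintro (a | x) h
    exacts [H.irrefl h, h rfl]⟩

namespace attachClique

variable (H : SimpleGraph V) (π : W → V)

@[simp] lemma adj_inl_inl {a b : V} : (attachClique H π).Adj (.inl a) (.inl b) ↔ H.Adj a b :=
  .rfl

@[simp] lemma adj_inl_inr {a : V} {y : W} : (attachClique H π).Adj (.inl a) (.inr y) ↔ a = π y :=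
  .rfl

@[simp] lemma adj_inr_inl {x : W} {b : V} : (attachClique H π).Adj (.inr x) (.inl b) ↔ b = π x :=
  .rfl

@[simp] lemma adj_inr_inr {x y : W} : (attachClique H π).Adj (.inr x) (.inr y) ↔ x ≠ y :=
  .rfl

end attachClique

lemma exists_toftGraph_eq_attachClique (G : SimpleGraph V) (u v w : V) {S₁ S₂ S₃ : Set W}
    (hunion : S₁ ∪ S₂ ∪ S₃ = Set.univ)
    (h12 : Disjoint S₁ S₂) (h13 : Disjoint S₁ S₃) (h23 : Disjoint S₂ S₃)
    (hS₁ : S₁.Nonempty) (hS₂ : S₂.Nonempty) (hS₃ : S₃.Nonempty) :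
    ∃ π : W → V, Set.range π = {u, v, w} ∧
      toftGraph G u v w S₁ S₂ S₃ = attachClique (G.deleteEdges {s(u, v)}) π := by
  have hunique : ∀ b, ∃ t, ∀ a, (a = u ∧ b ∈ S₁ ∨ a = v ∧ b ∈ S₂ ∨ a = w ∧ b ∈ S₃) ↔ a = t := by
    intro b
    have hb : (b ∈ S₁ ∨ b ∈ S₂) ∨ b ∈ S₃ := Set.eq_univ_iff_forall.1 hunion b
    rcases hb with (hb | hb) | hb
    · exact ⟨u, by simp [hb, h12.notMem_of_mem_left hb, h13.notMem_of_mem_left hb]⟩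
    · exact ⟨v, by simp [hb, h12.notMem_of_mem_right hb, h23.notMem_of_mem_left hb]⟩
    · exact ⟨w, by simp [hb, h13.notMem_of_mem_right hb, h23.notMem_of_mem_right hb]⟩
  choose π hπ using hunique
  refine ⟨π, Set.Subset.antisymm ?_ ?_, ?_⟩
  · rintro _ ⟨b, rfl⟩
    exact ((hπ b _).2 rfl).imp And.left (Or.imp And.left And.left)
  · rintro _ (rfl | rfl | rfl)
    · exact hS₁.imp fun b hb ↦ ((hπ b _).1 (.inl ⟨rfl, hb⟩)).symm
    · exact hS₂.imp fun b hb ↦ ((hπ b _).1 (.inr (.inl ⟨rfl, hb⟩))).symm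
    · exact hS₃.imp fun b hb ↦ ((hπ b _).1 (.inr (.inr ⟨rfl, hb⟩))).symm
  · ext (a | x) (b | y)
    · have := G.ne_of_adj (a := a) (b := b)
      simp only [toftGraph, fromRel_adj, attachClique.adj_inl_inl, deleteEdges_adj,
        Set.mem_singleton_iff, G.adj_comm b a, Sym2.eq_swap (a := b), ne_eq, Sum.inl.injEq]
      tauto
    · simp [toftGraph, hπ]
    · simp [toftGraph, hπ]
    · simp [toftGraph]

end AttachClique

section Coloring

variable {V W α : Type*} {H : SimpleGraph V} {π : W → V} {n : ℕ}

open Finset in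
lemma exists_equiv_forall_ne_of_range_nontrivial [Fintype W] [Fintype α]
    (hcard : Fintype.card W = Fintype.card α) {f : W → α} (hf : (Set.range f).Nontrivial) :
    ∃ g : W ≃ α, ∀ b, f b ≠ g b := by
  classical
  have hall : ∀ s : Finset W, #s ≤ #(s.biUnion fun b ↦ {f b}ᶜ) := by
    intro s
    by_cases hs : ∃ b ∈ s, ∃ b' ∈ s, f b ≠ f b'
    · obtain ⟨b, hb, b', hb', hne⟩ := hs
      have huniv : (s.biUnion fun b ↦ {f b}ᶜ) = univ := by
        refine eq_univ_of_forall fun c ↦ mem_biUnion.2 ?_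
        by_cases hc : c = f b
        · exact ⟨b', hb', by simpa [hc] using hne⟩
        · exact ⟨b, hb, by simpa using hc⟩
      rw [huniv, card_univ, ← hcard]
      exact card_le_univ s
    · push Not at hs
      obtain rfl | ⟨b, hb⟩ := s.eq_empty_or_nonempty
      · simp
      · have hlt : #s < Fintype.card W := by
          obtain ⟨_, ⟨x, rfl⟩, _, ⟨y, rfl⟩, hxy⟩ := hf
          refine (card_lt_iff_ne_univ s).2 ?_
          rintro rfl
          exact hxy (hs x (mem_univ x) y (mem_univ y))
        calc #s ≤ #({f b}ᶜ : Finset α) := by rw [card_compl, card_singleton]; omega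
          _ ≤ _ := card_le_card (subset_biUnion_of_mem (fun b ↦ ({f b}ᶜ : Finset α)) hb)
  obtain ⟨g, hg, hgf⟩ := (all_card_le_biUnion_card_iff_exists_injective _).1 hall
  refine ⟨.ofBijective g ((Fintype.bijective_iff_injective_and_card g).2 ⟨hg, hcard⟩), fun b ↦ ?_⟩
  simpa [eq_comm] using hgf b

lemma exists_equiv_apply_eq [Fintype W] [Fintype α] (hcard : Fintype.card W = Fintype.card α)
    (b : W) (c : α) : ∃ g : W ≃ α, g b = c := by
  classical
  exact ⟨(Fintype.equivOfCardEq hcard).setValue b c, Equiv.setValue_eq ..⟩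

lemma colorable_of_le_attachClique {K : SimpleGraph (V ⊕ W)} (hK : K ≤ attachClique H π)
    (C : H.Coloring (Fin n)) (g : W → Fin n)
    (hCg : ∀ b, K.Adj (.inl (π b)) (.inr b) → C (π b) ≠ g b)
    (hg : ∀ x y, K.Adj (.inr x) (.inr y) → g x ≠ g y) : K.Colorable n := by
  refine ⟨.mk (Sum.elim C g) ?_⟩
  rintro (a | x) (b | y) hadj
  · exact C.valid (hK hadj)
  · obtain rfl : a = π y := hK hadj
    exact hCg y hadj
  · obtain rfl : b = π x := hK hadj
    exact (hCg x hadj.symm).symm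
  · exact hg x y hadj

variable [Fintype W]

lemma colorable_attachClique (hW : Fintype.card W = n) (C : H.Coloring (Fin n))
    (hC : (Set.range (C ∘ π)).Nontrivial) : (attachClique H π).Colorable n := by
  obtain ⟨g, hg⟩ := exists_equiv_forall_ne_of_range_nontrivial (by simpa using hW) hC
  exact colorable_of_le_attachClique le_rfl C g (fun b _ ↦ hg b) fun _ _ ↦ g.injective.ne

lemma not_colorable_attachClique [Nonempty W] (hW : Fintype.card W = n)
    (hH : ∀ C : H.Coloring (Fin n), (Set.range (C ∘ π)).Subsingleton) :
    ¬(attachClique H π).Colorable n := by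
  rintro ⟨C⟩
  let C' : H.Coloring (Fin n) := .mk (fun a ↦ C (.inl a)) fun hab ↦ C.valid (by simpa using hab)
  have hinj : Function.Injective fun b : W ↦ C (.inr b) :=
    C.injective_comp_of_pairwise_adj .inr fun _ _ ↦ id
  have hsurj := ((Fintype.bijective_iff_injective_and_card _).2 ⟨hinj, by simpa using hW⟩).2
  obtain ⟨b, hb : C (.inr b) = C' (π (Classical.arbitrary W))⟩ := hsurj _
  have hconst : C' (π b) = C (.inr b) :=
    (hH C' (Set.mem_range_self b) (Set.mem_range_self _)).trans hb.symm
  exact C.valid (v := .inl (π b)) (w := .inr b) rfl hconst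

lemma colorable_attachClique_deleteEdges_inl_inl (hW : Fintype.card W = n) {a b : V}
    (C : (H.deleteEdges {s(a, b)}).Coloring (Fin n)) (hC : (Set.range (C ∘ π)).Nontrivial) :
    ((attachClique H π).deleteEdges {s(.inl a, .inl b)}).Colorable n := by
  refine (colorable_attachClique hW C hC).mono_left ?_
  rintro (x | x) (y | y) <;> simp [attachClique]

lemma colorable_attachClique_deleteEdges_inl_inr (hW : Fintype.card W = n)
    (C : H.Coloring (Fin n)) (hC : (Set.range (C ∘ π)).Subsingleton) (b : W) :
    ((attachClique H π).deleteEdges {s(.inl (π b), .inr b)}).Colorable n := by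
  obtain ⟨g, hgb⟩ := exists_equiv_apply_eq (by simpa using hW) b (C (π b))
  refine colorable_of_le_attachClique (deleteEdges_le _) C g (fun y hy ↦ ?_) fun x y hxy ↦ ?_
  · have hyb : y ≠ b := by rintro rfl; simp at hy
    calc C (π y) = C (π b) := hC (Set.mem_range_self y) (Set.mem_range_self b)
      _ = g b := hgb.symm
      _ ≠ g y := g.injective.ne hyb.symm
  · exact g.injective.ne (deleteEdges_le _ hxy)

lemma colorable_attachClique_deleteEdges_inr_inr (hW : Fintype.card W = n)
    (C : H.Coloring (Fin n)) (hC : (Set.range (C ∘ π)).Subsingleton) {x y : W} (hxy : x ≠ y) :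
    ((attachClique H π).deleteEdges {s(.inr x, .inr y)}).Colorable n := by
  classical
  obtain ⟨g, hgx⟩ := exists_equiv_apply_eq (by simpa using hW) x (C (π x))
  refine colorable_of_le_attachClique (deleteEdges_le _) C (Function.update g x (g y))
    (fun z _ ↦ ?_) fun z z' hzz' ↦ ?_
  · have hCz : C (π z) = g x :=
      (hC (Set.mem_range_self z) (Set.mem_range_self x)).trans hgx.symm
    rw [hCz]
    obtain rfl | hz := eq_or_ne z x
    · simpa using hxy
    · simpa [hz] using hz.symm
  · simp only [deleteEdges_adj, attachClique.adj_inr_inr, Set.mem_singleton_iff, Sym2.eq_iff,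
      Sum.inr.injEq] at hzz'
    simp only [Function.update_apply]
    split_ifs with h h' h' <;> simp only [ne_eq, g.injective.eq_iff] <;> grind

theorem isKCritical_attachClique [Nonempty W] (hW : Fintype.card W = n) (hH : H.Colorable n)
    (hconst : ∀ C : H.Coloring (Fin n), (Set.range (C ∘ π)).Subsingleton)
    (hsplit : ∀ a b, H.Adj a b →
      ∃ C : (H.deleteEdges {s(a, b)}).Coloring (Fin n), (Set.range (C ∘ π)).Nontrivial) :
    IsKCritical (n + 1) (attachClique H π) := by
  obtain ⟨C⟩ := hH
  refine isKCritical_add_one_iff.2 ⟨not_colorable_attachClique hW hconst, ?_⟩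
  rintro (a | x) (b | y) hadj
  · obtain ⟨C', hC'⟩ := hsplit a b hadj
    exact colorable_attachClique_deleteEdges_inl_inl hW C' hC'
  · obtain rfl : a = π y := hadj
    exact colorable_attachClique_deleteEdges_inl_inr hW C (hconst C) y
  · obtain rfl : b = π x := hadj
    rw [Sym2.eq_swap]
    exact colorable_attachClique_deleteEdges_inl_inr hW C (hconst C) x
  · exact colorable_attachClique_deleteEdges_inr_inr hW C (hconst C) hadj

end Coloring

section Connectivity

variable {V W : Type*}

lemma exists_mem_reachable_of_adj_imp {G H : SimpleGraph V} {T : Set V}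
    (hGH : ∀ a b, G.Adj a b → H.Adj a b ∨ a ∈ T) {x t : V} (ht : t ∈ T) (hxt : G.Reachable x t) :
    ∃ t' ∈ T, H.Reachable x t' := by
  obtain ⟨p⟩ := hxt
  induction p with
  | nil => exact ⟨_, ht, .rfl⟩
  | @cons a b _ hab _ ih =>
    obtain hab' | ha := hGH a b hab
    · obtain ⟨t', ht', hbt'⟩ := ih ht
      exact ⟨t', ht', hab'.reachable.trans hbt'⟩
    · exact ⟨a, ha, .rfl⟩

lemma induce_deleteEdges_of_notMem {G : SimpleGraph V} {s : Set V} {u : V} (hu : u ∉ s) (v : V) :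
    (G.deleteEdges {s(u, v)}).induce s = G.induce s := by
  ext ⟨a, ha⟩ ⟨b, hb⟩
  have hau : a ≠ u := ne_of_mem_of_not_mem ha hu
  have hbu : b ≠ u := ne_of_mem_of_not_mem hb hu
  simp [hau, hbu]

lemma reachable_induce_deleteEdges_of_preconnected {G : SimpleGraph V} {A : Set V} {u : V} (v : V)
    (hG : (G.induce (insert u A)ᶜ).Preconnected) {x z : V} (hxA : x ∉ A) (hzA : z ∉ A)
    (hxu : x ≠ u) (hzu : z ≠ u) :
    ((G.deleteEdges {s(u, v)}).induce Aᶜ).Reachable ⟨x, hxA⟩ ⟨z, hzA⟩ := by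
  rw [← induce_deleteEdges_of_notMem (u := u) (by simp) v] at hG
  exact (hG ⟨x, by simp [hxu, hxA]⟩ ⟨z, by simp [hzu, hzA]⟩).map
    (induceHomOfLE _ (Set.compl_subset_compl.2 (Set.subset_insert u A))).toHom

namespace IsThreeConnected

variable [Fintype V] {G : SimpleGraph V} {u v : V} {A : Set V}

lemma preconnected_induce_deleteEdges (hG : IsThreeConnected G) (huv : u ≠ v)
    (hA : A.ncard ≤ 1) : ((G.deleteEdges {s(u, v)}).induce Aᶜ).Preconnected := by
  have hinsert : ∀ a, (insert a A).ncard ≤ 2 := fun a ↦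
    (Set.ncard_insert_le a A).trans (Nat.add_le_add_right hA 1)
  obtain ⟨z, hz⟩ : ∃ z, z ∉ insert u (insert v A) := by
    refine (Set.ne_univ_iff_exists_notMem _).1 fun huniv ↦ ?_
    have hcard := Set.ncard_insert_le u (insert v A)
    rw [huniv, Set.ncard_univ, Nat.card_eq_fintype_card] at hcard
    have := hG.1
    have := hinsert v
    omega
  simp only [Set.mem_insert_iff, not_or] at hz
  obtain ⟨hzu, hzv, hzA⟩ := hz
  -- No vertex is both `u` and `v`, so each reaches `z` while avoiding one end of `uv`.
  have hreach : ∀ x, ((G.deleteEdges {s(u, v)}).induce Aᶜ).Reachable x ⟨z, hzA⟩ := by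
    rintro ⟨x, hxA⟩
    obtain hxu | hxv : x ≠ u ∨ x ≠ v := by grind
    · exact reachable_induce_deleteEdges_of_preconnected v (hG.2 _ (hinsert u)).preconnected
        hxA hzA hxu hzu
    · rw [Sym2.eq_swap]
      exact reachable_induce_deleteEdges_of_preconnected u (hG.2 _ (hinsert v)).preconnected
        hxA hzA hxv hzv
  exact fun x y ↦ (hreach x).trans (hreach y).symm

lemma exists_reachable_induce_deleteEdges (hG : IsThreeConnected G) (hA : A.ncard ≤ 2) {T : Set V}
    (hu : u ∈ T) (hv : v ∈ T) (hTA : ¬T ⊆ A) (x : (Aᶜ : Set V)) :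
    ∃ t : (Aᶜ : Set V), ↑t ∈ T ∧ ((G.deleteEdges {s(u, v)}).induce Aᶜ).Reachable x t := by
  obtain ⟨t, htT, htA⟩ := Set.not_subset.1 hTA
  refine exists_mem_reachable_of_adj_imp (G := G.induce Aᶜ) (T := Subtype.val ⁻¹' T) ?_
    (t := ⟨t, htA⟩) htT ((hG.2 A hA).preconnected x _)
  intro a b hab
  by_cases he : s(a.1, b.1) = s(u, v)
  · rcases Sym2.eq_iff.1 he with ⟨ha, -⟩ | ⟨ha, -⟩
    · exact .inr (by simpa [ha] using hu)
    · exact .inr (by simpa [ha] using hv)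
  · exact .inl (deleteEdges_adj.2 ⟨hab, he⟩)

end IsThreeConnected

lemma ncard_preimage_inl_add_ncard_preimage_inr [Finite V] [Finite W] (s : Set (V ⊕ W)) :
    (Sum.inl ⁻¹' s).ncard + (Sum.inr ⁻¹' s).ncard = s.ncard := by
  rw [← Set.ncard_image_of_injective (Sum.inl ⁻¹' s) Sum.inl_injective,
    ← Set.ncard_image_of_injective (Sum.inr ⁻¹' s) Sum.inr_injective,
    ← Set.ncard_union_eq Set.disjoint_image_inl_image_inr,
    Set.image_preimage_inl_union_image_preimage_inr]

lemma exists_inl_inr_notMem_of_ncard_lt_ncard_range [Finite V] [Finite W] {π : W → V}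
    {s : Set (V ⊕ W)} (hs : s.ncard < (Set.range π).ncard) :
    ∃ b, .inl (π b) ∉ s ∧ .inr b ∉ s := by
  by_contra! hcon
  have hrange : Set.range π ⊆ Sum.inl ⁻¹' s ∪ π '' (Sum.inr ⁻¹' s) := by
    rintro _ ⟨b, rfl⟩
    by_cases hb : .inl (π b) ∈ s
    · exact .inl hb
    · exact .inr ⟨b, hcon b hb, rfl⟩
  have hlt : (Set.range π).ncard ≤ s.ncard :=
    calc (Set.range π).ncard ≤ (Sum.inl ⁻¹' s ∪ π '' (Sum.inr ⁻¹' s)).ncard :=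
          Set.ncard_le_ncard hrange
      _ ≤ (Sum.inl ⁻¹' s).ncard + (π '' (Sum.inr ⁻¹' s)).ncard := Set.ncard_union_le ..
      _ ≤ (Sum.inl ⁻¹' s).ncard + (Sum.inr ⁻¹' s).ncard :=
          Nat.add_le_add_left (Set.ncard_image_le) _
      _ = s.ncard := ncard_preimage_inl_add_ncard_preimage_inr s
  exact hs.not_ge hlt

lemma connected_induce_attachClique {H : SimpleGraph V} {π : W → V} {s : Set (V ⊕ W)}
    (hW : ∃ b, .inr b ∉ s)
    (hV : ∀ x : ((Sum.inl ⁻¹' s)ᶜ : Set V), ∃ b, .inr b ∉ s ∧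
      ∃ hb : Sum.inl (π b) ∉ s, (H.induce (Sum.inl ⁻¹' s)ᶜ).Reachable x ⟨π b, hb⟩) :
    ((attachClique H π).induce sᶜ).Connected := by
  obtain ⟨b₀, hb₀⟩ := hW
  have hclique : ∀ b (hb : Sum.inr b ∉ s),
      ((attachClique H π).induce sᶜ).Reachable ⟨.inr b₀, hb₀⟩ ⟨.inr b, hb⟩ := by
    intro b hb
    obtain rfl | hne := eq_or_ne b₀ b
    · exact .rfl
    · exact Adj.reachable (by simpa using hne)
  refine (connected_iff_exists_forall_reachable _).2 ⟨⟨.inr b₀, hb₀⟩, ?_⟩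
  rintro ⟨x | b, hx⟩
  · obtain ⟨b, hb, hπb, hreach⟩ := hV ⟨x, hx⟩
    let inlHom : H →g attachClique H π := ⟨.inl, id⟩
    have hattach : ((attachClique H π).induce sᶜ).Adj ⟨.inr b, hb⟩ ⟨.inl (π b), hπb⟩ := by simp
    exact (hclique b hb).trans <| hattach.reachable.trans <|
      hreach.symm.map (induceHom (t := sᶜ) inlHom fun _ ↦ id)
  · exact hclique b hx

theorem isThreeConnected_attachClique [Fintype V] [Fintype W] {H : SimpleGraph V} {π : W → V}
    (hπ : 2 < (Set.range π).ncard)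
    (hone : ∀ A : Set V, A.ncard ≤ 1 → (H.induce Aᶜ).Preconnected)
    (htwo : ∀ A : Set V, A.ncard ≤ 2 → ∀ x : (Aᶜ : Set V),
      ∃ t : (Aᶜ : Set V), ↑t ∈ Set.range π ∧ (H.induce Aᶜ).Reachable x t) :
    IsThreeConnected (attachClique H π) := by
  refine ⟨?_, fun s hs ↦ ?_⟩
  · have hV : (Set.range π).ncard ≤ Fintype.card V := by
      simpa using Set.ncard_le_card (Set.range π)
    have hW : (Set.range π).ncard ≤ Fintype.card W := by
      simpa [Set.image_univ] using Set.ncard_image_le (f := π) (s := Set.univ)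
    rw [Fintype.card_sum]
    omega
  · obtain ⟨b, hbV, hbW⟩ := exists_inl_inr_notMem_of_ncard_lt_ncard_range (hs.trans_lt hπ)
    refine connected_induce_attachClique ⟨b, hbW⟩ fun x ↦ ?_
    have hsum := ncard_preimage_inl_add_ncard_preimage_inr s
    obtain hempty | hpos := (Sum.inr ⁻¹' s : Set W).eq_empty_or_nonempty
    · obtain ⟨⟨_, ht⟩, ⟨c, rfl⟩, hreach⟩ := htwo _ (by omega) x
      exact ⟨c, Set.eq_empty_iff_forall_notMem.1 hempty c, ht, hreach⟩
    · have := hpos.ncard_pos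
      exact ⟨b, hbW, hbV, hone _ (by omega) x _⟩

end Connectivity

/-- **Claim (Toft's construction).** Let `k ≥ 4`, let `G` be a 3-connected `k`-critical graph,
let `e = uv ∈ E(G)` and let `w ∈ V(G) - {u,v}` be such that every proper `(k-1)`-coloring `φ`
of `G - e` satisfies `φ(w) = φ(u) = φ(v)`. Let `X` be a complete graph on `k-1` new vertices
whose vertex set is partitioned into nonempty parts `S₁, S₂, S₃`, and let `G'` be obtained
from `G - e` and `X` by joining `u` to `S₁`, `v` to `S₂` and `w` to `S₃`. Then `G'` is a
3-connected `k`-critical graph. -/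
theorem toftConstruction_kCritical_threeConnected {V W : Type*} [Fintype V] [Fintype W]
    [DecidableEq V] (k : ℕ) (hk : 4 ≤ k) (G : SimpleGraph V) [DecidableRel G.Adj]
    (hG : IsKCritical k G) (h3 : IsThreeConnected G)
    (u v w : V) (huv : G.Adj u v) (hwu : w ≠ u) (hwv : w ≠ v)
    (hcol : ∀ C : (G.deleteEdges {s(u, v)}).Coloring (Fin (k - 1)), C w = C u ∧ C u = C v)
    (hW : Fintype.card W = k - 1) (S₁ S₂ S₃ : Set W)
    (hunion : S₁ ∪ S₂ ∪ S₃ = Set.univ)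
    (h12 : Disjoint S₁ S₂) (h13 : Disjoint S₁ S₃) (h23 : Disjoint S₂ S₃)
    (hS₁ : S₁.Nonempty) (hS₂ : S₂.Nonempty) (hS₃ : S₃.Nonempty) :
    IsKCritical k (toftGraph G u v w S₁ S₂ S₃) ∧
      IsThreeConnected (toftGraph G u v w S₁ S₂ S₃) := by
  obtain ⟨n, rfl⟩ : ∃ n, k = n + 1 := ⟨k - 1, by omega⟩
  rw [Nat.add_sub_cancel] at hW
  have hcrit := (isKCritical_add_one_iff.1 hG).2
  obtain ⟨π, hπ, htoft⟩ := exists_toftGraph_eq_attachClique G u v w hunion h12 h13 h23 hS₁ hS₂ hS₃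
  have hcard : (Set.range π).ncard = 3 :=
    Set.ncard_eq_three.2 ⟨u, v, w, huv.ne, hwu.symm, hwv.symm, hπ⟩
  have : Nonempty W := hS₁.to_type
  rw [htoft]
  constructor
  · refine isKCritical_attachClique hW (hcrit u v huv) (fun C ↦ ?_) fun a b hab ↦ ?_
    · obtain ⟨hwu', huv'⟩ := hcol C
      rw [Set.range_comp, hπ]
      simp [Set.image_insert_eq, hwu', huv', Set.Subsingleton]
    · obtain ⟨C, hC⟩ := hG.exists_coloring_deleteEdges_ne huv hab
      refine ⟨C, ?_⟩
      rw [Set.range_comp, hπ]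
      exact ⟨C u, by simp, C v, by simp, hC⟩
  · refine isThreeConnected_attachClique (by omega)
      (fun A hA ↦ h3.preconnected_induce_deleteEdges huv.ne hA) fun A hA ↦
      h3.exists_reachable_induce_deleteEdges hA (by simp [hπ]) (by simp [hπ]) fun hsub ↦ ?_
    have := Set.ncard_le_ncard hsub
    omega
end
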